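/- arXiv:1308.6650 — 2 statements merged into one kernel-verified Lean document; each statement's English description precedes it below -/
import Mathlib

section
/- Let t, s ∈ ℂ^* satisfy a_1⋯a_n b_1⋯b_n · t · s = q, with |t| < 1 and |s| < 1. Let x = (x_1,…,x_n) ∈ (ℂ^*)ⁿ be such that x_i/x_j ∉ qᶻ for all i ≠ j and t b_1⋯b_n x_1⋯x_n ∉ qᶻ. Then (1−q)ⁿ Σ_{(ν_1,…,ν_n)∈ℤⁿ} [ ∏_{i=1}^n ∏_{j=1}^n (q a_j⁻¹ x_i q^{ν_i})_∞ (q b_j⁻¹ x_i⁻¹ q^{−ν_i})_∞ ] / [ (s a_1⋯a_n x_1⁻¹⋯x_n⁻¹ q^{−(ν_1+⋯+ν_n)})_∞ · (t b_1⋯b_n x_1⋯x_n q^{ν_1+⋯+ν_n})_∞ · ∏_{1≤i<j≤n} (q x_i q^{ν_i} (x_j q^{ν_j})⁻¹)_∞ (q x_j q^{ν_j} (x_i q^{ν_i})⁻¹)_∞ ] = (1−q)ⁿ (q)_∞ⁿ ∏_{i=1}^n ∏_{j=1}^n (q a_i⁻¹ b_j⁻¹)_∞ / ( (t)_∞ (s)_∞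 ). (Macdonald-type sum; Proposition following (3.24) of the paper, with t = q^α, s = q^β and the balancing condition a_1⋯a_n b_1⋯b_n q^{α+β} = q.) -/
open scoped BigOperators
open Finset

/-- The infinite q-Pochhammer symbol `(a)_∞ = ∏_{i=0}^∞ (1 - qⁱ a)`. -/
noncomputable def qp (q a : ℂ) : ℂ := ∏' i : ℕ, (1 - q ^ i * a)

/-- Summand of the Macdonald-type sum. -/
noncomputable def macTerm {n : ℕ} (q t s : ℂ) (a b x : Fin n → ℂ) (ν : Fin n → ℤ) : ℂ :=
  (∏ i, ∏ j, qp q (q * (a j)⁻¹ * (x i * q ^ ν i)) * qp q (q * (b j)⁻¹ * (x i * q ^ ν i)⁻¹)) /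
    (qp q (s * (∏ i, a i) * (∏ i, x i * q ^ ν i)⁻¹) *
      qp q (t * (∏ i, b i) * ∏ i, x i * q ^ ν i) *
      ∏ i, ∏ j ∈ Finset.Ioi i,
        qp q (q * (x i * q ^ ν i) * (x j * q ^ ν j)⁻¹) *
          qp q (q * (x j * q ^ ν j) * (x i * q ^ ν i)⁻¹))

/-!
Write `z_i = x_i q^{ν_i}`, `p = t b_1 ⋯ b_n`, `c_j = 1/b_j`, `d_j = 1/a_j`. By the balancing condition
the two Pochhammer symbols containing `s` and `t` form a theta function of `p z_1 ⋯ z_n`, and the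
denominator factors attached to a pair `i < j` form a theta function of `z_i/z_j` divided by
`1 - z_i/z_j`. Quasi-periodicity of theta (`gs_identity`) makes the summand a constant times the
Vandermonde determinant of the `z_i` times a product of one-variable weights `w(z_i)`
(`macTerm_eq`), so the sum is a constant times the `n × n` determinant of the moments
`∑_ν w(x_i q^ν) (x_i q^ν)^j` (`tsum_macTerm`).

The weight satisfies a first-order `q`-difference equation, and telescoping it gives one linear
relation, the same for all `i`, between `n + 1` consecutive moments. By Cramer's rule (`det_shift`)
this turns `c_j ↦ q c_j` into multiplication of the moment determinant by an explicit factor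
(`momDet_shift`). Iterating, with dominated convergence in the limit, sends all `c_j` to `0`; hence
sums with the same `a`, `x`, `p` but different `b` are proportional with explicit constants
(`momDet_compare`, `macSum_compare`). The symmetry `x ↦ x⁻¹`, `ν ↦ -ν` exchanges the roles of
`(a, s)` and `(b, t)`, so `a` can be changed in the same way. Choosing `a = x` and `b = x⁻¹` leaves the
single term `ν = 0` (`macSum_base`), which fixes the constant. The cancellation needs
`(q/(x_i b_j))_∞ ≠ 0`, which is arranged by a common `q`-shift of the `x_i`.
-/

open Filter Topology

/-! ### The infinite `q`-Pochhammer symbol and a determinant lemma -/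

section QP

variable {q : ℝ}

lemma qp_summable (hq0 : 0 < q) (hq1 : q < 1) (a : ℂ) :
    Summable fun i : ℕ => ‖-((q : ℂ) ^ i * a)‖ := by
  simp only [norm_neg, norm_mul, norm_pow, Complex.norm_real, Real.norm_eq_abs, abs_of_pos hq0]
  exact (summable_geometric_of_lt_one hq0.le hq1).mul_right _

lemma qp_multipliable (hq0 : 0 < q) (hq1 : q < 1) (a : ℂ) :
    Multipliable fun i : ℕ => 1 - (q : ℂ) ^ i * a := by
  simpa [sub_eq_add_neg] using multipliable_one_add_of_summable (qp_summable hq0 hq1 a)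

lemma qp_tendsto (hq0 : 0 < q) (hq1 : q < 1) (a : ℂ) :
    Tendsto (fun m : ℕ => ∏ k ∈ range m, (1 - (q : ℂ) ^ k * a)) atTop (𝓝 (qp q a)) :=
  (qp_multipliable hq0 hq1 a).tendsto_prod_tprod_nat

lemma qp_step (hq0 : 0 < q) (hq1 : q < 1) (a : ℂ) :
    qp q a = (1 - a) * qp q (q * a) := by
  have h := tprod_eq_zero_mul' (f := fun i : ℕ => 1 - (q : ℂ) ^ i * a) (by
    simpa [pow_succ, mul_assoc] using qp_multipliable hq0 hq1 (q * a))
  simpa [qp, pow_succ, mul_assoc] using h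

lemma qp_split (hq0 : 0 < q) (hq1 : q < 1) (a : ℂ) (m : ℕ) :
    qp q a = (∏ k ∈ range m, (1 - (q : ℂ) ^ k * a)) * qp q ((q : ℂ) ^ m * a) := by
  induction m with
  | zero => simp
  | succ m ih =>
    rw [ih, qp_step hq0 hq1 ((q : ℂ) ^ m * a), prod_range_succ, pow_succ']
    ring_nf

lemma qp_ne_zero (hq0 : 0 < q) (hq1 : q < 1) {a : ℂ} (h : ∀ i : ℕ, (q : ℂ) ^ i * a ≠ 1) :
    qp q a ≠ 0 := by
  have := tprod_one_add_ne_zero_of_summable (f := fun i : ℕ => -((q : ℂ) ^ i * a)) (by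
    intro i hi
    exact h i (by linear_combination -hi)) (qp_summable hq0 hq1 a)
  simpa [qp, sub_eq_add_neg] using this

lemma qp_ne_zero_of_norm_lt (hq0 : 0 < q) (hq1 : q < 1) {a : ℂ} (h : ‖a‖ < 1) :
    qp q a ≠ 0 := by
  refine qp_ne_zero hq0 hq1 fun i hi => ?_
  have h1 : ‖(q : ℂ) ^ i * a‖ < 1 := by
    rw [norm_mul, norm_pow, Complex.norm_real, Real.norm_of_nonneg hq0.le]
    calc q ^ i * ‖a‖ ≤ 1 * ‖a‖ := by gcongr; exact pow_le_one₀ hq0.le hq1.le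
      _ < 1 := by simpa using h
  rw [hi] at h1
  simp at h1

lemma qp_zero : qp (q : ℂ) 0 = 1 := by simp [qp]

/-- `(a)_∞` vanishes at `a = q^l` for integers `l ≤ 0`. -/
lemma qp_zpow_eq_zero (hq0 : 0 < q) (hq1 : q < 1) {l : ℤ} (hl : l ≤ 0) :
    qp q ((q : ℂ) ^ l) = 0 := by
  obtain ⟨m, rfl⟩ := Int.eq_ofNat_of_zero_le (neg_nonneg.2 hl) |>.imp fun m h => neg_eq_iff_eq_neg.1 h
  have hq : (q : ℂ) ≠ 0 := by exact_mod_cast hq0.ne'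
  rw [qp_split hq0 hq1 _ (m + 1), prod_range_succ]
  simp [hq]

/-- Among all arguments of modulus at most `r`, the Pochhammer symbol is largest at `-r`. -/
lemma qp_norm_le (hq0 : 0 < q) (hq1 : q < 1) {u : ℂ} {r : ℝ} (h : ‖u‖ ≤ r) :
    ‖qp q u‖ ≤ ‖qp q (-(r : ℂ))‖ := by
  refine le_of_tendsto_of_tendsto' (qp_tendsto hq0 hq1 u).norm (qp_tendsto hq0 hq1 _).norm ?_
  intro m
  rw [norm_prod, norm_prod]
  refine prod_le_prod (fun _ _ => norm_nonneg _) fun i _ => ?_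
  have hr : 0 ≤ r := (norm_nonneg u).trans h
  have e : 1 - (q : ℂ) ^ i * (-(r : ℂ)) = ((1 + q ^ i * r : ℝ) : ℂ) := by push_cast; ring
  rw [e, Complex.norm_real, Real.norm_of_nonneg (by positivity)]
  calc ‖1 - (q : ℂ) ^ i * u‖ ≤ ‖(1 : ℂ)‖ + ‖(q : ℂ) ^ i * u‖ := norm_sub_le _ _
    _ ≤ 1 + q ^ i * r := by
      rw [norm_one, norm_mul, norm_pow, Complex.norm_real, Real.norm_of_nonneg hq0.le]
      gcongr

lemma qp_tendsto_one (hq0 : 0 < q) (hq1 : q < 1) (a : ℂ) :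
    Tendsto (fun m : ℕ => qp q ((q : ℂ) ^ m * a)) atTop (𝓝 1) := by
  have hqn : ‖(q : ℂ)‖ < 1 := by simpa [abs_of_pos hq0] using hq1
  have h0 : Tendsto (fun m : ℕ => (q : ℂ) ^ m * a) atTop (𝓝 0) := by
    simpa using (tendsto_pow_atTop_nhds_zero_of_norm_lt_one hqn).mul_const a
  obtain ⟨M, hM⟩ := (h0.norm.eventually (gt_mem_nhds (by simp : ‖(0 : ℂ)‖ < 1))).exists
  -- Beyond the index `M` the symbol does not vanish, so it is a quotient of partial products.
  set v := (q : ℂ) ^ M * a with hv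
  have hv0 := qp_ne_zero_of_norm_lt hq0 hq1 hM
  have h1 : Tendsto (fun m : ℕ => qp q v / ∏ k ∈ range m, (1 - (q : ℂ) ^ k * v)) atTop (𝓝 1) := by
    have := (tendsto_const_nhds (x := qp q v)).div (qp_tendsto hq0 hq1 v) hv0
    rwa [div_self hv0] at this
  rw [← tendsto_add_atTop_iff_nat M]
  refine h1.congr fun m => ?_
  have h2 := qp_split hq0 hq1 v m
  have h3 : ∏ k ∈ range m, (1 - (q : ℂ) ^ k * v) ≠ 0 := by
    intro h; rw [h, zero_mul] at h2; exact hv0 h2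
  rw [h2, mul_div_cancel_left₀ _ h3, hv, pow_add]
  ring_nf

end QP

section DetLemma

/-- Let `m_0, …, m_n ∈ ℂⁿ` be columns whose linear combination with the coefficients of a
polynomial `R` of degree at most `n` is zero. Bordering by the row `(1, β, …, βⁿ)` and applying Cramer's
rule compares the determinants of `m_{j+1} - β m_j` and of `m_{j+1}`. -/
lemma det_shift {n : ℕ} (m : Fin n → ℕ → ℂ) (R : Polynomial ℂ) (hR : R.natDegree ≤ n)
    (h : ∀ i, ∑ k ∈ range (n + 1), R.coeff k * m i k = 0) (β : ℂ) :
    R.coeff 0 * (Matrix.of fun i j : Fin n => m i (j + 1) - β * m i j).det =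
      R.eval β * (Matrix.of fun i j : Fin n => m i (j + 1)).det := by
  let E : Matrix (Fin (n + 1)) (Fin (n + 1)) ℂ :=
    Matrix.of (Fin.cons (fun k => β ^ (k : ℕ)) fun i k => m i k)
  let F : Matrix (Fin (n + 1)) (Fin (n + 1)) ℂ :=
    Matrix.of fun i => Fin.cons (E i 0) fun j => E i j.succ - β * E i j.castSucc
  have hEF : E.det = F.det :=
    Matrix.det_eq_of_forall_col_eq_smul_add_pred (fun _ => β) (fun i => by simp [F])
      (fun i j => by simp [F])
  have hF : F.det = (Matrix.of fun i j : Fin n => m i (j + 1) - β * m i j).det := by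
    rw [Matrix.det_succ_row_zero, Fin.sum_univ_succ, Finset.sum_eq_zero]
    · simp only [F, E, Matrix.of_apply, Fin.cons_zero, Fin.val_zero, pow_zero, one_mul, add_zero]
      congr 1
    · intro j _
      simp [F, E, pow_succ, mul_comm]
  have hER : E.mulVec (fun k => R.coeff k) = Pi.single 0 (R.eval β) := by
    ext i
    refine Fin.cases ?_ (fun i => ?_) i
    · simp only [Matrix.mulVec, dotProduct, E, Matrix.of_apply, Fin.cons_zero, Pi.single_eq_same]
      rw [Polynomial.eval_eq_sum_range' (Nat.lt_succ_of_le hR), Finset.sum_range]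
      exact Finset.sum_congr rfl fun k _ => mul_comm _ _
    · simp only [Matrix.mulVec, dotProduct, E, Matrix.of_apply, Fin.cons_succ]
      rw [Pi.single_eq_of_ne (Fin.succ_ne_zero i), ← h i, Finset.sum_range]
      exact Finset.sum_congr rfl fun k _ => mul_comm _ _
  have hadj : E.adjugate.mulVec (E.mulVec (fun k => R.coeff k)) = E.det • fun k : Fin (n + 1) => R.coeff k := by
    rw [Matrix.mulVec_mulVec, Matrix.adjugate_mul, Matrix.smul_mulVec, Matrix.one_mulVec]
  have h0 := congrFun hadj 0
  rw [hER] at h0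
  simp only [Matrix.mulVec_single, Pi.smul_apply, smul_eq_mul, Fin.val_zero] at h0
  rw [← hF, ← hEF, mul_comm, ← h0, Matrix.col_apply, Matrix.adjugate_fin_succ_eq_det_submatrix]
  simp only [Fin.val_zero, add_zero, pow_zero, one_mul, MulOpposite.smul_eq_mul_unop, MulOpposite.unop_op]
  rw [mul_comm]
  congr 1

end DetLemma

/-! ### The one-variable weight -/

section Row

/-- The quasi-period `(-u)^k q^{k(k-1)/2}` of the theta function: `θ(u) = gs q u k * θ(q^k u)`. -/
noncomputable def gs (q u : ℂ) (k : ℤ) : ℂ := (-u) ^ k * q ^ (k * (k - 1) / 2)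

lemma gs_zero (q u : ℂ) : gs q u 0 = 1 := by simp [gs]

lemma gs_succ {q u : ℂ} (hq : q ≠ 0) (hu : u ≠ 0) (k : ℤ) :
    gs q u (k + 1) = -(u * q ^ k) * gs q u k := by
  have e : (k + 1) * (k + 1 - 1) / 2 = k * (k - 1) / 2 + k := by
    rw [show (k + 1) * (k + 1 - 1) = k * (k - 1) + k * 2 by ring]
    exact Int.add_mul_ediv_right _ _ two_ne_zero
  rw [gs, gs, e, zpow_add₀ hq, zpow_add_one₀ (neg_ne_zero.2 hu)]
  ring

lemma gs_ne_zero {q u : ℂ} (hq : q ≠ 0) (hu : u ≠ 0) (k : ℤ) : gs q u k ≠ 0 :=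
  mul_ne_zero (zpow_ne_zero _ (neg_ne_zero.2 hu)) (zpow_ne_zero _ hq)

/-- The one-variable weight into which the summand factors, up to a Vandermonde determinant and a
constant, as a function of `z = x q^ν`. Here `d = a⁻¹`, `c = b⁻¹` and `p = t b_1 ⋯ b_n`; working
with `c` and `d` allows the value `0`, which stands for an infinite `b` or `a`. -/
noncomputable def rowW {n : ℕ} (q p : ℂ) (d c : Fin n → ℂ) (x : ℂ) (ν : ℤ) : ℂ :=
  (∏ j, qp q (q * d j * (x * q ^ ν)) * qp q (q * c j * (x * q ^ ν)⁻¹)) * (gs q x ν ^ n * p ^ ν)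

variable {q : ℝ} {n : ℕ}

/-- The first-order `q`-difference equation of the weight. -/
lemma rowW_succ (hq0 : 0 < q) (hq1 : q < 1) {p x : ℂ} (hp : p ≠ 0) (hx : x ≠ 0)
    (d c : Fin n → ℂ) (ν : ℤ) :
    rowW q p d c x (ν + 1) * ∏ j, (1 - q * d j * (x * (q : ℂ) ^ ν)) =
      rowW q p d c x ν * (p * ∏ j, (c j - x * (q : ℂ) ^ ν)) := by
  have hq : (q : ℂ) ≠ 0 := by exact_mod_cast hq0.ne'
  have hz : x * (q : ℂ) ^ ν ≠ 0 := mul_ne_zero hx (zpow_ne_zero _ hq)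
  have e1 : ∏ j, (c j - x * (q : ℂ) ^ ν) =
      (-(x * (q : ℂ) ^ ν)) ^ n * ∏ j, (1 - c j * (x * (q : ℂ) ^ ν)⁻¹) := by
    have : (-(x * (q : ℂ) ^ ν)) ^ n = ∏ _j : Fin n, (-(x * (q : ℂ) ^ ν)) := by simp
    rw [this, ← prod_mul_distrib]
    refine prod_congr rfl fun j _ => ?_
    field_simp
    ring
  have e2 : ∀ j, qp q (q * c j * (x * (q : ℂ) ^ (ν + 1))⁻¹) =
      (1 - c j * (x * (q : ℂ) ^ ν)⁻¹) * qp q (q * c j * (x * (q : ℂ) ^ ν)⁻¹) := by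
    intro j
    have h1 : q * c j * (x * (q : ℂ) ^ (ν + 1))⁻¹ = c j * (x * (q : ℂ) ^ ν)⁻¹ := by
      rw [zpow_add_one₀ hq]; field_simp
    rw [h1, qp_step hq0 hq1 (c j * _)]
    ring_nf
  have e3 : ∀ j, qp q (q * d j * (x * (q : ℂ) ^ ν)) =
      (1 - q * d j * (x * (q : ℂ) ^ ν)) * qp q (q * d j * (x * (q : ℂ) ^ (ν + 1))) := by
    intro j
    rw [qp_step hq0 hq1 (q * d j * _), zpow_add_one₀ hq]
    ring_nf
  rw [e1]
  simp only [rowW, e2, e3, prod_mul_distrib, gs_succ hq hx, zpow_add_one₀ hp, mul_pow]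
  ring

/-- The dependence of the weight on a single parameter `c_j`. -/
lemma rowW_update (q p x : ℂ) (d c : Fin n → ℂ) (j : Fin n) (y : ℂ) (ν : ℤ) :
    rowW q p d (Function.update c j y) x ν =
      rowW q p d (Function.update c j 0) x ν * qp q (q * y * (x * q ^ ν)⁻¹) := by
  have e : ∀ y : ℂ, ∏ k, qp q (q * (Function.update c j y) k * (x * q ^ ν)⁻¹) =
      qp q (q * y * (x * q ^ ν)⁻¹) * ∏ k ∈ univ.erase j, qp q (q * c k * (x * q ^ ν)⁻¹) := by
    intro y
    rw [← mul_prod_erase univ _ (mem_univ j), Function.update_self]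
    congr 1
    exact prod_congr rfl fun k hk => by rw [Function.update_of_ne (ne_of_mem_erase hk)]
  have e0 : qp q (q * 0 * (x * q ^ ν)⁻¹) = 1 := by simp [qp]
  rw [rowW, rowW, prod_mul_distrib, prod_mul_distrib, e y, e 0, e0]
  ring

/-- Multiplying `c_j` by `q` removes one linear factor from the weight. -/
lemma rowW_update_mul (hq0 : 0 < q) (hq1 : q < 1) {p x : ℂ}
    (d c : Fin n → ℂ) (j : Fin n) (ν : ℤ) :
    rowW q p d c x ν =
      rowW q p d (Function.update c j (q * c j)) x ν * (1 - q * c j * (x * (q : ℂ) ^ ν)⁻¹) := by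
  conv_lhs => rw [← Function.update_eq_self j c]
  rw [rowW_update, rowW_update _ _ _ _ _ _ (q * c j), qp_step hq0 hq1]
  ring_nf

lemma summable_of_ratio {f : ℕ → ℂ} {num den : ℕ → ℝ} {A B : ℝ}
    (h : ∀ m, ‖f (m + 1)‖ * den m = ‖f m‖ * num m) (hA : 0 ≤ A) (hAB : A < B)
    (hnum : Tendsto num atTop (𝓝 A)) (hden : Tendsto den atTop (𝓝 B)) : Summable f := by
  have hB : 0 < B := hA.trans_lt hAB
  obtain ⟨r, hr1, hr2⟩ := exists_between ((div_lt_one hB).2 hAB)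
  rw [div_lt_iff₀ hB] at hr1
  refine summable_of_ratio_norm_eventually_le hr2 ?_
  filter_upwards [hden.eventually (lt_mem_nhds hB),
    hnum.eventually_lt (hden.const_mul r) hr1] with m h1 h2
  refine le_of_mul_le_mul_right ?_ h1
  rw [h m]
  nlinarith [mul_le_mul_of_nonneg_left h2.le (norm_nonneg (f m))]

/-- Convergence of the one-variable sums. On either side the terms decay geometrically, or all but
finitely many of them vanish. -/
lemma rowW_summable (hq0 : 0 < q) (hq1 : q < 1) {p x : ℂ} (hp : p ≠ 0) (hx : x ≠ 0)
    (d c : Fin n → ℂ) (k : ℤ)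
    (hplus : ‖p‖ * (∏ j, ‖c j‖) * q ^ k < 1 ∨ ∃ j, ∃ l : ℤ, c j = x * (q : ℂ) ^ l)
    (hminus : q ^ n * ∏ j, ‖d j‖ < ‖p‖ * q ^ k ∨ ∃ j, ∃ l : ℤ, d j * x = (q : ℂ) ^ l) :
    Summable fun ν : ℤ => rowW q p d c x ν * (x * (q : ℂ) ^ ν) ^ k := by
  have hq : (q : ℂ) ≠ 0 := by exact_mod_cast hq0.ne'
  have hz : ∀ ν : ℤ, x * (q : ℂ) ^ ν ≠ 0 := fun ν => mul_ne_zero hx (zpow_ne_zero _ hq)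
  have hqn : ‖(q : ℂ)‖ = q := by simp [abs_of_pos hq0]
  have hqn1 : ‖(q : ℂ)‖ < 1 := by rwa [hqn]
  have hrec : ∀ ν : ℤ, rowW q p d c x (ν + 1) * (x * (q : ℂ) ^ (ν + 1)) ^ k *
      ∏ j, (1 - q * d j * (x * (q : ℂ) ^ ν)) =
      rowW q p d c x ν * (x * (q : ℂ) ^ ν) ^ k *
        ((p * ∏ j, (c j - x * (q : ℂ) ^ ν)) * (q : ℂ) ^ k) := by
    intro ν
    have h1 := rowW_succ hq0 hq1 hp hx d c ν
    rw [zpow_add_one₀ hq, ← mul_assoc x, mul_zpow (x * (q : ℂ) ^ ν)]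
    linear_combination ((x * (q : ℂ) ^ ν) ^ k * (q : ℂ) ^ k) * h1
  refine Summable.of_nat_of_neg ?_ ?_
  · have hzt : Tendsto (fun m : ℕ => x * (q : ℂ) ^ (m : ℤ)) atTop (𝓝 0) := by
      simpa using (tendsto_pow_atTop_nhds_zero_of_norm_lt_one hqn1).const_mul x
    rcases hplus with hplus | ⟨j, l, hjl⟩
    · refine summable_of_ratio
        (num := fun m => ‖(p * ∏ j, (c j - x * (q : ℂ) ^ (m : ℤ))) * (q : ℂ) ^ k‖)
        (den := fun m => ‖∏ j, (1 - q * d j * (x * (q : ℂ) ^ (m : ℤ)))‖)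
        (A := ‖(p * ∏ j, (c j - 0)) * (q : ℂ) ^ k‖)
        (B := ‖∏ j : Fin n, (1 - q * d j * 0)‖) (fun m => ?_) (norm_nonneg _) ?_ ?_ ?_
      · rw [← norm_mul, ← norm_mul]
        push_cast
        rw [hrec]
      · simpa [norm_prod, abs_of_pos hq0] using hplus
      · exact ((tendsto_const_nhds.mul
          (tendsto_finsetProd _ fun j _ => tendsto_const_nhds.sub hzt)).mul_const _).norm
      · exact (tendsto_finsetProd _ fun j _ =>
          tendsto_const_nhds.sub (tendsto_const_nhds.mul hzt)).norm
    · refine summable_of_hasFiniteSupport ((Set.finite_le_nat (l.toNat)).subset fun m hm => ?_)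
      by_contra hml
      refine hm ?_
      have hlm : l + 1 - m ≤ 0 := by
        have : l.toNat < m := by simpa using hml
        omega
      have : qp q (q * c j * (x * (q : ℂ) ^ (m : ℤ))⁻¹) = 0 := by
        have e : q * c j * (x * (q : ℂ) ^ (m : ℤ))⁻¹ = (q : ℂ) ^ (l + 1 - m) := by
          rw [hjl, zpow_sub₀ hq, zpow_add_one₀ hq]; field_simp
        rw [e, qp_zpow_eq_zero hq0 hq1 hlm]
      dsimp only
      rw [rowW, prod_eq_zero (mem_univ j) (by rw [this, mul_zero]), zero_mul, zero_mul]
  · rcases hminus with hminus | ⟨j, l, hjl⟩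
    · have hzt : Tendsto (fun m : ℕ => (x * (q : ℂ) ^ (-(m + 1 : ℤ)))⁻¹) atTop (𝓝 0) := by
        have := (tendsto_pow_atTop_nhds_zero_of_norm_lt_one hqn1).const_mul (x⁻¹ * q)
        rw [mul_zero] at this
        refine this.congr fun m => ?_
        rw [mul_inv, ← zpow_neg, neg_neg, zpow_add_one₀ hq, zpow_natCast]
        ring
      refine summable_of_ratio
        (den := fun m : ℕ => ‖(p * ∏ j, (c j * (x * (q : ℂ) ^ (-(m + 1 : ℤ)))⁻¹ - 1)) * (q : ℂ) ^ k‖)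
        (num := fun m : ℕ => ‖∏ j, ((x * (q : ℂ) ^ (-(m + 1 : ℤ)))⁻¹ - q * d j)‖)
        (B := ‖(p * ∏ j, (c j * 0 - 1)) * (q : ℂ) ^ k‖)
        (A := ‖∏ j : Fin n, (0 - q * d j)‖) (fun m => ?_) (norm_nonneg _) ?_ ?_ ?_
      · rw [← norm_mul, ← norm_mul]
        push_cast
        have h1 := hrec (-(m + 1 : ℤ))
        set z := x * (q : ℂ) ^ (-(m + 1 : ℤ)) with hzdef
        have hz0 : z ≠ 0 := hz _
        rw [show -(m + 1 : ℤ) + 1 = -m by ring] at h1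
        have e1 : ∏ j, (1 - q * d j * z) = z ^ n * ∏ j, (z⁻¹ - q * d j) := by
          have : z ^ n = ∏ _j : Fin n, z := by simp
          rw [this, ← prod_mul_distrib]
          refine prod_congr rfl fun j _ => ?_
          field_simp
        have e2 : ∏ j, (c j - z) = z ^ n * ∏ j, (c j * z⁻¹ - 1) := by
          have : z ^ n = ∏ _j : Fin n, z := by simp
          rw [this, ← prod_mul_distrib]
          refine prod_congr rfl fun j _ => ?_
          field_simp
        rw [e1, e2] at h1
        congr 1
        refine mul_left_cancel₀ (pow_ne_zero n hz0) ?_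
        linear_combination -h1
      · simpa [norm_prod, prod_mul_distrib, abs_of_pos hq0] using hminus
      · exact (tendsto_finsetProd _ fun j _ => hzt.sub tendsto_const_nhds).norm
      · exact ((tendsto_const_nhds.mul (tendsto_finsetProd _ fun j _ =>
          (tendsto_const_nhds.mul hzt).sub tendsto_const_nhds)).mul_const _).norm
    · refine summable_of_hasFiniteSupport ((Set.finite_le_nat (l.toNat + 1)).subset fun m hm => ?_)
      by_contra hml
      refine hm ?_
      have hlm : l + 1 + -m ≤ 0 := by
        have : l.toNat + 1 < m := by simpa using hml
        omega
      have : qp q (q * d j * (x * (q : ℂ) ^ (-m : ℤ))) = 0 := by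
        have e : q * d j * (x * (q : ℂ) ^ (-m : ℤ)) = (q : ℂ) ^ (l + 1 + -m) := by
          rw [zpow_add₀ hq, zpow_add_one₀ hq, ← hjl]; ring
        rw [e, qp_zpow_eq_zero hq0 hq1 hlm]
      dsimp only
      rw [rowW, prod_eq_zero (mem_univ j) (by rw [this, zero_mul]), zero_mul, zero_mul]

end Row

/-! ### The moment determinant and its dependence on `c` -/

section Moments

variable {q : ℝ} {n : ℕ}

/-- The determinant of the moments `∑_ν w(x_i q^ν) (x_i q^ν)^j`, `0 ≤ j < n`. -/
noncomputable def momDet (q p : ℂ) (d c x : Fin n → ℂ) : ℂ :=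
  (Matrix.of fun i j : Fin n =>
    ∑' ν : ℤ, rowW q p d c (x i) ν * (x i * q ^ ν) ^ (j : ℕ)).det

/-- Convergence as `ν → +∞`: either `|t| < 1`, or every row terminates. -/
def PlusOK (q : ℝ) (p : ℂ) (c x : Fin n → ℂ) : Prop :=
  ‖p‖ * ∏ j, ‖c j‖ < 1 ∨ ∀ i, ∃ j, ∃ l : ℤ, c j = x i * (q : ℂ) ^ l

/-- Convergence as `ν → -∞`: either `|s| < 1`, or every row terminates. -/
def MinusOK (q : ℝ) (p : ℂ) (d x : Fin n → ℂ) : Prop :=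
  q * ∏ j, ‖d j‖ < ‖p‖ ∨ ∀ i, ∃ j, ∃ l : ℤ, d j * x i = (q : ℂ) ^ l

lemma MinusOK.row (hq0 : 0 < q) (hq1 : q < 1) {p : ℂ} {d x : Fin n → ℂ} (h : MinusOK q p d x)
    {k : ℤ} (hk : k + 1 ≤ n) (i : Fin n) :
    q ^ n * ∏ j, ‖d j‖ < ‖p‖ * q ^ k ∨ ∃ j, ∃ l : ℤ, d j * x i = (q : ℂ) ^ l := by
  refine h.imp (fun h => ?_) fun h => h i
  have h1 : q ^ n ≤ q ^ k * q := by
    rw [← zpow_add_one₀ hq0.ne', ← zpow_natCast]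
    exact zpow_le_zpow_right_of_le_one₀ hq0 hq1.le hk
  have h2 : 0 ≤ ∏ j, ‖d j‖ := prod_nonneg fun _ _ => norm_nonneg _
  calc q ^ n * ∏ j, ‖d j‖ ≤ q ^ k * q * ∏ j, ‖d j‖ := by gcongr
    _ = q ^ k * (q * ∏ j, ‖d j‖) := by ring
    _ < q ^ k * ‖p‖ := by gcongr
    _ = _ := by ring

lemma moment_summable (hq0 : 0 < q) (hq1 : q < 1) {p : ℂ} (hp : p ≠ 0) {d c x : Fin n → ℂ}
    (hx : ∀ i, x i ≠ 0) (hc : PlusOK q p c x) (hd : MinusOK q p d x) (i : Fin n) (k : ℕ)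
    (hk : k < n) :
    Summable fun ν : ℤ => rowW q p d c (x i) ν * (x i * (q : ℂ) ^ ν) ^ k := by
  have := rowW_summable hq0 hq1 hp (hx i) d c k ?_ (hd.row hq0 hq1 (by omega) i)
  · simpa using this
  · refine hc.imp (fun h => ?_) fun h => h i
    rw [zpow_natCast]
    refine lt_of_le_of_lt ?_ h
    refine mul_le_of_le_one_right ?_ (pow_le_one₀ hq0.le hq1.le)
    exact mul_nonneg (norm_nonneg _) (prod_nonneg fun _ _ => norm_nonneg _)

lemma prod_update_mul (c : Fin n → ℂ) (j : Fin n) (r : ℂ) :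
    ∏ k, Function.update c j (r * c j) k = r * ∏ k, c k := by
  rw [prod_update_of_mem (mem_univ j), mul_assoc, ← mul_prod_erase univ c (mem_univ j),
    sdiff_singleton_eq_erase]

lemma PlusOK.update (hq0 : 0 < q) (hq1 : q < 1) {p : ℂ} {c x : Fin n → ℂ}
    (h : PlusOK q p c x) (j : Fin n) (m : ℕ) :
    PlusOK q p (Function.update c j ((q : ℂ) ^ m * c j)) x := by
  have hq : (q : ℂ) ≠ 0 := by exact_mod_cast hq0.ne'
  refine h.imp (fun h => ?_) fun h i => ?_
  · rw [← norm_prod] at h ⊢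
    rw [prod_update_mul, norm_mul, norm_pow, Complex.norm_real, Real.norm_of_nonneg hq0.le]
    refine lt_of_le_of_lt ?_ h
    gcongr
    exact mul_le_of_le_one_left (norm_nonneg _) (pow_le_one₀ hq0.le hq1.le)
  · obtain ⟨k, l, hk⟩ := h i
    by_cases hkj : k = j
    · subst hkj
      refine ⟨k, l + m, ?_⟩
      rw [Function.update_self, hk, zpow_add₀ hq, zpow_natCast]
      ring
    · exact ⟨k, l, by rw [Function.update_of_ne hkj, hk]⟩

/-- The contiguity relation in `c_j`, i.e. `b_j ↦ b_j / q`, `t ↦ q t`. The `n + 1` moments of orders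
`-1, …, n - 1` satisfy one linear relation, obtained by telescoping. -/
lemma momDet_shift (hq0 : 0 < q) (hq1 : q < 1) {p : ℂ} (hp : p ≠ 0) {d c x : Fin n → ℂ}
    (hx : ∀ i, x i ≠ 0) (hc : PlusOK q p c x) (hd : MinusOK q p d x) (j : Fin n) :
    (1 - p * ∏ k, c k) * momDet q p d c x =
      (∏ i, (1 - q * d i * c j)) * momDet q p d (Function.update c j (q * c j)) x := by
  have hq : (q : ℂ) ≠ 0 := by exact_mod_cast hq0.ne'
  have hz : ∀ i (ν : ℤ), x i * (q : ℂ) ^ ν ≠ 0 := fun i ν =>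
    mul_ne_zero (hx i) (zpow_ne_zero _ hq)
  set c' := Function.update c j (q * c j) with hc'
  have hprod : ∏ k, c' k = q * ∏ k, c k := prod_update_mul c j q
  let m : Fin n → ℕ → ℂ := fun i k =>
    ∑' ν : ℤ, rowW q p d c' (x i) ν * (x i * (q : ℂ) ^ ν) ^ ((k : ℤ) - 1)
  have hs : ∀ i, ∀ k : ℕ, k ≤ n →
      Summable fun ν : ℤ => rowW q p d c' (x i) ν * (x i * (q : ℂ) ^ ν) ^ ((k : ℤ) - 1) := by
    intro i k hk
    refine rowW_summable hq0 hq1 hp (hx i) d c' _ ?_ (hd.row hq0 hq1 (by omega) i)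
    have hc1 := hc.update hq0 hq1 j 1
    rw [pow_one, ← hc'] at hc1
    rcases hc with h | h
    · left
      rw [← norm_prod] at h ⊢
      rw [hprod, norm_mul, Complex.norm_real, Real.norm_of_nonneg hq0.le, zpow_sub_one₀ hq0.ne',
        zpow_natCast]
      calc ‖p‖ * (q * ‖∏ k, c k‖) * (q ^ k * q⁻¹) = q ^ k * (‖p‖ * ‖∏ k, c k‖) := by
            field_simp
        _ ≤ ‖p‖ * ‖∏ k, c k‖ :=
            mul_le_of_le_one_left (by positivity) (pow_le_one₀ hq0.le hq1.le)
        _ < 1 := h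
    · right
      obtain ⟨k, l, hk⟩ := h i
      by_cases hkj : k = j
      · subst hkj
        refine ⟨k, l + 1, ?_⟩
        rw [hc', Function.update_self, hk, zpow_add_one₀ hq]
        ring
      · exact ⟨k, l, by rw [hc', Function.update_of_ne hkj, hk]⟩
  have hpoly : ∀ i (P : Polynomial ℂ), P.natDegree ≤ n →
      HasSum (fun ν : ℤ => rowW q p d c' (x i) ν * (x i * (q : ℂ) ^ ν)⁻¹ *
        P.eval (x i * (q : ℂ) ^ ν)) (∑ k ∈ range (n + 1), P.coeff k * m i k) := by
    intro i P hP
    have h1 : HasSum (fun ν : ℤ => ∑ k ∈ range (n + 1),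
        P.coeff k * (rowW q p d c' (x i) ν * (x i * (q : ℂ) ^ ν) ^ ((k : ℤ) - 1)))
        (∑ k ∈ range (n + 1), P.coeff k * m i k) :=
      hasSum_sum fun k hk => ((hs i k (by simpa [Nat.lt_succ_iff] using hk)).hasSum).mul_left _
    refine h1.congr_fun ?_
    intro ν
    rw [Polynomial.eval_eq_sum_range' (Nat.lt_succ_of_le hP), mul_sum]
    refine sum_congr rfl fun k _ => ?_
    rw [zpow_sub_one₀ (hz i ν), zpow_natCast]
    ring
  -- Summing `w(z) z⁻¹ P1(z)` minus its shift by one step gives `0`; by the difference equation the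
  -- summand of this telescoping sum is `w(z) z⁻¹ R(z)` with `R = P1 - (p/q) P2`.
  let P1 : Polynomial ℂ := ∏ k, (1 - Polynomial.C (d k) * Polynomial.X)
  let P2 : Polynomial ℂ := ∏ k, (Polynomial.C (c' k) - Polynomial.X)
  have hdeg : ∀ f : Fin n → Polynomial ℂ, (∀ k, (f k).natDegree ≤ 1) →
      (∏ k, f k).natDegree ≤ n := by
    intro f hf
    refine (Polynomial.natDegree_prod_le _ _).trans ((sum_le_sum fun k _ => hf k).trans ?_)
    simp
  have hP1 : P1.natDegree ≤ n := hdeg _ fun k => by compute_degree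
  have hP2 : P2.natDegree ≤ n := hdeg _ fun k => by compute_degree
  let R : Polynomial ℂ := P1 - Polynomial.C (p / q) * P2
  have hR : R.natDegree ≤ n := by
    refine (Polynomial.natDegree_sub_le _ _).trans (max_le hP1 ?_)
    exact (Polynomial.natDegree_C_mul_le _ _).trans hP2
  have hev : ∀ z, R.eval z = ∏ k, (1 - d k * z) - p / q * ∏ k, (c' k - z) := by
    intro z
    simp [R, P1, P2, Polynomial.eval_prod]
  have hev1 : ∀ z, P1.eval z = ∏ k, (1 - d k * z) := by
    intro z
    simp [P1, Polynomial.eval_prod]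
  have hrel : ∀ i, ∑ k ∈ range (n + 1), R.coeff k * m i k = 0 := by
    intro i
    have h1 := hpoly i P1 hP1
    have h2 := (Equiv.addRight (1 : ℤ)).hasSum_iff.2 h1
    have h3 := h1.sub h2
    rw [sub_self] at h3
    refine (hpoly i R hR).unique (h3.congr_fun ?_)
    intro ν
    have h4 := rowW_succ hq0 hq1 hp (hx i) d c' ν
    have h5 : ∏ k, (1 - d k * (x i * ((q : ℂ) ^ ν * q))) =
        ∏ k, (1 - q * d k * (x i * (q : ℂ) ^ ν)) :=
      prod_congr rfl fun k _ => by ring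
    simp only [Function.comp_apply, Equiv.coe_addRight, hev, hev1]
    rw [zpow_add_one₀ hq, h5, ← mul_assoc (x i), mul_inv]
    linear_combination ((x i * (q : ℂ) ^ ν)⁻¹ * (q : ℂ)⁻¹) * h4
  have key := det_shift m R hR hrel (q * c j)
  have hb : R.eval (q * c j) = ∏ i, (1 - q * d i * c j) := by
    have h0 : ∏ k, (c' k - q * c j) = 0 := prod_eq_zero (mem_univ j) (by simp [hc'])
    rw [hev, h0, mul_zero, sub_zero]
    exact prod_congr rfl fun k _ => by ring
  have h0 : R.coeff 0 = 1 - p * ∏ k, c k := by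
    rw [Polynomial.coeff_zero_eq_eval_zero, hev]
    simp only [mul_zero, sub_zero, prod_const_one, hprod]
    field_simp
  rw [hb, h0] at key
  have hm1 : ∀ i (k : Fin n), m i (k + 1) =
      ∑' ν : ℤ, rowW q p d c' (x i) ν * (x i * (q : ℂ) ^ ν) ^ (k : ℕ) := by
    intro i k
    simp [m]
  have hm2 : ∀ i (k : Fin n), m i (k + 1) - q * c j * m i k =
      ∑' ν : ℤ, rowW q p d c (x i) ν * (x i * (q : ℂ) ^ ν) ^ (k : ℕ) := by
    intro i k
    simp only [m]
    rw [← tsum_mul_left, ← (hs i (k + 1) k.2).tsum_sub ((hs i k k.2.le).mul_left _)]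
    refine tsum_congr fun ν => ?_
    rw [rowW_update_mul hq0 hq1 d c j ν, ← hc', zpow_sub_one₀ (hz i ν) k, zpow_natCast]
    push_cast
    rw [add_sub_cancel_right, zpow_natCast]
    ring
  simp only [hm2] at key
  simp only [hm1] at key
  exact key

lemma momDet_iterate (hq0 : 0 < q) (hq1 : q < 1) {p : ℂ} (hp : p ≠ 0) {d c x : Fin n → ℂ}
    (hx : ∀ i, x i ≠ 0) (hc : PlusOK q p c x) (hd : MinusOK q p d x) (j : Fin n) (m : ℕ) :
    (∏ k ∈ range m, (1 - (q : ℂ) ^ k * (p * ∏ k, c k))) * momDet q p d c x =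
      (∏ i, ∏ k ∈ range m, (1 - (q : ℂ) ^ k * (q * d i * c j))) *
        momDet q p d (Function.update c j ((q : ℂ) ^ m * c j)) x := by
  induction m with
  | zero => simp
  | succ m ih =>
    have h := momDet_shift hq0 hq1 hp hx (hc.update hq0 hq1 j m) hd j
    rw [prod_update_mul, Function.update_idem, Function.update_self] at h
    simp only [prod_range_succ, prod_mul_distrib]
    have e : ∏ i, (1 - q * d i * ((q : ℂ) ^ m * c j)) =
        ∏ i, (1 - (q : ℂ) ^ m * (q * d i * c j)) := prod_congr rfl fun i _ => by ring
    rw [e] at h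
    rw [pow_succ', mul_assoc (q : ℂ)]
    linear_combination (1 - (q : ℂ) ^ m * (p * ∏ k, c k)) * ih +
      (∏ i, ∏ k ∈ range m, (1 - (q : ℂ) ^ k * (q * d i * c j))) * h

/-- Dominated convergence as `c_j` runs through `q^m c_j`, `m → ∞`. -/
lemma momDet_tendsto (hq0 : 0 < q) (hq1 : q < 1) {p : ℂ} (hp : p ≠ 0) {d : Fin n → ℂ}
    (c : Fin n → ℂ) {x : Fin n → ℂ} (hx : ∀ i, x i ≠ 0) (hd : MinusOK q p d x) (j : Fin n) :
    Tendsto (fun m : ℕ => momDet q p d (Function.update c j ((q : ℂ) ^ m * c j)) x) atTop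
      (𝓝 (momDet q p d (Function.update c j 0) x)) := by
  have hq : (q : ℂ) ≠ 0 := by exact_mod_cast hq0.ne'
  -- From the index `M` on, `|t q^m| < 1`.
  obtain ⟨M, hM⟩ : ∃ M : ℕ, ‖p‖ * ‖(q : ℂ) ^ M * ∏ k, c k‖ < 1 := by
    have h0 : Tendsto (fun m : ℕ => ‖p‖ * ‖(q : ℂ) ^ m * ∏ k, c k‖) atTop (𝓝 0) := by
      have hqn : ‖(q : ℂ)‖ < 1 := by simpa [abs_of_pos hq0] using hq1
      simpa using
        (((tendsto_pow_atTop_nhds_zero_of_norm_lt_one hqn).mul_const (∏ k, c k)).norm).const_mul ‖p‖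
    exact (h0.eventually (gt_mem_nhds one_pos)).exists
  refine (continuous_id.matrix_det.tendsto _).comp (tendsto_pi_nhds.2 fun i =>
    tendsto_pi_nhds.2 fun k => ?_)
  simp only [Matrix.of_apply]
  -- Replacing `q^M c_j` by `u` turns every factor `1 - q^{l+1} q^M c_j / z` of the Pochhammer symbol
  -- into `1 + |q^{l+1} q^M c_j / z|`, which dominates all later terms of the sequence.
  let u : ℂ := -((‖(q : ℂ) ^ M * c j‖ : ℝ) : ℂ) * (x i / ‖x i‖)
  have hxn : (‖x i‖ : ℂ) ≠ 0 := by simpa using hx i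
  have hu : ‖u‖ = ‖(q : ℂ) ^ M * c j‖ := by
    simp only [u, norm_mul, norm_neg, norm_div, Complex.norm_real, norm_norm]
    rw [div_self (by simpa using hx i), mul_one]
  refine tendsto_tsum_of_dominated_convergence
    (bound := fun ν : ℤ => ‖rowW q p d (Function.update c j u) (x i) ν *
      (x i * (q : ℂ) ^ ν) ^ (k : ℕ)‖) ?_ ?_ ?_
  · have h := rowW_summable hq0 hq1 hp (hx i) d (Function.update c j u) k ?_
      (hd.row hq0 hq1 (by omega) i)
    · simpa using h.norm
    · left
      have e : ∏ k, ‖Function.update c j u k‖ = ‖(q : ℂ) ^ M * ∏ k, c k‖ := by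
        rw [← norm_prod, prod_update_of_mem (mem_univ j), norm_mul, hu, ← norm_mul, mul_assoc,
          ← mul_prod_erase univ c (mem_univ j), sdiff_singleton_eq_erase]
      rw [e, zpow_natCast]
      refine lt_of_le_of_lt ?_ hM
      exact mul_le_of_le_one_right (by positivity) (pow_le_one₀ hq0.le hq1.le)
  · intro ν
    refine Tendsto.mul_const _ ?_
    simp_rw [rowW_update _ _ _ _ _ _ ((q : ℂ) ^ _ * c j)]
    have h := (qp_tendsto_one hq0 hq1 (q * c j * (x i * (q : ℂ) ^ ν)⁻¹)).const_mul
      (rowW q p d (Function.update c j 0) (x i) ν)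
    rw [mul_one] at h
    refine h.congr fun m => ?_
    ring_nf
  · filter_upwards [eventually_ge_atTop M] with m hm ν
    rw [rowW_update, rowW_update _ _ _ _ _ _ u, norm_mul, norm_mul, norm_mul, norm_mul]
    gcongr
    have e : q * u * (x i * (q : ℂ) ^ ν)⁻¹ =
        -((q * ‖(q : ℂ) ^ M * c j‖ * (‖x i‖ * q ^ ν)⁻¹ : ℝ) : ℂ) := by
      have h1 := hx i
      have h2 : (q : ℂ) ^ ν ≠ 0 := zpow_ne_zero _ hq
      simp only [u]
      push_cast
      field_simp
    rw [e]
    refine qp_norm_le hq0 hq1 ?_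
    rw [norm_mul, norm_mul, norm_inv, norm_mul (x i), norm_zpow, Complex.norm_real,
      Real.norm_of_nonneg hq0.le]
    have h3 : ‖(q : ℂ) ^ m * c j‖ ≤ ‖(q : ℂ) ^ M * c j‖ := by
      rw [norm_mul, norm_mul, norm_pow, norm_pow, Complex.norm_real, Real.norm_of_nonneg hq0.le]
      gcongr ?_ * _
      exact pow_le_pow_of_le_one hq0.le hq1.le hm
    gcongr

/-- Sending a single `c_j` to `0`. -/
lemma momDet_zero_one (hq0 : 0 < q) (hq1 : q < 1) {p : ℂ} (hp : p ≠ 0) {d c x : Fin n → ℂ}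
    (hx : ∀ i, x i ≠ 0) (hc : PlusOK q p c x) (hd : MinusOK q p d x) (j : Fin n) :
    qp q (p * ∏ k, c k) * momDet q p d c x =
      (∏ i, qp q (q * d i * c j)) * momDet q p d (Function.update c j 0) x := by
  refine tendsto_nhds_unique ((qp_tendsto hq0 hq1 _).mul_const _) ?_
  simp_rw [momDet_iterate hq0 hq1 hp hx hc hd j]
  exact (tendsto_finsetProd _ fun i _ => qp_tendsto hq0 hq1 _).mul
    (momDet_tendsto hq0 hq1 hp c hx hd j)

/-- Sending the `c_j` with `j ∈ s` to `0`. -/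
lemma momDet_zero (hq0 : 0 < q) (hq1 : q < 1) {p : ℂ} (hp : p ≠ 0) {d c x : Fin n → ℂ}
    (hx : ∀ i, x i ≠ 0) (hc : PlusOK q p c x) (hd : MinusOK q p d x) (s : Finset (Fin n)) :
    qp q (p * ∏ k, c k) * momDet q p d c x =
      (∏ j ∈ s, ∏ i, qp q (q * d i * c j)) *
        (qp q (p * ∏ k, (if k ∈ s then 0 else c k)) *
          momDet q p d (fun k => if k ∈ s then 0 else c k) x) := by
  induction s using Finset.induction_on with
  | empty => simp
  | insert j s hj ih =>
    have hcs : PlusOK q p (fun k => if k ∈ s then 0 else c k) x := by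
      rcases s.eq_empty_or_nonempty with rfl | ⟨k, hk⟩
      · simpa using hc
      · left
        rw [prod_eq_zero (mem_univ k) (by simp [hk])]
        simp
    have h := momDet_zero_one hq0 hq1 hp hx hcs hd j
    have e : Function.update (fun k => if k ∈ s then 0 else c k) j 0 =
        fun k => if k ∈ insert j s then 0 else c k := by
      ext k
      by_cases hkj : k = j
      · subst hkj; simp
      · simp [hkj]
    rw [e] at h
    rw [ih, h, prod_insert hj]
    have e0 : ∏ k, (if k ∈ insert j s then 0 else c k) = 0 :=
      prod_eq_zero (mem_univ j) (by simp)
    rw [e0, mul_zero, qp_zero, if_neg hj]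
    ring

/-- Up to explicit factors, the moment determinant does not depend on `c`. -/
lemma momDet_compare (hq0 : 0 < q) (hq1 : q < 1) {p : ℂ} (hp : p ≠ 0) {d c c' x : Fin n → ℂ}
    (hx : ∀ i, x i ≠ 0) (hc : PlusOK q p c x) (hc' : PlusOK q p c' x) (hd : MinusOK q p d x) :
    momDet q p d c x * qp q (p * ∏ k, c k) * (∏ j, ∏ i, qp q (q * d i * c' j)) =
      momDet q p d c' x * qp q (p * ∏ k, c' k) * (∏ j, ∏ i, qp q (q * d i * c j)) := by
  rcases Nat.eq_zero_or_pos n with rfl | hn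
  · have : c = c' := Subsingleton.elim _ _
    rw [this]
  have h1 := momDet_zero hq0 hq1 hp hx hc hd univ
  have h2 := momDet_zero hq0 hq1 hp hx hc' hd univ
  simp only [mem_univ, if_true] at h1 h2
  linear_combination (∏ j, ∏ i, qp q (q * d i * c' j)) * h1 -
    (∏ j, ∏ i, qp q (q * d i * c j)) * h2

end Moments

/-! ### Factorization of the summand -/

section Factor

/-- The theta function `θ(u) = (u)_∞ (q/u)_∞`. -/
noncomputable def th (q u : ℂ) : ℂ := qp q u * qp q (q * u⁻¹)

variable {q : ℝ} {n : ℕ}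

lemma th_step (hq0 : 0 < q) (hq1 : q < 1) {u : ℂ} (hu : u ≠ 0) :
    th q u = -u * th q (u * q) := by
  have hq : (q : ℂ) ≠ 0 := by exact_mod_cast hq0.ne'
  have e : (q : ℂ) * (u * q)⁻¹ = u⁻¹ := by field_simp
  rw [th, th, e, qp_step hq0 hq1 u, qp_step hq0 hq1 u⁻¹, mul_comm u (q : ℂ)]
  field_simp
  ring

lemma th_shift (hq0 : 0 < q) (hq1 : q < 1) {u : ℂ} (hu : u ≠ 0) (k : ℤ) :
    th q u = gs q u k * th q (u * (q : ℂ) ^ k) := by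
  have hq : (q : ℂ) ≠ 0 := by exact_mod_cast hq0.ne'
  have step : ∀ k : ℤ, gs q u k * th q (u * (q : ℂ) ^ k) =
      gs q u (k + 1) * th q (u * (q : ℂ) ^ (k + 1)) := by
    intro k
    rw [th_step hq0 hq1 (mul_ne_zero hu (zpow_ne_zero k hq)), gs_succ hq hu, zpow_add_one₀ hq]
    ring_nf
  induction k using Int.induction_on with
  | zero => simp [gs_zero]
  | succ k ih => rw [ih, step]
  | pred k ih => rw [ih, step (-k - 1), sub_add_cancel]

lemma gs_mul_right {q u : ℂ} (v : ℂ) (k : ℤ) : gs q (u * v) k = gs q u k * v ^ k := by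
  rw [gs, gs, ← neg_mul, mul_zpow]
  ring

lemma choose_two_add (k l : ℤ) :
    (k + l) * (k + l - 1) / 2 = k * (k - 1) / 2 + l * (l - 1) / 2 + k * l := by
  obtain ⟨a, ha⟩ := (Int.even_mul_pred_self k).two_dvd
  obtain ⟨b, hb⟩ := (Int.even_mul_pred_self l).two_dvd
  rw [show (k + l) * (k + l - 1) = 2 * (a + b + k * l) by linear_combination ha + hb, ha, hb]
  simp

lemma choose_two_sub (k l : ℤ) :
    (k - l) * (k - l - 1) / 2 = k * (k - 1) / 2 + l * (l - 1) / 2 + l - k * l := by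
  obtain ⟨a, ha⟩ := (Int.even_mul_pred_self k).two_dvd
  obtain ⟨b, hb⟩ := (Int.even_mul_pred_self l).two_dvd
  rw [show (k - l) * (k - l - 1) = 2 * (a + b + l - k * l) by linear_combination ha + hb, ha, hb]
  simp

lemma gs_mul_add {q u v : ℂ} (hq : q ≠ 0) (hu : u ≠ 0) (hv : v ≠ 0) (k l : ℤ) :
    gs q (u * v) (k + l) = gs q u k * gs q v l * (u ^ l * v ^ k * q ^ (k * l)) := by
  have hu' : -u ≠ 0 := neg_ne_zero.2 hu
  have h1 : ((-1 : ℂ) ^ l) * (-1) ^ l = 1 := by rw [← mul_zpow]; simp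
  have h2 : (-u) ^ l = (-1) ^ l * u ^ l := by rw [← mul_zpow]; simp
  have h3 : (-v) ^ l = (-1) ^ l * v ^ l := by rw [← mul_zpow]; simp
  rw [gs, gs, gs, choose_two_add, zpow_add₀ hq, zpow_add₀ hq, ← neg_mul, mul_zpow, zpow_add₀ hu',
    zpow_add₀ hv, h2, h3]
  ring

lemma gs_div_sub {q u v : ℂ} (hq : q ≠ 0) (hu : u ≠ 0) (hv : v ≠ 0) (k l : ℤ) :
    gs q (u / v) (k - l) = gs q u k * gs q v l * (u ^ l * v ^ k * q ^ (k * l))⁻¹ * q ^ l := by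
  have hu' : -u ≠ 0 := neg_ne_zero.2 hu
  have h1 : ((-1 : ℂ) ^ l) * (-1) ^ l = 1 := by rw [← mul_zpow]; simp
  have h2 : (-u) ^ l = (-1) ^ l * u ^ l := by rw [← mul_zpow]; simp
  have h3 : (-v) ^ l = (-1) ^ l * v ^ l := by rw [← mul_zpow]; simp
  have h4 : ((-1 : ℂ) ^ l) ≠ 0 := zpow_ne_zero _ (by norm_num)
  have h5 : (q : ℂ) ^ (k * l) ≠ 0 := zpow_ne_zero _ hq
  have h6 : u ^ l ≠ 0 := zpow_ne_zero _ hu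
  have h7 : v ^ l ≠ 0 := zpow_ne_zero _ hv
  have h8 : v ^ k ≠ 0 := zpow_ne_zero _ hv
  rw [gs, gs, gs, choose_two_sub, zpow_sub₀ hq, zpow_add₀ hq, zpow_add₀ hq, ← neg_div, div_zpow,
    zpow_sub₀ hu', zpow_sub₀ hv, h2, h3]
  field_simp
  linear_combination (-1 : ℂ) * h1

lemma zpow_finset_sum {α : Type*} {u : ℂ} (hu : u ≠ 0) (s : Finset α) (f : α → ℤ) :
    u ^ (∑ i ∈ s, f i) = ∏ i ∈ s, u ^ f i := by
  classical
  induction s using Finset.induction_on with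
  | empty => simp
  | insert i s hi ih => rw [sum_insert hi, prod_insert hi, zpow_add₀ hu, ih]

/-- The quasi-period is quadratic in the exponent; the cross terms are collected over `i < j`. -/
lemma gs_prod {q : ℂ} (hq : q ≠ 0) {n : ℕ} {x : Fin n → ℂ} (hx : ∀ i, x i ≠ 0) (ν : Fin n → ℤ) :
    gs q (∏ i, x i) (∑ i, ν i) = (∏ i, gs q (x i) (ν i)) *
      ∏ i, ∏ j ∈ Ioi i, (x i ^ ν j * x j ^ ν i * q ^ (ν i * ν j)) := by
  induction n with
  | zero => simp [gs]
  | succ n ih =>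
    rw [Fin.prod_univ_succ, Fin.sum_univ_succ, gs_mul_add hq (hx 0)
      (prod_ne_zero_iff.2 fun i _ => hx _), ih (fun i => hx _), Fin.prod_univ_succ,
      Fin.prod_univ_succ (fun i => ∏ j ∈ Ioi i, (x i ^ ν j * x j ^ ν i * q ^ (ν i * ν j))),
      Fin.prod_Ioi_zero]
    simp only [Fin.prod_Ioi_succ, prod_mul_distrib]
    have e1 : x 0 ^ (∑ i : Fin n, ν i.succ) = ∏ i : Fin n, x 0 ^ ν i.succ := by
      rw [zpow_finset_sum (hx 0)]
    have e2 : q ^ (ν 0 * ∑ i : Fin n, ν i.succ) = ∏ i : Fin n, q ^ (ν 0 * ν i.succ) := by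
      rw [mul_sum, zpow_finset_sum hq]
    rw [e1, e2, ← prod_zpow]
    ring

/-- The quasi-periods of the theta functions in the denominator recombine to a product over the
single variables. -/
lemma gs_identity {q p : ℂ} (hq : q ≠ 0) (hp : p ≠ 0) {x : Fin n → ℂ} (hx : ∀ i, x i ≠ 0)
    (ν : Fin n → ℤ) :
    gs q (p * ∏ i, x i) (∑ i, ν i) *
        ∏ i, ∏ j ∈ Ioi i, (gs q (x i / x j) (ν i - ν j) * (q ^ ν j)⁻¹) =
      ∏ i, (gs q (x i) (ν i) ^ n * p ^ ν i) := by
  have h1 : ∏ i, ∏ j ∈ Ioi i, (gs q (x i / x j) (ν i - ν j) * (q ^ ν j)⁻¹) =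
      (∏ i, ∏ j ∈ Ioi i, (gs q (x j) (ν j) * gs q (x i) (ν i))) *
        (∏ i, ∏ j ∈ Ioi i, (x i ^ ν j * x j ^ ν i * q ^ (ν i * ν j)))⁻¹ := by
    simp only [← prod_inv_distrib, ← prod_mul_distrib]
    refine prod_congr rfl fun i _ => prod_congr rfl fun j _ => ?_
    rw [gs_div_sub hq (hx i) (hx j)]
    have : q ^ ν j ≠ 0 := zpow_ne_zero _ hq
    field_simp
  have h2 : ∏ i, ∏ j ∈ Ioi i, (gs q (x j) (ν j) * gs q (x i) (ν i)) =
      ∏ i, gs q (x i) (ν i) ^ (n - 1) := by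
    rw [prod_prod_Ioi_mul_eq_prod_prod_off_diag fun i _ => gs q (x i) (ν i)]
    rw [← prod_comm' (s := univ) (t := fun i => {i}ᶜ) (t' := univ) (s' := fun i => {i}ᶜ)
      (by intro a b; simp [eq_comm])]
    refine prod_congr rfl fun i _ => ?_
    simp [card_compl]
  have h3 : ∏ i, ∏ j ∈ Ioi i, (x i ^ ν j * x j ^ ν i * q ^ (ν i * ν j)) ≠ 0 :=
    prod_ne_zero_iff.2 fun i _ => prod_ne_zero_iff.2 fun j _ =>
      mul_ne_zero (mul_ne_zero (zpow_ne_zero _ (hx _)) (zpow_ne_zero _ (hx _))) (zpow_ne_zero _ hq)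
  have h4 : ∀ i, gs q (x i) (ν i) ^ n = gs q (x i) (ν i) * gs q (x i) (ν i) ^ (n - 1) := by
    intro i
    rw [← pow_succ', Nat.sub_add_cancel (Nat.one_le_of_lt i.2)]
  rw [mul_comm p, gs_mul_right, gs_prod hq hx, h1, h2, zpow_finset_sum hp]
  generalize ∏ i, ∏ j ∈ Ioi i, (x i ^ ν j * x j ^ ν i * q ^ (ν i * ν j)) = D at h3
  simp only [h4, prod_mul_distrib]
  field_simp

/-- The `ν`-independent factor of the summand. -/
noncomputable def facK (q p : ℂ) (x : Fin n → ℂ) : ℂ :=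
  (th q (p * ∏ i, x i) * ∏ i, ∏ j ∈ Ioi i, (th q (x i / x j) * x j))⁻¹

/-- The summand is a constant times a Vandermonde determinant times one-variable weights. -/
lemma macTerm_eq (hq0 : 0 < q) (hq1 : q < 1) {p t s : ℂ} {a b x : Fin n → ℂ} (hp : p ≠ 0)
    (hpt : t * ∏ i, b i = p) (hps : s * (∏ i, a i) * p = q) (hx : ∀ i, x i ≠ 0)
    (hxx : ∀ i j, i ≠ j → ∀ m : ℤ, x i / x j ≠ (q : ℂ) ^ m) (ν : Fin n → ℤ) :
    macTerm q t s a b x ν = facK q p x *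
      ((∏ i, ∏ j ∈ Ioi i, (x j * (q : ℂ) ^ ν j - x i * (q : ℂ) ^ ν i)) *
        ∏ i, rowW q p (fun j => (a j)⁻¹) (fun j => (b j)⁻¹) (x i) (ν i)) := by
  have hq : (q : ℂ) ≠ 0 := by exact_mod_cast hq0.ne'
  have hz : ∀ i, x i * (q : ℂ) ^ ν i ≠ 0 := fun i => mul_ne_zero (hx i) (zpow_ne_zero _ hq)
  have hX : ∏ i, x i ≠ 0 := prod_ne_zero_iff.2 fun i _ => hx i
  have hZ : ∏ i, x i * (q : ℂ) ^ ν i = (∏ i, x i) * (q : ℂ) ^ (∑ i, ν i) := by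
    rw [prod_mul_distrib, zpow_finset_sum hq]
  have hZ0 : ∏ i, x i * (q : ℂ) ^ ν i ≠ 0 := prod_ne_zero_iff.2 fun i _ => hz i
  have h1 : (qp q (s * (∏ i, a i) * (∏ i, x i * (q : ℂ) ^ ν i)⁻¹) *
      qp q (t * (∏ i, b i) * ∏ i, x i * (q : ℂ) ^ ν i))⁻¹ =
      gs q (p * ∏ i, x i) (∑ i, ν i) * (th q (p * ∏ i, x i))⁻¹ := by
    have e1 : s * (∏ i, a i) * (∏ i, x i * (q : ℂ) ^ ν i)⁻¹ =
        q * (p * ∏ i, x i * (q : ℂ) ^ ν i)⁻¹ := by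
      rw [← hps]; field_simp
    have hg := gs_ne_zero hq (mul_ne_zero hp hX) (∑ i, ν i)
    rw [e1, hpt, mul_comm (qp _ _), ← th, hZ, ← mul_assoc p,
      th_shift hq0 hq1 (mul_ne_zero hp hX) (∑ i, ν i), mul_inv, mul_inv_cancel_left₀ hg]
  have h2 : ∀ i j, i ≠ j → (qp q (q * (x i * (q : ℂ) ^ ν i) * (x j * (q : ℂ) ^ ν j)⁻¹) *
      qp q (q * (x j * (q : ℂ) ^ ν j) * (x i * (q : ℂ) ^ ν i)⁻¹))⁻¹ =
      (gs q (x i / x j) (ν i - ν j) * ((q : ℂ) ^ ν j)⁻¹) *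
        (x j * (q : ℂ) ^ ν j - x i * (q : ℂ) ^ ν i) * (th q (x i / x j) * x j)⁻¹ := by
    intro i j hij
    have hu0 : x i / x j ≠ 0 := div_ne_zero (hx i) (hx j)
    set u := x i * (q : ℂ) ^ ν i * (x j * (q : ℂ) ^ ν j)⁻¹ with hu
    have huk : u = x i / x j * (q : ℂ) ^ (ν i - ν j) := by
      rw [hu, zpow_sub₀ hq, mul_inv]; field_simp
    have hu1 : 1 - u ≠ 0 := by
      intro h
      refine hxx i j hij (ν j - ν i) ?_
      have h' : x i / x j * (q : ℂ) ^ (ν i - ν j) = 1 := by rw [← huk]; linear_combination -h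
      rw [← neg_sub, zpow_neg]
      exact eq_inv_of_mul_eq_one_left h'
    have e1 : q * (x i * (q : ℂ) ^ ν i) * (x j * (q : ℂ) ^ ν j)⁻¹ = q * u := by rw [hu]; ring
    have e2 : q * (x j * (q : ℂ) ^ ν j) * (x i * (q : ℂ) ^ ν i)⁻¹ = q * u⁻¹ := by
      rw [hu, mul_inv (x i * _), inv_inv]; ring
    have e3 : th q u = (1 - u) * (qp q (q * u) * qp q (q * u⁻¹)) := by
      rw [th, qp_step hq0 hq1 u]; ring
    have e4 : x j * (q : ℂ) ^ ν j - x i * (q : ℂ) ^ ν i = x j * (q : ℂ) ^ ν j * (1 - u) := by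
      rw [hu, mul_sub, mul_one, mul_comm (x i * _), mul_inv_cancel_left₀ (hz j)]
    have hg := gs_ne_zero hq hu0 (ν i - ν j)
    have hqj : (q : ℂ) ^ ν j ≠ 0 := zpow_ne_zero _ hq
    have hxj := hx j
    rw [e1, e2, e4, th_shift hq0 hq1 hu0 (ν i - ν j), ← huk, e3]
    simp only [mul_inv]
    field_simp
  have h3 : (∏ i, ∏ j ∈ Ioi i, qp q (q * (x i * (q : ℂ) ^ ν i) * (x j * (q : ℂ) ^ ν j)⁻¹) *
      qp q (q * (x j * (q : ℂ) ^ ν j) * (x i * (q : ℂ) ^ ν i)⁻¹))⁻¹ =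
      (∏ i, ∏ j ∈ Ioi i, (gs q (x i / x j) (ν i - ν j) * ((q : ℂ) ^ ν j)⁻¹)) *
      (∏ i, ∏ j ∈ Ioi i, (x j * (q : ℂ) ^ ν j - x i * (q : ℂ) ^ ν i)) *
      (∏ i, ∏ j ∈ Ioi i, (th q (x i / x j) * x j))⁻¹ := by
    simp only [← prod_inv_distrib, ← prod_mul_distrib (s := univ)]
    refine prod_congr rfl fun i _ => ?_
    rw [← prod_mul_distrib, ← prod_mul_distrib]
    refine prod_congr rfl fun j hj => ?_
    exact h2 i j (mem_Ioi.1 hj).ne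
  have h4 := gs_identity hq hp hx ν
  rw [macTerm, div_eq_mul_inv, mul_inv, h1, h3, facK]
  simp only [rowW]
  rw [prod_mul_distrib (s := univ) (f := fun i => ∏ j, _) , ← h4, mul_inv]
  ring

/-- Summation over `ℤⁿ` of a product of functions of the single coordinates. -/
lemma tsum_pi_prod {n : ℕ} (f : Fin n → ℤ → ℂ) (hf : ∀ i, Summable (f i)) :
    (Summable fun ν : Fin n → ℤ => ‖∏ i, f i (ν i)‖) ∧
      ∑' ν : Fin n → ℤ, ∏ i, f i (ν i) = ∏ i, ∑' k, f i k := by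
  induction n with
  | zero => exact ⟨Summable.of_finite, by simp⟩
  | succ n ih =>
    obtain ⟨h1, h2⟩ := ih (fun i => f i.succ) fun i => hf _
    let e : ℤ × (Fin n → ℤ) ≃ (Fin (n + 1) → ℤ) := Fin.consEquiv fun _ => ℤ
    have he : ∀ y : ℤ × (Fin n → ℤ), ∏ i, f i (e y i) = f 0 y.1 * ∏ i : Fin n, f i.succ (y.2 i) := by
      intro y
      rw [Fin.prod_univ_succ]
      rfl
    constructor
    · rw [← e.summable_iff]
      refine ((hf 0).norm.mul_norm h1).congr fun y => ?_
      rw [Function.comp_apply, he]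
    · rw [← e.tsum_eq, Fin.prod_univ_succ, ← h2, tsum_mul_tsum_of_summable_norm (hf 0).norm h1]
      exact tsum_congr he

/-- The multiple sum as a determinant of one-variable sums. -/
lemma tsum_macTerm (hq0 : 0 < q) (hq1 : q < 1) {p t s : ℂ} {a b x : Fin n → ℂ} (hp : p ≠ 0)
    (hpt : t * ∏ i, b i = p) (hps : s * (∏ i, a i) * p = q) (hx : ∀ i, x i ≠ 0)
    (hxx : ∀ i j, i ≠ j → ∀ m : ℤ, x i / x j ≠ (q : ℂ) ^ m)
    (hc : PlusOK q p (fun j => (b j)⁻¹) x) (hd : MinusOK q p (fun j => (a j)⁻¹) x) :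
    ∑' ν : Fin n → ℤ, macTerm q t s a b x ν =
      facK q p x * momDet q p (fun j => (a j)⁻¹) (fun j => (b j)⁻¹) x := by
  simp_rw [macTerm_eq hq0 hq1 hp hpt hps hx hxx]
  rw [tsum_mul_left]
  congr 1
  set w := rowW (q : ℂ) p (fun j => (a j)⁻¹) (fun j => (b j)⁻¹) with hw
  have h1 : ∀ ν : Fin n → ℤ, (∏ i, ∏ j ∈ Ioi i, (x j * (q : ℂ) ^ ν j - x i * (q : ℂ) ^ ν i)) *
      ∏ i, w (x i) (ν i) = ∑ σ : Equiv.Perm (Fin n), ((σ.sign : ℤ) : ℂ) *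
        ∏ i, (w (x i) (ν i) * (x i * (q : ℂ) ^ ν i) ^ (σ i : ℕ)) := by
    intro ν
    rw [← Matrix.det_vandermonde (fun i => x i * (q : ℂ) ^ ν i), ← Matrix.det_transpose,
      Matrix.det_apply', sum_mul]
    refine sum_congr rfl fun σ _ => ?_
    simp only [Matrix.transpose_apply, Matrix.vandermonde_apply, prod_mul_distrib]
    ring
  have h2 : ∀ σ : Equiv.Perm (Fin n), _ := fun σ =>
    tsum_pi_prod (fun i k => w (x i) k * (x i * (q : ℂ) ^ k) ^ (σ i : ℕ))
      fun i => moment_summable hq0 hq1 hp hx hc hd i _ (σ i).2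
  simp_rw [h1]
  rw [Summable.tsum_finsetSum fun σ _ => (h2 σ).1.of_norm.mul_left _, momDet,
    ← Matrix.det_transpose, Matrix.det_apply']
  refine sum_congr rfl fun σ _ => ?_
  rw [tsum_mul_left, (h2 σ).2]
  rfl

end Factor

/-! ### Evaluation of the sum -/

section Evaluation

variable {q : ℝ} {n : ℕ}

/-- The multiple bilateral sum, without the prefactor `(1 - q)ⁿ`. -/
noncomputable def macSum (q t s : ℂ) (a b x : Fin n → ℂ) : ℂ :=
  ∑' ν : Fin n → ℤ, macTerm q t s a b x ν

/-- How the sum changes when `b` is replaced by `b'`, with `t ∏ b = t' ∏ b'` kept fixed. -/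
lemma macSum_compare (hq0 : 0 < q) (hq1 : q < 1) {p t t' s : ℂ} {a b b' x : Fin n → ℂ}
    (hp : p ≠ 0) (hpt : t * ∏ i, b i = p) (hpt' : t' * ∏ i, b' i = p)
    (hps : s * (∏ i, a i) * p = q) (hb : ∀ i, b i ≠ 0) (hb' : ∀ i, b' i ≠ 0) (hx : ∀ i, x i ≠ 0)
    (hxx : ∀ i j, i ≠ j → ∀ m : ℤ, x i / x j ≠ (q : ℂ) ^ m)
    (hc : PlusOK q p (fun j => (b j)⁻¹) x) (hc' : PlusOK q p (fun j => (b' j)⁻¹) x)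
    (hd : MinusOK q p (fun j => (a j)⁻¹) x) :
    macSum q t s a b x * qp q t * (∏ j, ∏ i, qp q (q * (a i)⁻¹ * (b' j)⁻¹)) =
      macSum q t' s a b' x * qp q t' * (∏ j, ∏ i, qp q (q * (a i)⁻¹ * (b j)⁻¹)) := by
  have e : p * ∏ i, (b i)⁻¹ = t := by
    rw [← hpt, prod_inv_distrib, mul_inv_cancel_right₀ (prod_ne_zero_iff.2 fun i _ => hb i)]
  have e' : p * ∏ i, (b' i)⁻¹ = t' := by
    rw [← hpt', prod_inv_distrib, mul_inv_cancel_right₀ (prod_ne_zero_iff.2 fun i _ => hb' i)]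
  have h := momDet_compare hq0 hq1 hp hx hc hc' hd
  rw [e, e'] at h
  rw [macSum, macSum, tsum_macTerm hq0 hq1 hp hpt hps hx hxx hc hd,
    tsum_macTerm hq0 hq1 hp hpt' hps hx hxx hc' hd]
  linear_combination facK (q : ℂ) p x * h

/-- The symmetry `x ↦ x⁻¹`, `ν ↦ -ν`, which exchanges `(a, s)` with `(b, t)`. -/
lemma macSum_symm (q t s : ℂ) (a b x : Fin n → ℂ) :
    macSum q t s a b x = macSum q s t b a fun i => (x i)⁻¹ := by
  rw [macSum, macSum, ← (Equiv.neg (Fin n → ℤ)).tsum_eq]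
  refine tsum_congr fun ν => ?_
  have hz : ∀ i, (x i)⁻¹ * q ^ ν i = (x i * q ^ (-ν i))⁻¹ := fun i => by
    rw [mul_inv, zpow_neg, inv_inv]
  simp only [macTerm, Equiv.neg_apply, Pi.neg_apply, hz, prod_inv_distrib, inv_inv]
  congr 1
  · exact prod_congr rfl fun i _ => prod_congr rfl fun j _ => mul_comm _ _
  · congr 1
    · exact mul_comm _ _
    · refine prod_congr rfl fun i _ => prod_congr rfl fun j _ => ?_
      rw [mul_comm]
      congr 2 <;> ring

/-- The sum is invariant under a common `q`-shift of the base point. -/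
lemma macSum_shift (hq0 : 0 < q) (t s : ℂ) (a b x : Fin n → ℂ) (M : ℤ) :
    macSum q t s a b (fun i => x i * (q : ℂ) ^ M) = macSum q t s a b x := by
  have hq : (q : ℂ) ≠ 0 := by exact_mod_cast hq0.ne'
  rw [macSum, macSum, ← (Equiv.addRight (fun _ : Fin n => M)).tsum_eq
    (fun ν => macTerm (q : ℂ) t s a b x ν)]
  refine tsum_congr fun ν => ?_
  have hz : ∀ i, x i * (q : ℂ) ^ M * (q : ℂ) ^ ν i = x i * (q : ℂ) ^ (ν i + M) := fun i => by
    rw [zpow_add₀ hq]; ring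
  simp only [macTerm, Equiv.coe_addRight, Pi.add_apply, hz]

/-- For `a = x` and `b = x⁻¹` only the term `ν = 0` survives. -/
lemma macSum_base (hq0 : 0 < q) (hq1 : q < 1) {x : Fin n → ℂ} (hx : ∀ i, x i ≠ 0)
    (hxx : ∀ i j, i ≠ j → ∀ m : ℤ, x i / x j ≠ (q : ℂ) ^ m) {Y : ℂ}
    (hY1 : qp q Y ≠ 0) (hY2 : qp q (q / Y) ≠ 0) :
    macSum q Y (q / Y) x (fun i => (x i)⁻¹) x * (qp q Y * qp q (q / Y)) =
      qp q q ^ n * ∏ j, ∏ i, qp q (q * (x i)⁻¹ * x j) := by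
  have hq : (q : ℂ) ≠ 0 := by exact_mod_cast hq0.ne'
  have hX : ∏ i, x i ≠ 0 := prod_ne_zero_iff.2 fun i _ => hx i
  have h0 : ∀ ν : Fin n → ℤ, ν ≠ 0 →
      macTerm q Y (q / Y) x (fun i => (x i)⁻¹) x ν = 0 := by
    intro ν hν
    obtain ⟨i, hi⟩ := Function.ne_iff.1 hν
    have hi : ν i ≠ 0 := hi
    rw [macTerm, prod_eq_zero (mem_univ i), zero_div]
    refine prod_eq_zero (mem_univ i) ?_
    have hxi := hx i
    have e1 : (q : ℂ) * (x i)⁻¹ * (x i * (q : ℂ) ^ ν i) = (q : ℂ) ^ (ν i + 1) := by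
      rw [zpow_add_one₀ hq]; field_simp
    have e2 : (q : ℂ) * ((x i)⁻¹)⁻¹ * (x i * (q : ℂ) ^ ν i)⁻¹ = (q : ℂ) ^ (-ν i + 1) := by
      rw [zpow_add_one₀ hq, zpow_neg, inv_inv, mul_inv]; field_simp
    rw [e1, e2]
    rcases lt_or_gt_of_ne hi with h | h
    · rw [qp_zpow_eq_zero hq0 hq1 (by omega), zero_mul]
    · rw [qp_zpow_eq_zero hq0 hq1 (l := -ν i + 1) (by omega), mul_zero]
  rw [macSum, tsum_eq_single 0 h0, macTerm]
  simp only [Pi.zero_apply, zpow_zero, mul_one, inv_inv, prod_inv_distrib]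
  rw [mul_inv_cancel_right₀ hX, inv_mul_cancel_right₀ hX]
  set f : Fin n → Fin n → ℂ := fun i j => qp q (q * (x i)⁻¹ * x j) with hf
  have hD : ∏ i, ∏ j ∈ Ioi i, (qp q (q * x i * (x j)⁻¹) * qp q (q * x j * (x i)⁻¹)) =
      ∏ i, ∏ j ∈ {i}ᶜ, f j i := by
    rw [← prod_prod_Ioi_mul_eq_prod_prod_off_diag f]
    refine prod_congr rfl fun i _ => prod_congr rfl fun j _ => ?_
    simp only [hf]
    congr 2 <;> ring
  have hN : ∏ i, ∏ j, (qp q (q * (x j)⁻¹ * x i) * qp q (q * x j * (x i)⁻¹)) =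
      (∏ i, ∏ j, f j i) * ∏ i, ∏ j, f j i := by
    simp only [prod_mul_distrib]
    congr 1
    rw [Finset.prod_comm]
    refine prod_congr rfl fun i _ => prod_congr rfl fun j _ => ?_
    simp only [hf]
    congr 1; ring
  have hP : ∏ i, ∏ j, f j i = qp q q ^ n * ∏ i, ∏ j ∈ {i}ᶜ, f j i := by
    have : ∀ i, f i i = qp q q := fun i => by
      simp only [hf]; rw [inv_mul_cancel_right₀ (hx i)]
    rw [prod_congr rfl fun i _ => Fintype.prod_eq_mul_prod_compl i fun j => f j i]
    simp [prod_mul_distrib, this]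
  have hD0 : ∏ i, ∏ j ∈ {i}ᶜ, f j i ≠ 0 := by
    refine prod_ne_zero_iff.2 fun i _ => prod_ne_zero_iff.2 fun j hj => ?_
    refine qp_ne_zero hq0 hq1 fun k hk => ?_
    refine hxx i j (by simpa [eq_comm] using hj) (-(k + 1 : ℤ)) ?_
    rw [zpow_neg, zpow_add_one₀ hq, zpow_natCast]
    refine eq_inv_of_mul_eq_one_left ?_
    rw [← hk]; ring
  rw [hD, hN, hP]
  field_simp

lemma plusOK_of_norm_lt {p t : ℂ} {b : Fin n → ℂ} (x : Fin n → ℂ) (hpt : t * ∏ i, b i = p)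
    (hb : ∀ i, b i ≠ 0) (ht : ‖t‖ < 1) : PlusOK q p (fun j => (b j)⁻¹) x := by
  left
  rw [← norm_prod, ← norm_mul, ← hpt, prod_inv_distrib,
    mul_inv_cancel_right₀ (prod_ne_zero_iff.2 fun i _ => hb i)]
  exact ht

lemma minusOK_of_norm_lt (hq0 : 0 < q) {p s : ℂ} {a : Fin n → ℂ} (x : Fin n → ℂ) (hp : p ≠ 0)
    (hps : s * (∏ i, a i) * p = q) (ha : ∀ i, a i ≠ 0) (hs : ‖s‖ < 1) :
    MinusOK q p (fun j => (a j)⁻¹) x := by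
  left
  have hA : ∏ i, a i ≠ 0 := prod_ne_zero_iff.2 fun i _ => ha i
  have h : (q : ℂ) * ∏ i, (a i)⁻¹ = s * p := by
    rw [← hps, prod_inv_distrib]; field_simp
  have h' := congrArg norm h
  rw [norm_mul, norm_mul, Complex.norm_real, Real.norm_of_nonneg hq0.le, norm_prod] at h'
  rw [h']
  exact mul_lt_of_lt_one_left (norm_pos_iff.2 hp) hs

/-- The evaluation for a base point with `(q/(x_i b_j))_∞ ≠ 0`: pass from `(a, b)` to `(x, b)` and
from there to the terminating case `(x, x⁻¹)`. -/
lemma macSum_eval (hq0 : 0 < q) (hq1 : q < 1)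
    {a b : Fin n → ℂ} (ha : ∀ i, a i ≠ 0) (hb : ∀ i, b i ≠ 0)
    {t s : ℂ} (ht0 : t ≠ 0) (hs0 : s ≠ 0)
    (hbal : (∏ i, a i) * (∏ i, b i) * t * s = (q : ℂ))
    (ht1 : ‖t‖ < 1) (hs1 : ‖s‖ < 1)
    {x : Fin n → ℂ} (hx : ∀ i, x i ≠ 0)
    (hxx : ∀ i j, i ≠ j → ∀ m : ℤ, x i / x j ≠ (q : ℂ) ^ m)
    (htx : ∀ m : ℤ, t * (∏ i, b i) * ∏ i, x i ≠ (q : ℂ) ^ m)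
    (hbx : ∀ i j, qp q (q * (x i)⁻¹ * (b j)⁻¹) ≠ 0) :
    macSum q t s a b x * (qp q t * qp q s) =
      qp q q ^ n * ∏ i, ∏ j, qp q (q * (a i)⁻¹ * (b j)⁻¹) := by
  have hq : (q : ℂ) ≠ 0 := by exact_mod_cast hq0.ne'
  have hX : ∏ i, x i ≠ 0 := prod_ne_zero_iff.2 fun i _ => hx i
  have hA : ∏ i, a i ≠ 0 := prod_ne_zero_iff.2 fun i _ => ha i
  have hB : ∏ i, b i ≠ 0 := prod_ne_zero_iff.2 fun i _ => hb i
  obtain ⟨p, hpt⟩ : ∃ p, t * ∏ i, b i = p := ⟨_, rfl⟩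
  have hp : p ≠ 0 := hpt ▸ mul_ne_zero ht0 hB
  obtain ⟨Y, hY⟩ : ∃ Y, p * ∏ i, x i = Y := ⟨_, rfl⟩
  have hY0 : Y ≠ 0 := hY ▸ mul_ne_zero hp hX
  rw [hpt, hY] at htx
  have hps : s * (∏ i, a i) * p = q := by rw [← hpt, ← hbal]; ring
  have hY1 : qp q Y ≠ 0 := qp_ne_zero hq0 hq1 fun k hk => htx (-k) (by
    rw [zpow_neg, zpow_natCast]; exact eq_inv_of_mul_eq_one_right hk)
  have hY2 : qp q (q / Y) ≠ 0 := qp_ne_zero hq0 hq1 fun k hk => htx (k + 1) (by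
    rw [zpow_add_one₀ hq, zpow_natCast]; field_simp at hk; exact hk.symm)
  have hfin : ∏ j, ∏ i, qp q (q * (x i)⁻¹ * x j) ≠ 0 := by
    refine prod_ne_zero_iff.2 fun j _ => prod_ne_zero_iff.2 fun i _ => ?_
    by_cases hij : i = j
    · rw [hij, inv_mul_cancel_right₀ (hx j)]
      exact qp_ne_zero_of_norm_lt hq0 hq1 (by simpa [abs_of_pos hq0] using hq1)
    · refine qp_ne_zero hq0 hq1 fun k hk => hxx j i (Ne.symm hij) (-(k + 1 : ℤ)) ?_
      rw [zpow_neg, zpow_add_one₀ hq, zpow_natCast]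
      refine eq_inv_of_mul_eq_one_left ?_
      rw [← hk]; ring
  -- Replace `b` by `x⁻¹` while the first parameter is `x`.
  have h1 := macSum_compare hq0 hq1 (a := x) (b := b) (b' := fun i => (x i)⁻¹) (x := x)
    (t := t) (t' := Y) (s := q / Y) hp hpt
    (by rw [prod_inv_distrib, ← hY, mul_inv_cancel_right₀ hX])
    (by rw [← hY]; field_simp) hb (fun i => inv_ne_zero (hx i)) hx hxx
    (plusOK_of_norm_lt x hpt hb ht1) (Or.inr fun i => ⟨i, 0, by simp⟩)
    (Or.inr fun i => ⟨i, 0, by simp [hx i]⟩)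
  -- Replace `a` by `x`, which after the symmetry is again a change of the second parameter.
  have hp2 : s * ∏ i, a i ≠ 0 := mul_ne_zero hs0 hA
  have h2 := macSum_compare hq0 hq1 (a := b) (b := a) (b' := x) (x := fun i => (x i)⁻¹)
    (t := s) (t' := q / Y) (s := t) hp2 rfl
    (by rw [← hY, ← hps]; field_simp)
    (by rw [hpt, ← hps]; ring) ha hx (fun i => inv_ne_zero (hx i))
    (fun i j hij m => by rw [inv_div_inv]; exact hxx j i hij.symm m)
    (plusOK_of_norm_lt _ rfl ha hs1) (Or.inr fun i => ⟨i, 0, by simp⟩)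
    (minusOK_of_norm_lt hq0 _ hp2 (by rw [hpt, ← hps]; ring) hb ht1)
  rw [← macSum_symm, ← macSum_symm] at h2
  have h3 := macSum_base hq0 hq1 hx hxx hY1 hY2
  simp only [inv_inv] at h1
  have e1 : ∏ j, ∏ i, qp q (q * (b i)⁻¹ * (x j)⁻¹) = ∏ j, ∏ i, qp q (q * (x i)⁻¹ * (b j)⁻¹) := by
    rw [Finset.prod_comm]
    refine prod_congr rfl fun i _ => prod_congr rfl fun j _ => ?_
    rw [mul_right_comm]
  have e2 : ∏ j, ∏ i, qp q (q * (b i)⁻¹ * (a j)⁻¹) = ∏ i, ∏ j, qp q (q * (a i)⁻¹ * (b j)⁻¹) :=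
    prod_congr rfl fun i _ => prod_congr rfl fun j _ => by rw [mul_right_comm]
  rw [e1, e2] at h2
  have hG : ∏ j, ∏ i, qp q (q * (x i)⁻¹ * (b j)⁻¹) ≠ 0 :=
    prod_ne_zero_iff.2 fun j _ => prod_ne_zero_iff.2 fun i _ => hbx i j
  generalize ∏ j, ∏ i, qp q (q * (x i)⁻¹ * (b j)⁻¹) = G at h1 h2 hG
  generalize ∏ j, ∏ i, qp q (q * (x i)⁻¹ * x j) = F at h1 h3 hfin
  generalize ∏ i, ∏ j, qp q (q * (a i)⁻¹ * (b j)⁻¹) = H at h2 ⊢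
  refine mul_right_cancel₀ (mul_ne_zero hG hfin) ?_
  linear_combination qp q t * F * h2 + H * qp q (q / Y) * h1 + H * G * h3

end Evaluation

/-- The Macdonald-type bilateral sum evaluates to an `x`-independent constant. -/
theorem macdonald_type_sum
    (q : ℝ) (hq0 : 0 < q) (hq1 : q < 1) (n : ℕ) (hn : 1 ≤ n)
    (a b : Fin n → ℂ) (ha : ∀ i, a i ≠ 0) (hb : ∀ i, b i ≠ 0)
    (t s : ℂ) (ht0 : t ≠ 0) (hs0 : s ≠ 0)
    (hbal : (∏ i, a i) * (∏ i, b i) * t * s = (q : ℂ))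
    (ht1 : ‖t‖ < 1) (hs1 : ‖s‖ < 1)
    (x : Fin n → ℂ) (hx : ∀ i, x i ≠ 0)
    (hxx : ∀ i j, i ≠ j → ∀ m : ℤ, x i / x j ≠ (q : ℂ) ^ m)
    (htx : ∀ m : ℤ, t * (∏ i, b i) * ∏ i, x i ≠ (q : ℂ) ^ m) :
    (1 - (q : ℂ)) ^ n * ∑' ν : Fin n → ℤ, macTerm (q : ℂ) t s a b x ν =
      (1 - (q : ℂ)) ^ n * qp (q : ℂ) (q : ℂ) ^ n *
        (∏ i, ∏ j, qp (q : ℂ) ((q : ℂ) * (a i)⁻¹ * (b j)⁻¹)) /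
        (qp (q : ℂ) t * qp (q : ℂ) s) := by
  have hq : (q : ℂ) ≠ 0 := by exact_mod_cast hq0.ne'
  have hqn : ‖(q : ℂ)‖ < 1 := by simpa [abs_of_pos hq0] using hq1
  -- Far enough out, all `q/(x_i b_j)` lie in the unit disc.
  obtain ⟨L, hL⟩ : ∃ L : ℕ, ∀ i j, ‖(q : ℂ) ^ L * (q * (x i)⁻¹ * (b j)⁻¹)‖ < 1 := by
    have h : ∀ i j, ∀ᶠ L : ℕ in atTop, ‖(q : ℂ) ^ L * (q * (x i)⁻¹ * (b j)⁻¹)‖ < 1 := by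
      intro i j
      have := ((tendsto_pow_atTop_nhds_zero_of_norm_lt_one hqn).mul_const
        (q * (x i)⁻¹ * (b j)⁻¹)).norm
      rw [zero_mul, norm_zero] at this
      exact this.eventually_lt_const one_pos
    exact (eventually_all.2 fun i => eventually_all.2 (h i)).exists
  have hM : (q : ℂ) ^ (-(L : ℤ)) ≠ 0 := zpow_ne_zero _ hq
  have h := macSum_eval hq0 hq1 ha hb ht0 hs0 hbal ht1 hs1
    (x := fun i => x i * (q : ℂ) ^ (-(L : ℤ))) (fun i => mul_ne_zero (hx i) hM)
    (fun i j hij m => by rw [mul_div_mul_right _ _ hM]; exact hxx i j hij m)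
    (fun m hm => htx (m + L * n) (by
      rw [prod_mul_distrib, prod_const, card_univ, Fintype.card_fin, ← zpow_natCast,
        ← zpow_mul, ← mul_assoc] at hm
      rw [zpow_add₀ hq, ← hm, mul_assoc _ _ ((q : ℂ) ^ (L * n : ℤ)), ← zpow_add₀ hq]
      simp))
    (fun i j => qp_ne_zero_of_norm_lt hq0 hq1 (by
      refine lt_of_eq_of_lt (congrArg norm ?_) (hL i j)
      rw [mul_inv, zpow_neg, inv_inv, zpow_natCast]; ring))
  rw [macSum_shift hq0, macSum] at h
  have hts := mul_ne_zero (qp_ne_zero_of_norm_lt hq0 hq1 ht1) (qp_ne_zero_of_norm_lt hq0 hq1 hs1)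
  rw [eq_div_iff hts, mul_assoc, h, mul_assoc]
end

section
/- Suppose |a_i| < 1 and |b_i| < 1 for all 1 ≤ i ≤ n, and t, s ∈ ℂ^* satisfy a_1⋯a_n b_1⋯b_n · t · s = q. Then (1/n!) (2π)^{−n} ∫_{[0,2π]ⁿ} F(e^{iθ_1},…,e^{iθ_n}) dθ_1⋯dθ_n = (q t⁻¹)_∞ (q s⁻¹)_∞ / [ (q)_∞ⁿ · ∏_{i=1}^n ∏_{j=1}^n (a_i b_j)_∞ ], where F(z_1,…,z_n) := (t a_1⋯a_n z_1⁻¹⋯z_n⁻¹)_∞ (s b_1⋯b_n z_1⋯z_n)_∞ / [ ∏_{i=1}^n ∏_{j=1}^n (a_i z_j⁻¹)_∞ (b_i z_j)_∞ ] · ∏_{1≤i<j≤n} (z_i/z_j)_∞ (z_j/z_i)_∞. (Contour-integral corollary over the n-torus of the Macdonald-type sum, with t = q^α, s = q^β.) -/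
/-!
Put `u = t a₁⋯aₙ`, `A = a₁⋯aₙ`, `B = b₁⋯bₙ`. By the balancing condition the numerator of the
integrand is `θ(u / (z₁⋯zₙ))` with `θ(x) = (x)_∞ (q/x)_∞`, so the integral is a function
`J(a, b, u)`, and the claim is
`J(a, b, u) ∏ (aᵢ bⱼ)_∞ = n! (2π)ⁿ (qA/u)_∞ (uB)_∞ / (q)_∞ⁿ`.

*Dependence on the parameters.* Replace in the integrand the parameters `a` and the interaction
factors `(zₖ/x)_∞` of one distinguished variable `x` by their `q`-multiples (`Gam`), and move the
contour of `x` from radius `1` to radius `q`, which crosses no pole. Summing over the choice of the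
variable, both sides become multiples of the original integrands by a partial fraction identity
(`lagrange_sum_eq`); the result is the first-order q-difference equation `J_qdiff` in `u`. Lagrange
interpolation of `∏ⱼ (1 - aᵢ/zⱼ)` at the nodes `b` expresses the integral with `aᵢ` replaced by
`q aᵢ` through integrals with one `bⱼ` replaced by `q bⱼ` (`J_interpolation`), and eliminating the
latter with the q-difference equations gives the contiguous relation `J_step`. Iterating it moves
`aᵢ` to `0`; the substitution `z ↦ z⁻¹` (`J_swap`) treats `b` in the same way. This yields `J_eq`:
`J(a, b, u) ∏ (aᵢ bⱼ)_∞ = (qA/u)_∞ (uB)_∞ J(0, 0, u)`.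

*The constant.* For `a = b = (r, 0, …, 0)` and `r → 1` the contours are pinched at `zⱼ = 1`.
Expanding both Vandermonde factors of `∏_{i≠j} (1 - zᵢ/zⱼ)` (`Phi_sing`) writes
`1 - r²` times the integrand as a double sum: the diagonal terms carry the Poisson kernel in `zⱼ` and
tend to `2π` times an integral in `n - 1` variables, the others are bounded by products of two
square roots of Poisson kernels and tend to `0` (`tendsto_pinch`). Comparing with `J_eq` gives a
recursion in `n` (`J_zero_step`), whence `J(0, 0, u) = n! (2π)ⁿ / (q)_∞ⁿ` (`J_zero`). In the step to
`n = 1` both sides carry the factor `θ(u)`; where it vanishes, `u` is replaced by `-u`.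
-/

open scoped BigOperators
open Finset MeasureTheory

/-- Integrand of the contour integral over the `n`-torus. -/
noncomputable def torusKer {n : ℕ} (q t s : ℂ) (a b : Fin n → ℂ) (z : Fin n → ℂ) : ℂ :=
  qp q (t * (∏ i, a i) * (∏ i, z i)⁻¹) * qp q (s * (∏ i, b i) * ∏ i, z i) /
      (∏ i, ∏ j, qp q (a i * (z j)⁻¹) * qp q (b i * z j)) *
    ∏ i, ∏ j ∈ Finset.Ioi i, qp q (z i / z j) * qp q (z j / z i)

namespace TorusEval

open Filter Topology

/-! ### The infinite q-Pochhammer symbol -/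

section qp

variable {q : ℝ}

lemma norm_lt_one_of_mem (hq : q ∈ Set.Ioo (0 : ℝ) 1) : ‖(q : ℂ)‖ < 1 := by
  rw [Complex.norm_real, Real.norm_of_nonneg hq.1.le]; exact hq.2

lemma summable_norm_qp (hq : q ∈ Set.Ioo (0 : ℝ) 1) (x : ℂ) :
    Summable fun i : ℕ => ‖-((q : ℂ) ^ i * x)‖ := by
  simp only [norm_neg, norm_mul, norm_pow]
  exact (summable_geometric_of_lt_one (norm_nonneg _) (norm_lt_one_of_mem hq)).mul_right _

lemma multipliable_qp (hq : q ∈ Set.Ioo (0 : ℝ) 1) (x : ℂ) :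
    Multipliable fun i : ℕ => 1 - (q : ℂ) ^ i * x := by
  simpa [sub_eq_add_neg] using multipliable_one_add_of_summable (summable_norm_qp hq x)

lemma qp_step (hq : q ∈ Set.Ioo (0 : ℝ) 1) (x : ℂ) :
    qp q x = (1 - x) * qp q (q * x) := by
  have h := (multipliable_qp hq (q * x))
  unfold qp
  rw [tprod_eq_zero_mul' (f := fun i : ℕ => 1 - (q : ℂ) ^ i * x)]
  · simp only [pow_zero, one_mul, pow_succ, mul_assoc]
  · simpa only [pow_succ, mul_assoc] using h

lemma qp_zero : qp q 0 = 1 := by simp [qp]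

lemma qp_one (hq : q ∈ Set.Ioo (0 : ℝ) 1) : qp q 1 = 0 := by
  rw [qp_step hq]; simp

lemma tendsto_qp (hq : q ∈ Set.Ioo (0 : ℝ) 1) (x : ℂ) :
    Tendsto (fun m => ∏ i ∈ Finset.range m, (1 - (q : ℂ) ^ i * x)) atTop (𝓝 (qp q x)) :=
  (multipliable_qp hq x).hasProd.tendsto_prod_nat

lemma qp_ne_zero_of_forall (hq : q ∈ Set.Ioo (0 : ℝ) 1) {x : ℂ}
    (hx : ∀ i : ℕ, (q : ℂ) ^ i * x ≠ 1) : qp q x ≠ 0 := by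
  have := tprod_one_add_ne_zero_of_summable (f := fun i : ℕ => -((q : ℂ) ^ i * x))
    (fun i => by rw [← sub_eq_add_neg]; exact sub_ne_zero.2 (hx i).symm) (summable_norm_qp hq x)
  simpa [qp, sub_eq_add_neg] using this

lemma qp_ne_zero (hq : q ∈ Set.Ioo (0 : ℝ) 1) {x : ℂ} (hx : ‖x‖ < 1) : qp q x ≠ 0 := by
  refine qp_ne_zero_of_forall hq fun i h => ?_
  have h1 : ‖(q : ℂ) ^ i * x‖ < 1 := by
    rw [norm_mul, norm_pow]
    calc _ ≤ 1 * ‖x‖ := by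
          gcongr; exact pow_le_one₀ (norm_nonneg _) (norm_lt_one_of_mem hq).le
      _ < 1 := by simpa using hx
  rw [h] at h1; simp at h1

lemma differentiable_qp (hq : q ∈ Set.Ioo (0 : ℝ) 1) : Differentiable ℂ (qp q) := by
  intro x
  have hO : IsOpen (Metric.ball (0 : ℂ) (‖x‖ + 1)) := Metric.isOpen_ball
  have h := Summable.hasProdLocallyUniformlyOn_nat_one_add (K := Metric.ball (0 : ℂ) (‖x‖ + 1))
    (f := fun (i : ℕ) y => -((q : ℂ) ^ i * y)) hO
    (u := fun i => ‖(q : ℂ)‖ ^ i * (‖x‖ + 1))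
    ((summable_geometric_of_lt_one (norm_nonneg _) (norm_lt_one_of_mem hq)).mul_right _)
    (Eventually.of_forall fun i y hy => by
      rw [norm_neg, norm_mul, norm_pow]
      have : ‖y‖ < ‖x‖ + 1 := by simpa using hy
      gcongr)
    (fun i => by fun_prop)
  have hd : DifferentiableOn ℂ (qp q) (Metric.ball (0 : ℂ) (‖x‖ + 1)) := by
    have := h.tendstoLocallyUniformlyOn_finsetRange.differentiableOn
      (Eventually.of_forall fun m => by fun_prop) hO
    refine this.congr fun y _ => ?_
    simp [qp, sub_eq_add_neg]
  exact (hd x (by simp)).differentiableAt (hO.mem_nhds (by simp))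

lemma continuous_qp (hq : q ∈ Set.Ioo (0 : ℝ) 1) : Continuous (qp q) :=
  (differentiable_qp hq).continuous

end qp

/-! ### Integration over the torus -/

section torus

/-- The Borel structure on the unit circle. -/
noncomputable instance instMeasurableSpaceCircle : MeasurableSpace Circle := borel Circle

instance instBorelSpaceCircle : BorelSpace Circle := ⟨rfl⟩

/-- Arc length on the unit circle, of total mass `2π`. -/
noncomputable def arc : Measure Circle :=
  (volume.restrict (Set.Icc (0 : ℝ) (2 * Real.pi))).map Circle.exp

instance instIsFiniteMeasureArc : IsFiniteMeasure arc := by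
  unfold arc; infer_instance

/-- The product of the arc length measures on the `n`-torus, of total mass `(2π)ⁿ`. -/
noncomputable def tor (n : ℕ) : Measure (Fin n → Circle) := Measure.pi fun _ => arc

instance instIsFiniteMeasureTor (n : ℕ) : IsFiniteMeasure (tor n) := by
  unfold tor; infer_instance

lemma integral_arc {f : Circle → ℂ} (hf : Continuous f) :
    ∫ x, f x ∂arc = ∫ θ in (0 : ℝ)..(2 * Real.pi), f (Circle.exp θ) := by
  unfold arc
  rw [integral_map (by fun_prop) hf.aestronglyMeasurable,
    intervalIntegral.integral_of_le Real.two_pi_pos.le, integral_Icc_eq_integral_Ioc]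

lemma integrable_of_continuous {n : ℕ} {f : (Fin n → Circle) → ℂ} (hf : Continuous f) :
    Integrable f (tor n) :=
  hf.integrable_of_hasCompactSupport (HasCompactSupport.of_compactSpace f)

lemma integrable_arc_of_continuous {f : Circle → ℂ} (hf : Continuous f) :
    Integrable f arc :=
  hf.integrable_of_hasCompactSupport (HasCompactSupport.of_compactSpace f)

/-- Contour shift from radius `1` to radius `q`. -/
lemma arc_shift {q : ℝ} (hq : q ∈ Set.Ioo (0 : ℝ) 1) {f : ℂ → ℂ}
    (hf : ∀ x : ℂ, q ≤ ‖x‖ → ‖x‖ ≤ 1 → DifferentiableAt ℂ f x) :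
    ∫ x : Circle, f x ∂arc = ∫ x : Circle, f (q * x) ∂arc := by
  have hn : ∀ x : Circle, ‖(q : ℂ) * x‖ = q := fun x => by
    simp [abs_of_pos hq.1, Circle.norm_coe]
  have h1 : Continuous fun x : Circle => f x := continuous_iff_continuousAt.2 fun x =>
    ContinuousAt.comp (f := fun x : Circle => (x : ℂ)) (g := f)
      (hf x ((Circle.norm_coe x).symm ▸ hq.2.le) (Circle.norm_coe x).le).continuousAt
      (by fun_prop)
  have h2 : Continuous fun x : Circle => f (q * x) := continuous_iff_continuousAt.2 fun x =>
    ContinuousAt.comp (f := fun x : Circle => (q : ℂ) * x) (g := f)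
      (hf _ (hn x).ge ((hn x).le.trans hq.2.le)).continuousAt (by fun_prop)
  rw [integral_arc h1, integral_arc h2]
  have key := Complex.circleIntegral_sub_center_inv_smul_eq_of_differentiable_on_annulus_off_countable
    (c := 0) hq.1 hq.2.le (f := f) Set.countable_empty
    (fun x hx => (hf x (by simpa using hx.2) (by simpa using hx.1)).continuousAt.continuousWithinAt)
    (fun x hx => hf x (by simpa using (not_le.1 (by simpa using hx.1.2) : q < ‖x‖).le)
      (by simpa using (by simpa using hx.1.1 : ‖x‖ < 1).le))
  simp only [circleIntegral, deriv_circleMap, circleMap_zero, sub_zero, smul_eq_mul] at key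
  have e : ∀ R : ℝ, R ≠ 0 → (∫ θ in (0 : ℝ)..(2 * Real.pi),
      (R : ℂ) * Complex.exp (θ * Complex.I) * Complex.I *
        (((R : ℂ) * Complex.exp (θ * Complex.I))⁻¹ * f (R * Complex.exp (θ * Complex.I)))) =
      Complex.I * ∫ θ in (0 : ℝ)..(2 * Real.pi), f (R * Complex.exp (θ * Complex.I)) := by
    intro R hR
    rw [← intervalIntegral.integral_const_mul]
    congr 1; ext θ
    have : (R : ℂ) ≠ 0 := by exact_mod_cast hR
    have := Complex.exp_ne_zero (θ * Complex.I)
    field_simp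
  rw [e 1 one_ne_zero, e q hq.1.ne'] at key
  have := mul_left_cancel₀ Complex.I_ne_zero key
  simpa [Circle.coe_exp] using this

lemma measurePreserving_inv_arc : MeasurePreserving (fun x : Circle => x⁻¹) arc arc := by
  refine ⟨by fun_prop, ?_⟩
  have h := ((Measure.measurePreserving_sub_left (volume : Measure ℝ) (2 * Real.pi)).restrict_preimage
    (s := Set.Icc 0 (2 * Real.pi)) measurableSet_Icc)
  rw [Set.preimage_const_sub_Icc, sub_self, sub_zero] at h
  unfold arc
  rw [Measure.map_map (by fun_prop) (by fun_prop)]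
  conv_rhs => rw [← h.map_eq, Measure.map_map (by fun_prop) (by fun_prop)]
  congr 1
  ext θ
  simp [Circle.exp_sub]

lemma integral_tor_inv {n : ℕ} (f : (Fin n → Circle) → ℂ) :
    ∫ z, f (fun i => (z i)⁻¹) ∂(tor n) = ∫ z, f z ∂(tor n) := by
  have h := measurePreserving_pi (fun _ : Fin n => arc) (fun _ => arc)
    (f := fun _ x => x⁻¹) (fun _ => measurePreserving_inv_arc)
  exact h.integral_comp (MeasurableEquiv.inv (Fin n → Circle)).measurableEmbedding f

/-- Invariance of arc length under the rotation by `-1`. -/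
lemma integral_arc_neg {f : ℂ → ℂ} (hf : ContinuousOn f {0}ᶜ) :
    ∫ x : Circle, f (-x) ∂arc = ∫ x : Circle, f x ∂arc := by
  have h1 : Continuous fun x : Circle => f x :=
    hf.comp_continuous (by fun_prop) (fun x => by simp)
  have h2 : Continuous fun x : Circle => f (-x) :=
    hf.comp_continuous (f := fun x : Circle => -(x : ℂ)) (by fun_prop) (fun x => by simp)
  rw [integral_arc h1, integral_arc h2]
  have hp : Function.Periodic (fun θ : ℝ => f (Circle.exp θ)) (2 * Real.pi) := fun θ => by simp
  have := hp.intervalIntegral_add_eq Real.pi 0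
  rw [zero_add, add_comm Real.pi] at this
  rw [← this]
  have h3 := intervalIntegral.integral_comp_add_right (a := 0) (b := 2 * Real.pi)
    (fun θ : ℝ => f (Circle.exp θ)) Real.pi
  rw [zero_add] at h3
  rw [← h3]
  congr 1; ext θ
  simp [Circle.exp_add, Circle.coe_exp]

lemma continuous_insertNth {n : ℕ} (j : Fin (n + 1)) :
    Continuous fun p : Circle × (Fin n → Circle) => (j.insertNth p.1 p.2 : Fin (n + 1) → Circle) :=
  Continuous.finInsertNth j continuous_fst continuous_snd

/-- Fubini for the torus, with the `j`-th coordinate integrated first. -/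
lemma integral_tor_succ {n : ℕ} (j : Fin (n + 1)) {f : (Fin (n + 1) → Circle) → ℂ}
    (hf : Continuous f) :
    ∫ z, f z ∂(tor (n + 1)) = ∫ z, ∫ x, f (j.insertNth x z) ∂arc ∂(tor n) := by
  have h := (measurePreserving_piFinSuccAbove (fun _ : Fin (n + 1) => arc) j).symm
  rw [tor, ← h.integral_comp (MeasurableEquiv.measurableEmbedding _) f]
  have hc : Continuous fun p : Circle × (Fin n → Circle) =>
      f (j.insertNth p.1 p.2 : Fin (n + 1) → Circle) := hf.comp (continuous_insertNth j)
  exact integral_prod_symm (μ := arc) (ν := tor n)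
    (fun p : Circle × (Fin n → Circle) => f (j.insertNth p.1 p.2 : Fin (n + 1) → Circle))
    (hc.integrable_of_hasCompactSupport (HasCompactSupport.of_compactSpace _))

end torus

/-! ### The integrand -/

section integrand

variable {q : ℝ} {m n : ℕ}

/-- The theta function `θ(x) = (x)_∞ (q/x)_∞`. -/
noncomputable def th (q : ℝ) (x : ℂ) : ℂ := qp q x * qp q (q / x)

/-- The weight `∏ᵢ 1 / ((aᵢ/x)_∞ (bᵢ x)_∞)` of a single variable. -/
noncomputable def wt (q : ℝ) (a b : Fin m → ℂ) (x : ℂ) : ℂ :=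
  ∏ i, (qp q (a i / x) * qp q (b i * x))⁻¹

/-- The interaction term `∏_{i ≠ j} (zᵢ/zⱼ)_∞`. -/
noncomputable def dl (q : ℝ) (z : Fin n → ℂ) : ℂ :=
  ∏ i, ∏ j, if i = j then 1 else qp q (z i / z j)

/-- The integrand in the variable `u = t a₁⋯aₙ`: by the balancing condition
`s b₁⋯bₙ = q / u`, so the two numerator factors combine to `θ(u / (z₁⋯zₙ))`. -/
noncomputable def Phi (q : ℝ) (u : ℂ) (a b : Fin m → ℂ) (z : Fin n → ℂ) : ℂ :=
  th q (u / ∏ i, z i) * (∏ j, wt q a b (z j)) * dl q z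

/-- The torus integral of `Phi`, without normalization. -/
noncomputable def J (q : ℝ) (n : ℕ) (a b : Fin m → ℂ) (u : ℂ) : ℂ :=
  ∫ z : Fin n → Circle, Phi q u a b (fun i => (z i : ℂ)) ∂(tor n)

lemma th_shift (hq : q ∈ Set.Ioo (0 : ℝ) 1) {x : ℂ} (hx : x ≠ 0) :
    th q (q * x) = -(x⁻¹ * th q x) := by
  have hq0 : (q : ℂ) ≠ 0 := by exact_mod_cast hq.1.ne'
  unfold th
  rw [show (q : ℂ) / (q * x) = x⁻¹ by field_simp, qp_step hq x, qp_step hq x⁻¹,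
    show (q : ℂ) * x⁻¹ = q / x from rfl]
  field_simp
  ring

lemma dl_insertNth (j : Fin (n + 1)) (x : ℂ) (z : Fin n → ℂ) :
    dl q (j.insertNth x z : Fin (n + 1) → ℂ) =
      (∏ k, qp q (x / z k) * qp q (z k / x)) * dl q z := by
  unfold dl
  rw [Fin.prod_univ_succAbove _ j]
  simp only [Fin.prod_univ_succAbove _ j, Fin.insertNth_apply_same, Fin.insertNth_apply_succAbove,
    (Fin.succAbove_ne j _).symm, Fin.succAbove_ne j _, if_true, if_false, one_mul,
    Fin.succAbove_right_inj, Finset.prod_mul_distrib]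
  ring

/-- A modification of `Phi` in which a distinguished variable `x` carries its own parameters
`a', b'` and interacts with the remaining variables `zₖ` through `(d x/zₖ)_∞ (c zₖ/x)_∞`. -/
noncomputable def Gam (q : ℝ) (u : ℂ) (a b a' b' : Fin m → ℂ) (c d : ℂ) (x : ℂ) (z : Fin n → ℂ) :
    ℂ :=
  th q (u / (x * ∏ i, z i)) * wt q a' b' x * (∏ k, qp q (d * (x / z k)) * qp q (c * (z k / x))) *
    ((∏ k, wt q a b (z k)) * dl q z)

lemma Phi_insertNth (u : ℂ) (a b : Fin m → ℂ) (j : Fin (n + 1)) (x : ℂ) (z : Fin n → ℂ) :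
    Phi q u a b (j.insertNth x z : Fin (n + 1) → ℂ) = Gam q u a b a b 1 1 x z := by
  unfold Phi Gam
  rw [dl_insertNth, Fin.prod_univ_succAbove _ j, Fin.prod_univ_succAbove _ j]
  simp only [Fin.insertNth_apply_same, Fin.insertNth_apply_succAbove, one_mul]
  ring

section cont

variable {X : Type*} [TopologicalSpace X]

lemma continuous_th (hq : q ∈ Set.Ioo (0 : ℝ) 1) {f : X → ℂ} (hf : Continuous f)
    (h0 : ∀ x, f x ≠ 0) : Continuous fun x => th q (f x) := by
  unfold th
  have := continuous_qp hq
  exact (this.comp hf).mul (this.comp (continuous_const.div hf h0))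

lemma continuous_wt (hq : q ∈ Set.Ioo (0 : ℝ) 1) {a b : X → Fin m → ℂ} {f : X → ℂ}
    (ha : Continuous a) (hb : Continuous b) (hf : Continuous f) (h0 : ∀ x, f x ≠ 0)
    (h1 : ∀ x i, ‖a x i / f x‖ < 1) (h2 : ∀ x i, ‖b x i * f x‖ < 1) :
    Continuous fun x => wt q (a x) (b x) (f x) := by
  unfold wt
  have := continuous_qp hq
  refine continuous_finsetProd _ fun i _ => Continuous.inv₀ ?_ fun x =>
    mul_ne_zero (qp_ne_zero hq (h1 x i)) (qp_ne_zero hq (h2 x i))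
  exact (this.comp (((continuous_apply i).comp ha).div hf h0)).mul
    (this.comp (((continuous_apply i).comp hb).mul hf))

lemma continuous_dl (hq : q ∈ Set.Ioo (0 : ℝ) 1) {z : X → Fin n → ℂ}
    (hz : Continuous z) (h0 : ∀ x i, z x i ≠ 0) : Continuous fun x => dl q (z x) := by
  unfold dl
  have := continuous_qp hq
  refine continuous_finsetProd _ fun i _ => continuous_finsetProd _ fun j _ => ?_
  split_ifs
  · exact continuous_const
  · exact this.comp (((continuous_apply i).comp hz).div ((continuous_apply j).comp hz)
      fun x => h0 x j)

lemma continuous_Phi (hq : q ∈ Set.Ioo (0 : ℝ) 1) {u : ℂ} (hu : u ≠ 0) {a b : X → Fin m → ℂ}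
    {z : X → Fin n → Circle}
    (ha : Continuous a) (hb : Continuous b) (hz : Continuous z)
    (h1 : ∀ x i, ‖a x i‖ < 1) (h2 : ∀ x i, ‖b x i‖ < 1) :
    Continuous fun x => Phi q u (a x) (b x) (fun i => (z x i : ℂ)) := by
  have hz' : Continuous fun x => fun i => (z x i : ℂ) := by fun_prop
  have h0 : ∀ x, ∏ i, (z x i : ℂ) ≠ 0 := fun x =>
    Finset.prod_ne_zero_iff.2 fun i _ => Circle.coe_ne_zero _
  unfold Phi
  refine ((continuous_th hq (continuous_const.div ?_ h0) fun x => div_ne_zero hu (h0 x)).mul ?_).mul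
    (continuous_dl hq hz' fun x i => Circle.coe_ne_zero _)
  · fun_prop
  · refine continuous_finsetProd _ fun j _ =>
      continuous_wt hq ha hb (by fun_prop) (fun x => Circle.coe_ne_zero _) ?_ ?_
    · intro x i; simpa [Circle.norm_coe] using h1 x i
    · intro x i; simpa [Circle.norm_coe] using h2 x i

end cont

lemma continuous_Phi_torus (hq : q ∈ Set.Ioo (0 : ℝ) 1) {u : ℂ} (hu : u ≠ 0) {a b : Fin m → ℂ}
    (h1 : ∀ i, ‖a i‖ < 1) (h2 : ∀ i, ‖b i‖ < 1) :
    Continuous fun z : Fin n → Circle => Phi q u a b (fun i => (z i : ℂ)) :=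
  continuous_Phi hq hu (a := fun _ => a) (b := fun _ => b) (z := fun z => z)
    continuous_const continuous_const continuous_id (fun _ => h1) (fun _ => h2)

lemma continuous_J {X : Type*} [TopologicalSpace X] [FirstCountableTopology X]
    [LocallyCompactSpace X] (hq : q ∈ Set.Ioo (0 : ℝ) 1) {u : ℂ} (hu : u ≠ 0)
    {a b : X → Fin m → ℂ} (ha : Continuous a) (hb : Continuous b)
    (h1 : ∀ x i, ‖a x i‖ < 1) (h2 : ∀ x i, ‖b x i‖ < 1) :
    Continuous fun x => J q n (a x) (b x) u := by
  unfold J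
  have := continuous_Phi (X := X × (Fin n → Circle)) hq hu (a := fun p => a p.1)
    (b := fun p => b p.1) (z := fun p => p.2) (by fun_prop) (by fun_prop) (by fun_prop)
    (fun p => h1 p.1) (fun p => h2 p.1)
  exact continuous_parametric_integral_of_continuous (μ := tor n)
      (f := fun x z => Phi q u (a x) (b x) (fun i => (z i : ℂ))) this isCompact_univ |> (by
      simpa using ·)

/-- The open polydisc. -/
def Disc (a : Fin m → ℂ) : Prop := ∀ i, ‖a i‖ < 1

/-- Continuity of the integral along a convergent family of parameters in the open polydisc. -/
lemma tendsto_J (hq : q ∈ Set.Ioo (0 : ℝ) 1) {u : ℂ} (hu : u ≠ 0)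
    {ι : Type*} {l : Filter ι} {a b : ι → Fin m → ℂ} {a₀ b₀ : Fin m → ℂ}
    (ha : Tendsto a l (𝓝 a₀)) (hb : Tendsto b l (𝓝 b₀)) (h1 : ∀ i, Disc (a i)) (h2 : ∀ i, Disc (b i))
    (h1' : Disc a₀) (h2' : Disc b₀) :
    Tendsto (fun i => J q n (a i) (b i) u) l (𝓝 (J q n a₀ b₀ u)) := by
  have hO : IsOpen {p : (Fin m → ℂ) × (Fin m → ℂ) | Disc p.1 ∧ Disc p.2} := by
    simp only [Disc, Set.ofPred_and, Set.ofPred_forall]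
    exact (isOpen_iInter_of_finite fun i => isOpen_lt (by fun_prop) (by fun_prop)).inter
      (isOpen_iInter_of_finite fun i => isOpen_lt (by fun_prop) (by fun_prop))
  have : LocallyCompactSpace {p : (Fin m → ℂ) × (Fin m → ℂ) | Disc p.1 ∧ Disc p.2} :=
    hO.locallyCompactSpace
  have := continuous_J (n := n) (X := {p : (Fin m → ℂ) × (Fin m → ℂ) | Disc p.1 ∧ Disc p.2}) hq hu
    (a := fun p => p.1.1) (b := fun p => p.1.2) (by fun_prop) (by fun_prop)
    (fun p => p.2.1) (fun p => p.2.2)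
  have h := (this.tendsto ⟨(a₀, b₀), h1', h2'⟩).comp
    (tendsto_subtype_rng.2 (ha.prodMk_nhds hb) :
      Tendsto (fun i => (⟨(a i, b i), h1 i, h2 i⟩ :
        {p : (Fin m → ℂ) × (Fin m → ℂ) | Disc p.1 ∧ Disc p.2})) l (𝓝 ⟨(a₀, b₀), h1', h2'⟩))
  exact h

end integrand

/-! ### Lagrange interpolation -/

section lagrange

lemma lagrange_eval {N : ℕ} {v : Fin (N + 1) → ℂ} (hv : Function.Injective v) {P : Polynomial ℂ}
    (hP : P.degree < ((N + 1 : ℕ) : WithBot ℕ)) (x : ℂ) :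
    P.eval x = ∑ j, P.eval (v j) *
      ∏ k : Fin N, ((x - v (j.succAbove k)) / (v j - v (j.succAbove k))) := by
  have h := Lagrange.eq_interpolate (s := Finset.univ) (v := v) (hv.injOn) (f := P)
    (by simpa using hP)
  conv_lhs => rw [h, Lagrange.interpolate_apply]
  rw [Polynomial.eval_finsetSum]
  refine Finset.sum_congr rfl fun j _ => ?_
  rw [Polynomial.eval_mul, Polynomial.eval_C, Lagrange.basis, Polynomial.eval_prod,
    ← Finset.compl_singleton, ← Fin.image_succAbove_univ,
    Finset.prod_image (fun _ _ _ _ h => Fin.succAbove_right_injective h)]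
  congr 1
  refine Finset.prod_congr rfl fun k _ => ?_
  simp [Lagrange.basisDivisor, div_eq_inv_mul]

/-- The difference of two monic products of linear factors has degree less than their number. -/
lemma degree_sub_lt {N : ℕ} (a z : Fin (N + 1) → ℂ) :
    (∏ i, (Polynomial.X - Polynomial.C (a i)) - ∏ i, (Polynomial.X - Polynomial.C (z i))).degree
      < ((N + 1 : ℕ) : WithBot ℕ) := by
  have h1 : (∏ i, (Polynomial.X - Polynomial.C (a i))).degree = ((N + 1 : ℕ) : WithBot ℕ) := by
    rw [Polynomial.degree_prod]; simp
  have h2 : (∏ i, (Polynomial.X - Polynomial.C (z i))).degree = ((N + 1 : ℕ) : WithBot ℕ) := by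
    rw [Polynomial.degree_prod]; simp
  have m1 : (∏ i, (Polynomial.X - Polynomial.C (a i))).Monic :=
    Polynomial.monic_prod_of_monic _ _ fun i _ => Polynomial.monic_X_sub_C _
  have m2 : (∏ i, (Polynomial.X - Polynomial.C (z i))).Monic :=
    Polynomial.monic_prod_of_monic _ _ fun i _ => Polynomial.monic_X_sub_C _
  rw [← h1]
  exact Polynomial.degree_sub_lt_left (h1.trans h2.symm) m1.ne_zero (m1.trans m2.symm)

/-- Lagrange interpolation of the polynomial `∏ᵢ (X - aᵢ) - ∏ᵢ (X - zᵢ)` at the nodes `zⱼ`, evaluated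
at `0`. -/
lemma lagrange_sum_eq {n : ℕ} (a z : Fin (n + 1) → ℂ) (hz : Function.Injective z)
    (h0 : ∀ i, z i ≠ 0) :
    ∑ j, (∏ i, (1 - a i / z j)) / ∏ k : Fin n, (1 - z (j.succAbove k) / z j) =
      1 - (∏ i, a i) / ∏ i, z i := by
  have key := lagrange_eval hz (degree_sub_lt a z) 0
  simp only [Polynomial.eval_sub, Polynomial.eval_prod, Polynomial.eval_X, Polynomial.eval_C,
    zero_sub] at key
  have hZ : ∏ i, z i ≠ 0 := Finset.prod_ne_zero_iff.2 fun i _ => h0 i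
  have hn : ∀ f : Fin (n + 1) → ℂ, ∏ i, -f i = (-1) ^ (n + 1) * ∏ i, f i := fun f => by
    rw [Finset.prod_neg]; simp
  rw [hn, hn] at key
  have : (1 - (∏ i, a i) / ∏ i, z i) = -(-1) ^ (n + 1) * (∏ i, z i)⁻¹ *
      ((-1) ^ (n + 1) * ∏ i, a i - (-1) ^ (n + 1) * ∏ i, z i) := by
    have e : ((-1 : ℂ) ^ (n + 1)) * (-1) ^ (n + 1) = 1 := by rw [← mul_pow]; simp
    field_simp
    linear_combination -(∏ i, z i - ∏ i, a i) * e
  rw [this, key, Finset.mul_sum]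
  refine Finset.sum_congr rfl fun j _ => ?_
  have hj : ∏ x, (z j - z x) = 0 := Finset.prod_eq_zero (Finset.mem_univ j) (sub_self _)
  rw [hj, sub_zero]
  have d1 : ∏ k : Fin n, (1 - z (j.succAbove k) / z j) =
      (∏ k : Fin n, (z j - z (j.succAbove k))) / z j ^ n := by
    have : z j ^ n = ∏ i : Fin n, z j := by simp
    rw [this, ← Finset.prod_div_distrib]
    refine Finset.prod_congr rfl fun k _ => ?_
    have := h0 j
    field_simp
  have d2 : ∏ i, (1 - a i / z j) = (∏ i, (z j - a i)) / z j ^ (n + 1) := by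
    have : z j ^ (n + 1) = ∏ i : Fin (n + 1), z j := by simp
    rw [this, ← Finset.prod_div_distrib]
    refine Finset.prod_congr rfl fun k _ => ?_
    have := h0 j
    field_simp
  have d3 : ∏ k : Fin n, ((-z (j.succAbove k)) / (z j - z (j.succAbove k))) =
      (-1) ^ n * (∏ k : Fin n, z (j.succAbove k)) / ∏ k : Fin n, (z j - z (j.succAbove k)) := by
    rw [Finset.prod_div_distrib, Finset.prod_neg]; simp
  have d4 : ∏ k : Fin n, (z j - z (j.succAbove k)) ≠ 0 := Finset.prod_ne_zero_iff.2 fun k _ =>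
    sub_ne_zero.2 fun h => Fin.succAbove_ne j k (hz h).symm
  rw [d1, d2, d3, Fin.prod_univ_succAbove z j]
  have d5 : ∏ k : Fin n, z (j.succAbove k) ≠ 0 := Finset.prod_ne_zero_iff.2 fun k _ => h0 _
  have := h0 j
  have e : ((-1 : ℂ) ^ n) * (-1) ^ n = 1 := by rw [← mul_pow]; simp
  field_simp
  rw [pow_succ]
  linear_combination -(z j * z j ^ n * ∏ i, (z j - a i)) * e

/-- Interpolation of `y ↦ ∏ᵢ (1 - y zᵢ)` at the nodes `bⱼ`, evaluated at `y = 1/c`. The coefficients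
`κ` do not depend on `z`. -/
lemma interpolation {n : ℕ} {b : Fin (n + 1) → ℂ} (hb : Function.Injective b) {c : ℂ} (hc : c ≠ 0) :
    ∃ κ : Fin (n + 1) → ℂ, ∀ z : Fin (n + 1) → ℂ, (∀ i, z i ≠ 0) →
      ∏ j, (1 - c / z j) = ∏ j, (1 - c * b j) +
        (∏ i, z i)⁻¹ * ∑ j, κ j * ∏ i, (1 - b j * z i) := by
  refine ⟨fun j => (-c) ^ (n + 1) * ∏ k : Fin n,
    ((c⁻¹ - b (j.succAbove k)) / (b j - b (j.succAbove k))), fun z h0 => ?_⟩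
  have hZ : ∏ i, z i ≠ 0 := Finset.prod_ne_zero_iff.2 fun i _ => h0 i
  have key := lagrange_eval hb (degree_sub_lt (fun i => (z i)⁻¹) b) c⁻¹
  simp only [Polynomial.eval_sub, Polynomial.eval_prod, Polynomial.eval_X, Polynomial.eval_C]
    at key
  have e1 : ∀ y, ∏ i, (1 - y * z i) = (-1) ^ (n + 1) * (∏ i, z i) * ∏ i, (y - (z i)⁻¹) := by
    intro y
    have : (-1 : ℂ) ^ (n + 1) = ∏ i : Fin (n + 1), (-1) := by simp
    rw [this, ← Finset.prod_mul_distrib, ← Finset.prod_mul_distrib]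
    refine Finset.prod_congr rfl fun i _ => ?_
    have := h0 i
    field_simp
    ring
  have e2 : ∏ j, (1 - c / z j) = c ^ (n + 1) * ∏ i, (c⁻¹ - (z i)⁻¹) := by
    have : c ^ (n + 1) = ∏ i : Fin (n + 1), c := by simp
    rw [this, ← Finset.prod_mul_distrib]
    refine Finset.prod_congr rfl fun i _ => ?_
    field_simp
  have e3 : ∏ j, (1 - c * b j) = c ^ (n + 1) * ∏ i, (c⁻¹ - b i) := by
    have : c ^ (n + 1) = ∏ i : Fin (n + 1), c := by simp
    rw [this, ← Finset.prod_mul_distrib]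
    refine Finset.prod_congr rfl fun i _ => ?_
    field_simp
  rw [e2, e3, ← sub_eq_iff_eq_add', ← mul_sub, key, Finset.mul_sum, Finset.mul_sum]
  refine Finset.sum_congr rfl fun j _ => ?_
  rw [show ∏ x, (b j - b x) = 0 from Finset.prod_eq_zero (Finset.mem_univ j) (sub_self _), e1,
    sub_zero, neg_pow c]
  have e : ((-1 : ℂ) ^ (n + 1)) * (-1) ^ (n + 1) = 1 := by rw [← mul_pow]; simp
  beta_reduce
  generalize ∏ i, (b j - (z i)⁻¹) = P
  generalize ∏ k : Fin n, ((c⁻¹ - b (j.succAbove k)) / (b j - b (j.succAbove k))) = R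
  field_simp
  linear_combination (-(P * R)) * e

end lagrange

/-! ### The q-difference equation in `u` -/

section qdiff

variable {q : ℝ} {m n : ℕ}

lemma one_sub_ne_zero_of_norm {x : ℂ} (hx : ‖x‖ < 1) : 1 - x ≠ 0 := by
  intro h
  rw [sub_eq_zero] at h
  rw [← h] at hx
  simp at hx

lemma inv_qp_shift (hq : q ∈ Set.Ioo (0 : ℝ) 1) {x : ℂ} (hx : ‖x‖ < 1) :
    (qp q (q * x))⁻¹ = (1 - x) * (qp q x)⁻¹ := by
  have h := one_sub_ne_zero_of_norm hx
  rw [qp_step hq x, mul_inv, mul_inv_cancel_left₀ h]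

lemma wt_scale_left (hq : q ∈ Set.Ioo (0 : ℝ) 1) {a : Fin m → ℂ} (b : Fin m → ℂ) {x : ℂ}
    (ha : ∀ i, ‖a i / x‖ < 1) :
    wt q (fun i => q * a i) b x = (∏ i, (1 - a i / x)) * wt q a b x := by
  unfold wt
  rw [← Finset.prod_mul_distrib]
  refine Finset.prod_congr rfl fun i _ => ?_
  rw [mul_inv, mul_inv, mul_div_assoc, inv_qp_shift hq (ha i), mul_assoc]

lemma wt_scale_right (hq : q ∈ Set.Ioo (0 : ℝ) 1) (a : Fin m → ℂ) {b : Fin m → ℂ} {x : ℂ}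
    (hb : ∀ i, ‖b i * x‖ < 1) :
    wt q a (fun i => q * b i) x = (∏ i, (1 - b i * x)) * wt q a b x := by
  unfold wt
  rw [← Finset.prod_mul_distrib]
  refine Finset.prod_congr rfl fun i _ => ?_
  rw [mul_inv, mul_inv, mul_assoc (q : ℂ), inv_qp_shift hq (hb i)]
  ring

lemma dl_eq_zero (hq : q ∈ Set.Ioo (0 : ℝ) 1) {z : Fin n → ℂ} (h0 : ∀ i, z i ≠ 0) {i l : Fin n}
    (hil : i ≠ l) (h : z i = z l) : dl q z = 0 := by
  unfold dl
  refine Finset.prod_eq_zero (Finset.mem_univ i) (Finset.prod_eq_zero (Finset.mem_univ l) ?_)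
  rw [if_neg hil, h, div_self (h0 l), qp_one hq]

lemma Phi_eq_Gam (u : ℂ) (a b : Fin m → ℂ) (z : Fin (n + 1) → ℂ) (j : Fin (n + 1)) :
    Phi q u a b z = Gam q u a b a b 1 1 (z j) (fun k => z (j.succAbove k)) := by
  conv_lhs => rw [← Fin.insertNth_self_removeNth j z, Phi_insertNth]
  rfl

/-- At a point with two equal coordinates, each modified integrand vanishes. -/
lemma Gam_eq_zero (hq : q ∈ Set.Ioo (0 : ℝ) 1) (u : ℂ) (a b a' b' : Fin m → ℂ) {c d : ℂ}
    (hcd : c = 1 ∨ d = 1) {z : Fin (n + 1) → ℂ} (h0 : ∀ i, z i ≠ 0)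
    (hz : ¬ Function.Injective z) (j : Fin (n + 1)) :
    Gam q u a b a' b' c d (z j) (fun k => z (j.succAbove k)) = 0 := by
  have aux : ∀ l, l ≠ j → z l = z j →
      Gam q u a b a' b' c d (z j) (fun k => z (j.succAbove k)) = 0 := by
    intro l hl h
    obtain ⟨k, rfl⟩ := Fin.exists_succAbove_eq hl
    have : ∏ k, qp q (d * (z j / z (j.succAbove k))) * qp q (c * (z (j.succAbove k) / z j)) = 0 := by
      refine Finset.prod_eq_zero (Finset.mem_univ k) ?_
      rw [h, div_self (h0 j)]
      rcases hcd with rfl | rfl <;> simp [qp_one hq]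
    unfold Gam
    rw [this]
    ring
  obtain ⟨i, l, h, hil⟩ : ∃ i l, z i = z l ∧ i ≠ l := by
    simpa [Function.Injective] using hz
  by_cases hi : i = j
  · subst hi; exact aux l hil.symm h.symm
  by_cases hl : l = j
  · subst hl; exact aux i hi h
  obtain ⟨i', rfl⟩ := Fin.exists_succAbove_eq hi
  obtain ⟨l', rfl⟩ := Fin.exists_succAbove_eq hl
  unfold Gam
  rw [dl_eq_zero hq (fun _ => h0 _) (i := i') (l := l') (fun hh => hil (by rw [hh])) h]
  ring

/-- Coinciding coordinates are allowed: both sides then vanish. -/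
lemma sum_Gam_left (hq : q ∈ Set.Ioo (0 : ℝ) 1) (u : ℂ) {a b : Fin (n + 1) → ℂ}
    {z : Fin (n + 1) → ℂ} (h0 : ∀ i, z i ≠ 0) (ha : ∀ i j, ‖a i / z j‖ < 1) :
    ∑ j, Gam q u a b (fun i => q * a i) b q 1 (z j) (fun k => z (j.succAbove k)) =
      (1 - (∏ i, a i) / ∏ i, z i) * Phi q u a b z := by
  by_cases hz : Function.Injective z
  · rw [← lagrange_sum_eq a z hz h0, Finset.sum_mul]
    refine Finset.sum_congr rfl fun j _ => ?_
    rw [Phi_eq_Gam u a b z j]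
    have hd : ∏ k : Fin n, (1 - z (j.succAbove k) / z j) ≠ 0 :=
      Finset.prod_ne_zero_iff.2 fun k _ => sub_ne_zero.2 fun h => by
        rw [eq_div_iff (h0 j), one_mul] at h
        exact Fin.succAbove_ne j k (hz h).symm
    unfold Gam
    rw [wt_scale_left hq b (fun i => ha i j)]
    simp only [Finset.prod_mul_distrib, one_mul]
    rw [Finset.prod_congr rfl fun k _ => qp_step hq (z (j.succAbove k) / z j),
      Finset.prod_mul_distrib]
    field_simp
  · rw [Finset.sum_eq_zero fun j _ => Gam_eq_zero hq u a b _ b (Or.inr rfl) h0 hz j,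
      Phi_eq_Gam u a b z 0, Gam_eq_zero hq u a b a b (Or.inr rfl) h0 hz 0, mul_zero]

lemma sum_Gam_right (hq : q ∈ Set.Ioo (0 : ℝ) 1) (u : ℂ) {a b : Fin (n + 1) → ℂ}
    {z : Fin (n + 1) → ℂ} (h0 : ∀ i, z i ≠ 0) (hb : ∀ i j, ‖b i * z j‖ < 1) :
    ∑ j, Gam q u a b a (fun i => q * b i) 1 q (z j) (fun k => z (j.succAbove k)) =
      (1 - (∏ i, b i) * ∏ i, z i) * Phi q u a b z := by
  by_cases hz : Function.Injective z
  · have := lagrange_sum_eq b (fun i => (z i)⁻¹) (inv_injective.comp hz)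
      (fun i => inv_ne_zero (h0 i))
    simp only [div_inv_eq_mul, Finset.prod_inv_distrib] at this
    rw [← this, Finset.sum_mul]
    refine Finset.sum_congr rfl fun j _ => ?_
    rw [Phi_eq_Gam u a b z j]
    have e : ∀ k : Fin n, (z (j.succAbove k))⁻¹ * z j = z j / z (j.succAbove k) :=
      fun k => by rw [div_eq_inv_mul]
    simp only [e]
    have hd : ∏ k : Fin n, (1 - z j / z (j.succAbove k)) ≠ 0 :=
      Finset.prod_ne_zero_iff.2 fun k _ => sub_ne_zero.2 fun h => by
        rw [eq_div_iff (h0 _), one_mul] at h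
        exact Fin.succAbove_ne j k (hz h)
    unfold Gam
    rw [wt_scale_right hq a (fun i => hb i j)]
    simp only [Finset.prod_mul_distrib, one_mul]
    rw [Finset.prod_congr rfl fun k _ => qp_step hq (z j / z (j.succAbove k)),
      Finset.prod_mul_distrib]
    field_simp
  · rw [Finset.sum_eq_zero fun j _ => Gam_eq_zero hq u a b a _ (Or.inl rfl) h0 hz j,
      Phi_eq_Gam u a b z 0, Gam_eq_zero hq u a b a b (Or.inr rfl) h0 hz 0, mul_zero]

/-- Scaling the distinguished variable by `q` moves the `q`-multiples from `a` and `(zₖ/x)_∞` to `b`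
and `(x/zₖ)_∞`; the factor in front comes from the quasi-periodicity of `θ`. -/
lemma Gam_shift (hq : q ∈ Set.Ioo (0 : ℝ) 1) {u : ℂ} (hu : u ≠ 0) (a b : Fin m → ℂ)
    {x : ℂ} (hx : x ≠ 0) {z : Fin n → ℂ} (h0 : ∀ i, z i ≠ 0) :
    Gam q (q * u) a b (fun i => q * a i) b q 1 (q * x) z =
      -(u / (x * ∏ i, z i)) * Gam q (q * u) a b a (fun i => q * b i) 1 q x z := by
  have hq0 : (q : ℂ) ≠ 0 := by exact_mod_cast hq.1.ne'
  have hZ : ∏ i, z i ≠ 0 := Finset.prod_ne_zero_iff.2 fun i _ => h0 i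
  have e1 : wt q (fun i => q * a i) b (q * x) = wt q a (fun i => q * b i) x := by
    unfold wt
    refine Finset.prod_congr rfl fun i _ => ?_
    rw [mul_div_mul_left _ _ hq0]; ring_nf
  have e2 : th q (q * u / (q * x * ∏ i, z i)) =
      -(u / (x * ∏ i, z i)) * th q (q * u / (x * ∏ i, z i)) := by
    rw [mul_assoc, mul_div_mul_left _ _ hq0, mul_div_assoc (q : ℂ) u,
      th_shift hq (div_ne_zero hu (mul_ne_zero hx hZ))]
    field_simp
  unfold Gam
  rw [e1, e2]
  have e3 : ∀ k, qp q (1 * (q * x / z k)) * qp q (q * (z k / (q * x))) =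
      qp q (q * (x / z k)) * qp q (1 * (z k / x)) := fun k => by
    have := h0 k
    congr 2 <;> field_simp
  simp only [e3]
  ring

lemma differentiableAt_Gam (hq : q ∈ Set.Ioo (0 : ℝ) 1) {u : ℂ} (a b a' b' : Fin m → ℂ)
    (c d : ℂ) {z : Fin n → ℂ} (h0 : ∀ i, z i ≠ 0) (hu : u ≠ 0) {x : ℂ} (hx : x ≠ 0)
    (h1 : ∀ i, ‖a' i / x‖ < 1) (h2 : ∀ i, ‖b' i * x‖ < 1) :
    DifferentiableAt ℂ (fun x => Gam q u a b a' b' c d x z) x := by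
  have hZ : ∏ i, z i ≠ 0 := Finset.prod_ne_zero_iff.2 fun i _ => h0 i
  have hd := differentiable_qp hq
  have hxZ := mul_ne_zero hx hZ
  have huxZ := div_ne_zero hu hxZ
  have hc : ∀ {f : ℂ → ℂ}, DifferentiableAt ℂ f x → DifferentiableAt ℂ (fun y => qp q (f y)) x :=
    fun hf => DifferentiableAt.comp (g := qp q) x (hd _) hf
  have hdiv : DifferentiableAt ℂ (fun y => u / (y * ∏ i, z i)) x :=
    (differentiableAt_const u).div (by fun_prop) hxZ
  unfold Gam th wt
  refine DifferentiableAt.mul (DifferentiableAt.mul (DifferentiableAt.mul (DifferentiableAt.mul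
    (hc hdiv) (hc ?_)) ?_) ?_) (by fun_prop)
  · exact (differentiableAt_const _).div hdiv huxZ
  · refine DifferentiableAt.fun_finsetProd fun i _ => DifferentiableAt.fun_inv
      ((hc ?_).mul (hc ?_)) (mul_ne_zero (qp_ne_zero hq (h1 i)) (qp_ne_zero hq (h2 i)))
    · exact (differentiableAt_const _).div differentiableAt_id hx
    · fun_prop
  · refine DifferentiableAt.fun_finsetProd fun k _ => (hc ?_).mul (hc ?_)
    · fun_prop
    · exact (differentiableAt_const c).mul ((differentiableAt_const _).div differentiableAt_id hx)

lemma continuous_Gam_torus (hq : q ∈ Set.Ioo (0 : ℝ) 1) {u : ℂ} (hu : u ≠ 0)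
    {a b a' b' : Fin m → ℂ} (c d : ℂ) (ha : Disc a) (hb : Disc b) (ha' : Disc a') (hb' : Disc b')
    (j : Fin (n + 1)) :
    Continuous fun z : Fin (n + 1) → Circle =>
      Gam q u a b a' b' c d (z j) (fun k => (z (j.succAbove k) : ℂ)) := by
  have hd := continuous_qp hq
  have h1 : ∀ z : Fin (n + 1) → Circle, (z j : ℂ) * ∏ i, (z (j.succAbove i) : ℂ) ≠ 0 := fun z =>
    mul_ne_zero (Circle.coe_ne_zero _) (Finset.prod_ne_zero_iff.2 fun i _ => Circle.coe_ne_zero _)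
  unfold Gam
  refine (((continuous_th hq (continuous_const.div (by fun_prop) h1)
    fun z => div_ne_zero hu (h1 z)).mul ?_).mul ?_).mul (Continuous.mul ?_ ?_)
  · exact continuous_wt hq continuous_const continuous_const (by fun_prop)
      (fun x => Circle.coe_ne_zero _) (fun x i => by simpa [Circle.norm_coe] using ha' i)
      (fun x i => by simpa [Circle.norm_coe] using hb' i)
  · refine continuous_finsetProd _ fun k _ => (hd.comp ?_).mul (hd.comp ?_)
    · exact continuous_const.mul
        (Continuous.div (by fun_prop) (by fun_prop) fun x => Circle.coe_ne_zero _)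
    · exact continuous_const.mul
        (Continuous.div (by fun_prop) (by fun_prop) fun x => Circle.coe_ne_zero _)
  · exact continuous_finsetProd _ fun k _ => continuous_wt hq continuous_const continuous_const
      (by fun_prop) (fun x => Circle.coe_ne_zero _)
      (fun x i => by simpa [Circle.norm_coe] using ha i)
      (fun x i => by simpa [Circle.norm_coe] using hb i)
  · exact continuous_dl hq (by fun_prop) fun x i => Circle.coe_ne_zero _

lemma disc_scale (hq : q ∈ Set.Ioo (0 : ℝ) 1) {a : Fin m → ℂ} (ha : Disc a) :
    Disc fun i => q * a i := fun i => by
  have h1 := norm_lt_one_of_mem hq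
  rw [norm_mul]
  nlinarith [ha i, norm_nonneg (a i), norm_nonneg (q : ℂ)]

/-- `Z⁻¹ Φ_{qu} = -u⁻¹ Φ_u`. -/
lemma Phi_shift (hq : q ∈ Set.Ioo (0 : ℝ) 1) {u : ℂ} (hu : u ≠ 0) (a b : Fin m → ℂ)
    {z : Fin n → ℂ} (h0 : ∀ i, z i ≠ 0) :
    (∏ i, z i)⁻¹ * Phi q (q * u) a b z = -(u⁻¹ * Phi q u a b z) := by
  have hZ : ∏ i, z i ≠ 0 := Finset.prod_ne_zero_iff.2 fun i _ => h0 i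
  unfold Phi
  rw [mul_div_assoc, th_shift hq (div_ne_zero hu hZ)]
  field_simp

/-- The contour of one variable of the modified integrand is shifted from radius `1` to radius `q`;
summing over the choice of that variable gives a first-order q-difference equation in `u`. -/
lemma J_qdiff (hq : q ∈ Set.Ioo (0 : ℝ) 1) {u : ℂ} (hu : u ≠ 0) {a b : Fin (n + 1) → ℂ}
    (ha : Disc a) (hb : Disc b) :
    u * (1 - u * ∏ i, b i) * J q (n + 1) a b (q * u) = (u - ∏ i, a i) * J q (n + 1) a b u := by
  have hq0 : (q : ℂ) ≠ 0 := by exact_mod_cast hq.1.ne'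
  have hqu : (q : ℂ) * u ≠ 0 := mul_ne_zero hq0 hu
  have haq := disc_scale hq ha
  have hbq := disc_scale hq hb
  have c1 := fun j => continuous_Gam_torus (n := n) hq hqu q 1 ha hb haq hb j
  have c2 := fun j => continuous_Gam_torus (n := n) hq hqu 1 q ha hb ha hbq j
  have cP1 := continuous_Phi_torus (n := n + 1) hq hqu ha hb
  have cP2 := continuous_Phi_torus (n := n + 1) hq hu ha hb
  have cZ : Continuous fun z : Fin (n + 1) → Circle => (u / ∏ i, (z i : ℂ)) :=
    continuous_const.div (by fun_prop)
      fun z => Finset.prod_ne_zero_iff.2 fun i _ => Circle.coe_ne_zero _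
  have c3 : ∀ j : Fin (n + 1), Continuous fun z : Fin (n + 1) → Circle =>
      -(u / ∏ i, (z i : ℂ)) * Gam q (q * u) a b a
        (fun i => q * b i) 1 q (z j) (fun k => (z (j.succAbove k) : ℂ)) :=
    fun j => cZ.neg.mul (c2 j)
  have step : ∀ j : Fin (n + 1), ∫ z : Fin (n + 1) → Circle, Gam q (q * u) a b
        (fun i => q * a i) b q 1 (z j) (fun k => (z (j.succAbove k) : ℂ)) ∂(tor (n + 1)) =
      ∫ z : Fin (n + 1) → Circle, -(u / ∏ i, (z i : ℂ)) * Gam q (q * u) a b a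
        (fun i => q * b i) 1 q (z j) (fun k => (z (j.succAbove k) : ℂ)) ∂(tor (n + 1)) := by
    intro j
    rw [integral_tor_succ j (c1 j), integral_tor_succ j (c3 j)]
    congr 1; ext z
    simp only [Fin.prod_univ_succAbove _ j, Fin.insertNth_apply_same,
      Fin.insertNth_apply_succAbove]
    rw [arc_shift hq (f := fun x => Gam q (q * u) a b
        (fun i => q * a i) b q 1 x (fun k => (z k : ℂ)))]
    · congr 1; ext x
      exact Gam_shift hq hu a b (Circle.coe_ne_zero x) fun i => Circle.coe_ne_zero _
    · intro x hx1 hx2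
      have hx0 : 0 < ‖x‖ := hq.1.trans_le hx1
      refine differentiableAt_Gam hq _ _ _ _ _ _ (fun i => Circle.coe_ne_zero _) hqu
        (norm_pos_iff.1 hx0) ?_ ?_
      · intro i
        rw [norm_div, norm_mul, div_lt_one hx0, Complex.norm_real, Real.norm_of_nonneg hq.1.le]
        nlinarith [ha i, hq.1]
      · intro i
        rw [norm_mul]
        nlinarith [hb i, norm_nonneg (b i)]
  have hs := Finset.sum_congr (rfl : (Finset.univ : Finset (Fin (n + 1))) = _) fun j _ => step j
  rw [← integral_finsetSum _ fun j _ => integrable_of_continuous (c1 j),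
    ← integral_finsetSum _ fun j _ => integrable_of_continuous (c3 j)] at hs
  have e1 : ∀ z : Fin (n + 1) → Circle, ∑ j, Gam q (q * u) a b
        (fun i => q * a i) b q 1 (z j) (fun k => (z (j.succAbove k) : ℂ)) =
      Phi q (q * u) a b (fun i => (z i : ℂ)) +
        (∏ i, a i) * u⁻¹ * Phi q u a b (fun i => (z i : ℂ)) := fun z => by
    rw [sum_Gam_left hq _ (z := fun i => (z i : ℂ)) (fun i => Circle.coe_ne_zero _)
      (fun i j => by simpa [Circle.norm_coe] using ha i)]
    linear_combination -(∏ i, a i) * Phi_shift hq hu a b (z := fun i => (z i : ℂ))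
      fun i => Circle.coe_ne_zero _
  have e2 : ∀ z : Fin (n + 1) → Circle, ∑ j, -(u / ∏ i, (z i : ℂ)) * Gam q (q * u) a b a
        (fun i => q * b i) 1 q (z j) (fun k => (z (j.succAbove k) : ℂ)) =
      Phi q u a b (fun i => (z i : ℂ)) +
        u * (∏ i, b i) * Phi q (q * u) a b (fun i => (z i : ℂ)) := fun z => by
    rw [← Finset.mul_sum, sum_Gam_right hq _ (z := fun i => (z i : ℂ))
      (fun i => Circle.coe_ne_zero _) (fun i j => by simpa [Circle.norm_coe] using hb i)]
    have := Phi_shift hq hu a b (z := fun i => (z i : ℂ)) fun i => Circle.coe_ne_zero _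
    have hZ : ∏ i, (z i : ℂ) ≠ 0 := Finset.prod_ne_zero_iff.2 fun i _ => Circle.coe_ne_zero _
    field_simp at this ⊢
    linear_combination -this
  simp only [e1, e2] at hs
  rw [integral_add (integrable_of_continuous cP1)
      ((integrable_of_continuous cP2).const_mul _),
    integral_add (integrable_of_continuous cP2)
      ((integrable_of_continuous cP1).const_mul _),
    integral_const_mul, integral_const_mul] at hs
  change J q (n + 1) a b (q * u) + (∏ i, a i) * u⁻¹ * J q (n + 1) a b u =
    J q (n + 1) a b u + u * (∏ i, b i) * J q (n + 1) a b (q * u) at hs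
  field_simp at hs
  linear_combination hs

end qdiff

/-! ### Recursion in a single parameter and reduction to vanishing parameters -/

section recursion

variable {q : ℝ} {m n : ℕ}

lemma prod_update_scale (f g : Fin m → ℂ) (i : Fin m) (c : ℂ) (hi : f i = c * g i)
    (hf : ∀ k, k ≠ i → f k = g k) : ∏ k, f k = c * ∏ k, g k := by
  rw [← Finset.mul_prod_erase Finset.univ f (Finset.mem_univ i),
    ← Finset.mul_prod_erase Finset.univ g (Finset.mem_univ i), hi, mul_assoc]
  congr 2
  exact Finset.prod_congr rfl fun k hk => hf k (Finset.ne_of_mem_erase hk)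

lemma prod_update_mul (a : Fin m → ℂ) (i : Fin m) (c : ℂ) :
    ∏ k, Function.update a i (c * a i) k = c * ∏ k, a k :=
  prod_update_scale _ _ i c (by simp) fun k hk => by simp [hk]

lemma Phi_update_left (hq : q ∈ Set.Ioo (0 : ℝ) 1) (u : ℂ) (a b : Fin m → ℂ) {z : Fin n → ℂ}
    (i : Fin m) (h : ∀ j, ‖a i / z j‖ < 1) :
    Phi q u (Function.update a i (q * a i)) b z = (∏ j, (1 - a i / z j)) * Phi q u a b z := by
  have : ∀ j, wt q (Function.update a i (q * a i)) b (z j) = (1 - a i / z j) * wt q a b (z j) :=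
    fun j => prod_update_scale _ _ i _
      (by simp only [Function.update_self, mul_inv]
          rw [mul_div_assoc, inv_qp_shift hq (h j), mul_assoc])
      fun k hk => by simp [hk]
  unfold Phi
  simp only [this, Finset.prod_mul_distrib]
  ring

lemma Phi_update_right (hq : q ∈ Set.Ioo (0 : ℝ) 1) (u : ℂ) (a b : Fin m → ℂ) {z : Fin n → ℂ}
    (i : Fin m) (h : ∀ j, ‖b i * z j‖ < 1) :
    Phi q u a (Function.update b i (q * b i)) z = (∏ j, (1 - b i * z j)) * Phi q u a b z := by
  have : ∀ j, wt q a (Function.update b i (q * b i)) (z j) = (1 - b i * z j) * wt q a b (z j) :=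
    fun j => prod_update_scale _ _ i _
      (by simp only [Function.update_self, mul_inv]
          rw [mul_assoc, inv_qp_shift hq (h j)]; ring)
      fun k hk => by simp [hk]
  unfold Phi
  simp only [this, Finset.prod_mul_distrib]
  ring

lemma disc_update {a : Fin m → ℂ} (ha : Disc a) (i : Fin m) {c : ℂ} (hc : ‖c‖ < 1) :
    Disc (Function.update a i c) := fun k => by
  by_cases h : k = i
  · subst h; simpa using hc
  · simpa [h] using ha k

lemma disc_update_scale (hq : q ∈ Set.Ioo (0 : ℝ) 1) {a : Fin m → ℂ} (ha : Disc a) (i : Fin m) :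
    Disc (Function.update a i (q * a i)) :=
  disc_update ha i (disc_scale hq ha i)

/-- The interpolation identity, integrated. -/
lemma J_interpolation (hq : q ∈ Set.Ioo (0 : ℝ) 1) {a b : Fin (n + 1) → ℂ} (ha : Disc a)
    (hb : Disc b) (hbi : Function.Injective b) (i : Fin (n + 1)) (hi : a i ≠ 0) :
    ∃ κ : Fin (n + 1) → ℂ, ∀ u : ℂ, u ≠ 0 →
      J q (n + 1) (Function.update a i (q * a i)) b (q * u) =
        (∏ j, (1 - a i * b j)) * J q (n + 1) a b (q * u) -
          u⁻¹ * ∑ j, κ j * J q (n + 1) a (Function.update b j (q * b j)) u := by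
  obtain ⟨κ, hκ⟩ := interpolation hbi hi
  refine ⟨κ, fun u hu => ?_⟩
  have hq0 : (q : ℂ) ≠ 0 := by exact_mod_cast hq.1.ne'
  have hqu : (q : ℂ) * u ≠ 0 := mul_ne_zero hq0 hu
  have e : ∀ z : Fin (n + 1) → Circle,
      Phi q (q * u) (Function.update a i (q * a i)) b (fun i => (z i : ℂ)) =
        (∏ j, (1 - a i * b j)) * Phi q (q * u) a b (fun i => (z i : ℂ)) -
          u⁻¹ * ∑ j, κ j * Phi q u a (Function.update b j (q * b j)) (fun i => (z i : ℂ)) := by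
    intro z
    have h0 : ∀ i, (z i : ℂ) ≠ 0 := fun i => Circle.coe_ne_zero _
    rw [Phi_update_left hq _ _ _ _ (fun j => by simpa [Circle.norm_coe] using ha i),
      hκ (fun i => (z i : ℂ)) h0]
    have es : ∑ j, κ j * Phi q u a (Function.update b j (q * b j)) (fun i => (z i : ℂ)) =
        (∑ j, κ j * ∏ i, (1 - b j * (z i : ℂ))) * Phi q u a b (fun i => (z i : ℂ)) := by
      rw [Finset.sum_mul]
      refine Finset.sum_congr rfl fun j _ => ?_
      rw [Phi_update_right hq u a b (z := fun i => (z i : ℂ)) j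
        (fun k => by simpa [Circle.norm_coe] using hb j), ← mul_assoc]
    rw [es]
    linear_combination (∑ j, κ j * ∏ i, (1 - b j * (z i : ℂ))) *
      Phi_shift hq hu a b (z := fun i => (z i : ℂ)) h0
  unfold J
  simp only [e]
  have c1 := integrable_of_continuous (continuous_Phi_torus (n := n + 1) hq hqu ha hb)
  have c2 := fun j => integrable_of_continuous
    (continuous_Phi_torus (n := n + 1) hq hu ha (disc_update_scale hq hb j))
  rw [integral_sub (c1.const_mul _) ((integrable_finsetSum _ fun j _ =>
      (c2 j).const_mul _).const_mul _), integral_const_mul, integral_const_mul,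
    integral_finsetSum _ fun j _ => (c2 j).const_mul _]
  simp only [integral_const_mul]

/-- Contiguous relation for `aᵢ ↦ q aᵢ`, obtained by eliminating the integrals with shifted `bⱼ`
between the interpolation identity and the q-difference equations. -/
lemma J_step (hq : q ∈ Set.Ioo (0 : ℝ) 1) {a b : Fin (n + 1) → ℂ} (ha : Disc a)
    (hb : Disc b) (hbi : Function.Injective b) (i : Fin (n + 1)) {u : ℂ} (hu : u ≠ 0) :
    (u - q * ∏ k, a k) * J q (n + 1) (Function.update a i (q * a i)) b u =
      (∏ j, (1 - a i * b j)) * u * J q (n + 1) a b u := by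
  by_cases hi : a i = 0
  · have h1 : ∏ k, a k = 0 := Finset.prod_eq_zero (Finset.mem_univ i) hi
    have h2 : Function.update a i (q * a i) = a := by
      rw [hi, mul_zero, ← hi, Function.update_eq_self]
    rw [h1, h2, hi]; simp
  have hq0 : (q : ℂ) ≠ 0 := by exact_mod_cast hq.1.ne'
  have hq1 : (q : ℂ) - 1 ≠ 0 := by
    have : (q : ℂ) ≠ 1 := by exact_mod_cast hq.2.ne
    exact sub_ne_zero.2 this
  obtain ⟨κ, hκ⟩ := J_interpolation hq ha hb hbi i hi
  have huq : u / q ≠ 0 := div_ne_zero hu hq0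
  have i1 := hκ u hu
  have i2 := hκ (u / q) huq
  rw [mul_div_cancel₀ u hq0] at i2
  have E1 := J_qdiff hq hu ha hb
  have E2 := J_qdiff hq hu (disc_update_scale hq ha i) hb
  rw [prod_update_mul] at E2
  have E3 : u * (1 - u * ∏ i, b i) *
        ∑ j, κ j * J q (n + 1) a (Function.update b j (q * b j)) u =
      (u - q * ∏ k, a k) *
        ∑ j, κ j * J q (n + 1) a (Function.update b j (q * b j)) (u / q) := by
    rw [Finset.mul_sum, Finset.mul_sum]
    refine Finset.sum_congr rfl fun j _ => ?_
    have E := J_qdiff hq huq ha (disc_update_scale hq hb j)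
    rw [prod_update_mul, mul_div_cancel₀ u hq0] at E
    field_simp at E
    linear_combination κ j * E
  rw [i1] at E2
  generalize ∑ j, κ j * J q (n + 1) a (Function.update b j (q * b j)) u = K1 at *
  generalize ∑ j, κ j * J q (n + 1) a (Function.update b j (q * b j)) (u / q) = K2 at *
  generalize ∏ j, (1 - a i * b j) = α at *
  generalize J q (n + 1) a b (q * u) = J1 at *
  generalize J q (n + 1) a b u = J0 at *
  generalize J q (n + 1) (Function.update a i (q * a i)) b u = J0' at *
  generalize ∏ k, a k = A at *
  generalize ∏ k, b k = B at *
  have i2' : u * J0' = α * u * J0 - q * K2 := by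
    rw [i2]; field_simp
  have E2' : (u - q * A) * J0' * u = α * (u - A) * J0 * u - (u - q * A) * K2 := by
    have : u * (1 - u * B) * (α * J1 - u⁻¹ * K1) * u = u * (1 - u * B) * (α * J1 * u - K1) := by
      field_simp
    rw [← E2, this]
    linear_combination α * u * E1 - E3
  have : (q - 1 : ℂ) * u * ((u - q * A) * J0') = (q - 1) * u * (α * u * J0) := by
    linear_combination q * E2' - (u - q * A) * i2'
  exact mul_left_cancel₀ (mul_ne_zero hq1 hu) this

/-- The product `∏ aₖ` acquires a factor `q` at each application of `J_step`, so the coefficients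
form partial products of q-Pochhammer symbols. -/
lemma J_iterate (hq : q ∈ Set.Ioo (0 : ℝ) 1) {a b : Fin (n + 1) → ℂ} (ha : Disc a)
    (hb : Disc b) (hbi : Function.Injective b) (i : Fin (n + 1)) {u : ℂ} (hu : u ≠ 0) (k : ℕ) :
    Disc (Function.update a i ((q : ℂ) ^ k * a i)) ∧
    J q (n + 1) a b u * ∏ j, ∏ l ∈ Finset.range k, (1 - (q : ℂ) ^ l * (a i * b j)) =
      (∏ l ∈ Finset.range k, (1 - (q : ℂ) ^ l * (q * (∏ k, a k) / u))) *
        J q (n + 1) (Function.update a i ((q : ℂ) ^ k * a i)) b u := by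
  induction k with
  | zero => simpa using ha
  | succ k ih =>
    have hd := disc_update_scale hq ih.1 i
    have hs := J_step hq ih.1 hb hbi i hu
    rw [Function.update_idem, Function.update_self, ← mul_assoc, ← pow_succ'] at hd hs
    refine ⟨hd, ?_⟩
    rw [prod_update_mul] at hs
    simp only [Finset.prod_range_succ, Finset.prod_mul_distrib]
    rw [← mul_assoc, ih.2]
    have e : u - q * ((q : ℂ) ^ k * ∏ i, a i) =
        u * (1 - (q : ℂ) ^ k * (q * (∏ i, a i) / u)) := by
      field_simp
    rw [e] at hs
    have e2 : ∀ j, (q : ℂ) ^ k * a i * b j = (q : ℂ) ^ k * (a i * b j) := fun j => mul_assoc _ _ _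
    simp only [e2] at hs
    have := mul_left_cancel₀ hu (by linear_combination hs :
      u * ((1 - (q : ℂ) ^ k * (q * (∏ i, a i) / u)) *
          J q (n + 1) (Function.update a i ((q : ℂ) ^ (k + 1) * a i)) b u) =
        u * ((∏ j, (1 - (q : ℂ) ^ k * (a i * b j))) *
          J q (n + 1) (Function.update a i ((q : ℂ) ^ k * a i)) b u))
    linear_combination (-(∏ l ∈ Finset.range k, (1 - (q : ℂ) ^ l * (q * (∏ k, a k) / u)))) * this

/-- One parameter `aᵢ` is sent to `0` along the sequence `qᵏ aᵢ`. -/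
lemma J_kill_one (hq : q ∈ Set.Ioo (0 : ℝ) 1) {a b : Fin (n + 1) → ℂ} (ha : Disc a)
    (hb : Disc b) (hbi : Function.Injective b) (i : Fin (n + 1)) {u : ℂ} (hu : u ≠ 0) :
    J q (n + 1) a b u * ∏ j, qp q (a i * b j) =
      qp q (q * (∏ k, a k) / u) * J q (n + 1) (Function.update a i 0) b u := by
  have h1 : Tendsto (fun k => J q (n + 1) a b u *
      ∏ j, ∏ l ∈ Finset.range k, (1 - (q : ℂ) ^ l * (a i * b j))) atTop
      (𝓝 (J q (n + 1) a b u * ∏ j, qp q (a i * b j))) :=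
    (tendsto_finsetProd _ fun j _ => tendsto_qp hq _).const_mul _
  have h0 : Tendsto (fun k : ℕ => (q : ℂ) ^ k * a i) atTop (𝓝 0) := by
    simpa using (tendsto_pow_atTop_nhds_zero_of_norm_lt_one (norm_lt_one_of_mem hq)).mul_const (a i)
  have h2 : Tendsto (fun k : ℕ => J q (n + 1) (Function.update a i ((q : ℂ) ^ k * a i)) b u) atTop
      (𝓝 (J q (n + 1) (Function.update a i 0) b u)) :=
    tendsto_J hq hu (tendsto_const_nhds.update i h0) tendsto_const_nhds
      (fun k => (J_iterate hq ha hb hbi i hu k).1) (fun _ => hb)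
      (disc_update ha i (by simp)) hb
  have h3 := (tendsto_qp hq (q * (∏ k, a k) / u)).mul h2
  refine tendsto_nhds_unique h1 (h3.congr fun k => ((J_iterate hq ha hb hbi i hu k).2).symm)

lemma disc_zero : Disc (fun _ : Fin m => (0 : ℂ)) := fun _ => by simp

/-- The factor `(q A/u)_∞` appears only with the first parameter sent to `0`, since `A = 0`
afterwards. -/
lemma J_kill_finset (hq : q ∈ Set.Ioo (0 : ℝ) 1) {a b : Fin (n + 1) → ℂ} (ha : Disc a)
    (hb : Disc b) (hbi : Function.Injective b) {u : ℂ} (hu : u ≠ 0)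
    (S : Finset (Fin (n + 1))) :
    J q (n + 1) a b u * ∏ i ∈ S, ∏ j, qp q (a i * b j) =
      (if S = ∅ then 1 else qp q (q * (∏ k, a k) / u)) *
        J q (n + 1) (fun i => if i ∈ S then 0 else a i) b u := by
  induction S using Finset.induction_on with
  | empty => simp
  | insert i S hi ih =>
    have hd : Disc (fun i => if i ∈ S then 0 else a i) := fun i => by
      by_cases h : i ∈ S <;> simp [h, ha i]
    have hk := J_kill_one hq hd hb hbi i hu
    rw [if_neg hi] at hk
    have hup : Function.update (fun i => if i ∈ S then 0 else a i) i 0 =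
        fun k => if k ∈ insert i S then 0 else a k := by
      ext k
      by_cases h : k = i
      · subst h; simp
      · simp [h]
    rw [Finset.prod_insert hi, mul_comm (∏ j, _), ← mul_assoc, ih, mul_assoc, hk, hup,
      if_neg (Finset.insert_ne_empty i S)]
    by_cases hS : S = ∅
    · subst hS; simp
    · obtain ⟨l, hl⟩ := Finset.nonempty_iff_ne_empty.2 hS
      have : ∏ k, (if k ∈ S then 0 else a k) = 0 :=
        Finset.prod_eq_zero (Finset.mem_univ l) (if_pos hl)
      rw [if_neg hS, this]
      simp [qp_zero]

/-- All parameters `a` are sent to `0`; injectivity of `b` is removed by perturbation. -/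
lemma J_kill_left (hq : q ∈ Set.Ioo (0 : ℝ) 1) {a b : Fin (n + 1) → ℂ} (ha : Disc a)
    (hb : Disc b) {u : ℂ} (hu : u ≠ 0) :
    J q (n + 1) a b u * ∏ i, ∏ j, qp q (a i * b j) =
      qp q (q * (∏ k, a k) / u) * J q (n + 1) (fun _ => 0) b u := by
  have inj : ∀ b : Fin (n + 1) → ℂ, Disc b → Function.Injective b →
      J q (n + 1) a b u * ∏ i, ∏ j, qp q (a i * b j) =
      qp q (q * (∏ k, a k) / u) * J q (n + 1) (fun _ => 0) b u := by
    intro b hb hbi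
    have := J_kill_finset hq ha hb hbi hu Finset.univ
    rw [if_neg Finset.univ_nonempty.ne_empty] at this
    simpa using this
  -- the perturbation `bⱼ + ε j` is injective for all small `ε ≠ 0`
  have hpc : Continuous fun ε : ℂ => fun j : Fin (n + 1) => b j + ε * (j : ℕ) := by fun_prop
  have hp : Tendsto (fun ε : ℂ => fun j : Fin (n + 1) => b j + ε * (j : ℕ)) (𝓝[≠] 0) (𝓝 b) := by
    have := hpc.tendsto 0
    simp only [zero_mul, add_zero] at this
    exact this.mono_left nhdsWithin_le_nhds
  have hdisc : ∀ᶠ ε : ℂ in 𝓝[≠] 0, Disc fun j : Fin (n + 1) => b j + ε * (j : ℕ) := by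
    have : ∀ j, ∀ᶠ ε : ℂ in 𝓝[≠] 0, ‖b j + ε * (j : ℕ)‖ < 1 := fun j =>
      ((tendsto_pi_nhds.1 hp j).norm).eventually_lt_const (hb j)
    exact eventually_all.2 this
  have hinj : ∀ᶠ ε : ℂ in 𝓝[≠] 0, Function.Injective fun j : Fin (n + 1) => b j + ε * (j : ℕ) := by
    have : ∀ j k : Fin (n + 1), j ≠ k →
        ∀ᶠ ε : ℂ in 𝓝[≠] 0, b j + ε * (j : ℕ) ≠ b k + ε * (k : ℕ) := by
      intro j k hjk
      have hne : ((j : ℕ) : ℂ) - (k : ℕ) ≠ 0 := by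
        rw [sub_ne_zero]; exact_mod_cast fun h => hjk (Fin.ext h)
      by_cases hz : b j = b k
      · filter_upwards [self_mem_nhdsWithin] with ε hε h
        rw [hz] at h
        have : ε * (((j : ℕ) : ℂ) - (k : ℕ)) = 0 := by linear_combination h
        rcases mul_eq_zero.1 this with h | h
        · exact hε h
        · exact hne h
      · have t1 := tendsto_pi_nhds.1 hp j
        have t2 := tendsto_pi_nhds.1 hp k
        have t3 := (t1.sub t2).eventually_ne (sub_ne_zero.2 hz)
        filter_upwards [t3] with ε h h'
        exact h (sub_eq_zero.2 h')
    have h2 : ∀ᶠ ε : ℂ in 𝓝[≠] 0, ∀ j k : Fin (n + 1), j ≠ k →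
        b j + ε * (j : ℕ) ≠ b k + ε * (k : ℕ) := by
      simp only [eventually_all]; exact this
    filter_upwards [h2] with ε h j k hjk
    by_contra hne
    exact h j k hne hjk
  obtain ⟨ε, hε, hεp⟩ : ∃ ε : ℕ → ℂ, Tendsto ε atTop (𝓝[≠] 0) ∧
      ∀ k, Disc (fun j : Fin (n + 1) => b j + ε k * (j : ℕ)) ∧
        Function.Injective fun j : Fin (n + 1) => b j + ε k * (j : ℕ) :=
    exists_seq_forall_of_frequently (hdisc.and hinj).frequently
  have hb' := hp.comp hε
  have l1 := tendsto_J (n := n + 1) hq hu (tendsto_const_nhds (x := a)) hb' (fun _ => ha)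
    (fun k => (hεp k).1) ha hb
  have l2 := tendsto_J (n := n + 1) hq hu (tendsto_const_nhds (x := fun _ => (0 : ℂ))) hb'
    (fun _ => disc_zero) (fun k => (hεp k).1) disc_zero hb
  have l3 : Tendsto (fun k => ∏ i, ∏ j : Fin (n + 1), qp q (a i * (b j + ε k * (j : ℕ)))) atTop
      (𝓝 (∏ i, ∏ j, qp q (a i * b j))) :=
    tendsto_finsetProd _ fun i _ => tendsto_finsetProd _ fun j _ =>
      ((continuous_qp hq).tendsto _).comp ((tendsto_pi_nhds.1 hb' j).const_mul (a i))
  exact tendsto_nhds_unique (l1.mul l3)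
    ((l2.const_mul _).congr fun k => (inj _ (hεp k).1 (hεp k).2).symm)

/-- The substitution `z ↦ z⁻¹`. -/
lemma J_swap {u : ℂ} (hu : u ≠ 0) (hq : q ∈ Set.Ioo (0 : ℝ) 1) (a b : Fin m → ℂ) :
    J q n a b u = J q n b a (q / u) := by
  have hq0 : (q : ℂ) ≠ 0 := by exact_mod_cast hq.1.ne'
  unfold J
  rw [← integral_tor_inv]
  congr 1; ext z
  unfold Phi
  have h0 : ∀ i, (z i : ℂ) ≠ 0 := fun i => Circle.coe_ne_zero _
  have hZ : ∏ i, (z i : ℂ) ≠ 0 := Finset.prod_ne_zero_iff.2 fun i _ => h0 i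
  congr 1
  · congr 1
    · simp only [Circle.coe_inv, Finset.prod_inv_distrib]
      unfold th
      rw [mul_comm]
      congr 2 <;> field_simp
    · refine Finset.prod_congr rfl fun j _ => ?_
      unfold wt
      refine Finset.prod_congr rfl fun i _ => ?_
      simp only [Circle.coe_inv, div_inv_eq_mul]
      rw [mul_comm (qp q _)]
      rfl
  · unfold dl
    rw [Finset.prod_comm]
    refine Finset.prod_congr rfl fun i _ => Finset.prod_congr rfl fun j _ => ?_
    simp only [Circle.coe_inv, eq_comm (a := i)]
    congr 2
    rw [inv_div_inv]

/-- Dependence on all parameters `a` and `b`. -/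
lemma J_eq (hq : q ∈ Set.Ioo (0 : ℝ) 1) {a b : Fin (n + 1) → ℂ} (ha : Disc a)
    (hb : Disc b) {u : ℂ} (hu : u ≠ 0) :
    J q (n + 1) a b u * ∏ i, ∏ j, qp q (a i * b j) =
      qp q (q * (∏ k, a k) / u) * qp q (u * ∏ k, b k) *
        J q (n + 1) (fun _ : Fin (n + 1) => 0) (fun _ : Fin (n + 1) => 0) u := by
  have hq0 : (q : ℂ) ≠ 0 := by exact_mod_cast hq.1.ne'
  rw [J_kill_left hq ha hb hu, J_swap hu hq]
  have := J_kill_left hq hb (disc_zero (m := n + 1)) (div_ne_zero hq0 hu)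
  simp only [mul_zero, qp_zero, Finset.prod_const_one, mul_one] at this
  rw [this, J_swap hu hq (fun _ => 0), mul_assoc]
  congr 3
  field_simp

end recursion

/-! ### The Poisson kernel and approximation of the point mass at `1` -/

section poisson

/-- The Poisson kernel `(1 - r²) / |1 - r x|²` of the unit disc. -/
noncomputable def pk (r : ℝ) (x : Circle) : ℝ := (1 - r ^ 2) / ‖1 - (r : ℂ) * x‖ ^ 2

lemma one_sub_mul_ne_zero {r : ℝ} (h0 : 0 ≤ r) (h1 : r < 1) (x : Circle) :
    (1 : ℂ) - r * x ≠ 0 := by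
  intro h
  have h2 : ‖(r : ℂ) * x‖ = 1 := by rw [← sub_eq_zero.1 h, norm_one]
  rw [norm_mul, Circle.norm_coe, mul_one, Complex.norm_real, Real.norm_of_nonneg h0] at h2
  exact h1.ne h2

lemma continuous_pk {r : ℝ} (h0 : 0 ≤ r) (h1 : r < 1) : Continuous (pk r) := by
  unfold pk
  exact continuous_const.div (by fun_prop) fun x =>
    pow_ne_zero _ (norm_ne_zero_iff.2 (one_sub_mul_ne_zero h0 h1 x))

lemma pk_nonneg {r : ℝ} (h0 : 0 ≤ r) (h1 : r < 1) (x : Circle) : 0 ≤ pk r x := by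
  unfold pk
  have : 0 ≤ 1 - r ^ 2 := by nlinarith
  positivity

lemma integrable_arc_real {f : Circle → ℝ} (hf : Continuous f) : Integrable f arc :=
  hf.integrable_of_hasCompactSupport (HasCompactSupport.of_compactSpace f)

lemma integral_pk {r : ℝ} (h0 : 0 ≤ r) (h1 : r < 1) : ∫ x, pk r x ∂arc = 2 * Real.pi := by
  have h := DiffContOnCl.circleAverage_poissonKernel_smul (c := 0) (R := 1) (w := (r : ℂ))
    (f := fun _ => (1 : ℂ)) diffContOnCl_const (by simpa [abs_of_nonneg h0] using h1)
  have hn : ∀ x : Circle, ‖(x : ℂ) - r‖ ^ 2 = ‖1 - (r : ℂ) * x‖ ^ 2 := by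
    intro x
    have hx : Complex.normSq (x : ℂ) = 1 := Circle.normSq_coe x
    rw [← Complex.normSq_eq_norm_sq, ← Complex.normSq_eq_norm_sq]
    simp only [Complex.normSq_apply] at hx ⊢
    simp
    linear_combination (1 - r ^ 2) * hx
  have hp : ∀ θ : ℝ, (poissonKernel 0 (r : ℂ) • fun _ => (1 : ℂ)) (circleMap 0 1 θ)
      = ((pk r (Circle.exp θ) : ℝ) : ℂ) := by
    intro θ
    have e : circleMap 0 1 θ = (Circle.exp θ : ℂ) := by simp [circleMap, Circle.coe_exp]
    simp only [Pi.smul_apply', e, poissonKernel, sub_zero, hn, pk, Circle.norm_coe,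
      Complex.norm_real, Real.norm_eq_abs, sq_abs, one_pow]
    simp
  rw [Real.circleAverage] at h
  simp only [hp] at h
  have h2 := integral_arc (f := fun x => ((pk r x : ℝ) : ℂ))
    (Complex.continuous_ofReal.comp (continuous_pk h0 h1))
  rw [← h2, integral_complex_ofReal, Complex.real_smul] at h
  have h3 : (2 * Real.pi)⁻¹ * ∫ x, pk r x ∂arc = 1 := by exact_mod_cast h
  have := Real.two_pi_pos.ne'
  field_simp at h3
  linarith

/-- A continuous function on `[0,1] × 𝕋` integrates against the Poisson kernel, in the limit
`r → 1`, to `2π` times its value at `(1, 1)`. The estimate rests on the fact that `|1 - r x|`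
vanishes only at `(1, 1)`, so that `‖G(r,x) - G(1,1)‖ ≤ ε + C |1 - r x|²`. -/
lemma tendsto_pk {G : unitInterval × Circle → ℂ} (hG : Continuous G) {r : ℕ → unitInterval}
    (hr1 : ∀ k, (r k : ℝ) < 1) (hr : Tendsto r atTop (𝓝 1)) :
    Tendsto (fun k => ∫ x, ((pk (r k) x : ℝ) : ℂ) * G (r k, x) ∂arc) atTop
      (𝓝 (2 * Real.pi * G (1, 1))) := by
  have hbound : ∀ ε > 0, ∃ C : ℝ, 0 ≤ C ∧ ∀ p : unitInterval × Circle,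
      ‖G p - G (1, 1)‖ ≤ ε + C * ‖1 - ((p.1 : ℝ) : ℂ) * p.2‖ ^ 2 := by
    intro ε hε
    have hcK : IsCompact {p : unitInterval × Circle | ε ≤ ‖G p - G (1, 1)‖} :=
      (isClosed_le continuous_const (by fun_prop)).isCompact
    obtain ⟨B, hB⟩ := isCompact_univ.exists_bound_of_continuousOn
      (f := fun p => G p - G (1, 1)) (by fun_prop)
    have hB0 : 0 ≤ B := (norm_nonneg _).trans (hB (1, 1) trivial)
    have hpos : ∀ p ∈ {p : unitInterval × Circle | ε ≤ ‖G p - G (1, 1)‖},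
        0 < ‖1 - ((p.1 : ℝ) : ℂ) * p.2‖ ^ 2 := by
      rintro ⟨s, x⟩ hp
      rcases eq_or_lt_of_le s.2.2 with h | h
      · have hs : s = 1 := Subtype.ext h
        subst hs
        have hx : x ≠ 1 := by
          rintro rfl
          have : ε ≤ 0 := by simpa using hp
          linarith
        have : (1 : ℂ) - x ≠ 0 := fun h => hx (Circle.ext (by simpa using (sub_eq_zero.1 h).symm))
        have h2 : 0 < ‖(1 : ℂ) - x‖ ^ 2 := by positivity
        simpa only [Set.Icc.coe_one, Complex.ofReal_one, one_mul] using h2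
      · have := one_sub_mul_ne_zero s.2.1 h x
        positivity
    obtain ⟨m, hm0, hm⟩ := hcK.exists_forall_le' (f := fun p : unitInterval × Circle =>
      ‖1 - ((p.1 : ℝ) : ℂ) * p.2‖ ^ 2) (by fun_prop) hpos
    refine ⟨B / m, by positivity, fun p => ?_⟩
    by_cases hp : ε ≤ ‖G p - G (1, 1)‖
    · have h1 : B ≤ B / m * ‖1 - ((p.1 : ℝ) : ℂ) * p.2‖ ^ 2 := by
        rw [div_mul_eq_mul_div, le_div_iff₀ hm0]
        exact mul_le_mul_of_nonneg_left (hm p hp) hB0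
      have := hB p trivial
      linarith
    · have : 0 ≤ B / m * ‖1 - ((p.1 : ℝ) : ℂ) * p.2‖ ^ 2 := by positivity
      linarith [not_le.1 hp]
  rw [Metric.tendsto_atTop]
  intro δ hδ
  have hpi := Real.pi_pos
  obtain ⟨C, hC0, hC⟩ := hbound (δ / (4 * Real.pi)) (by positivity)
  have harc : arc.real Set.univ = 2 * Real.pi := by
    have := integral_pk le_rfl one_pos
    simpa [pk] using this
  have hlim : Tendsto (fun k => C * (1 - (r k : ℝ) ^ 2) * (2 * Real.pi)) atTop (𝓝 0) := by
    have h1 : Tendsto (fun k => (r k : ℝ)) atTop (𝓝 1) :=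
      (continuous_subtype_val.tendsto (1 : unitInterval)).comp hr
    have := (((tendsto_const_nhds (x := (1 : ℝ))).sub (h1.pow 2)).const_mul C).mul_const
      (2 * Real.pi)
    simpa using this
  obtain ⟨N, hN⟩ := (hlim.eventually (gt_mem_nhds (half_pos hδ))).exists_forall_of_atTop
  refine ⟨N, fun k hk => ?_⟩
  have hrk := hr1 k
  have hr0 := (r k).2.1
  have hcp := continuous_pk hr0 hrk
  have hcp' : Continuous fun x => ((pk (r k) x : ℝ) : ℂ) := Complex.continuous_ofReal.comp hcp
  have i1 : Integrable (fun x => ((pk (r k) x : ℝ) : ℂ) * G (r k, x)) arc :=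
    integrable_arc_of_continuous (by fun_prop)
  have i2 : Integrable (fun x => ((pk (r k) x : ℝ) : ℂ) * G (1, 1)) arc :=
    integrable_arc_of_continuous (by fun_prop)
  have e : 2 * Real.pi * G (1, 1) = ∫ x, ((pk (r k) x : ℝ) : ℂ) * G (1, 1) ∂arc := by
    rw [integral_mul_const, integral_complex_ofReal, integral_pk hr0 hrk]
    push_cast; ring
  rw [dist_eq_norm, e, ← integral_sub i1 i2]
  have hle : ‖∫ x, (((pk (r k) x : ℝ) : ℂ) * G (r k, x) - ((pk (r k) x : ℝ) : ℂ) * G (1, 1)) ∂arc‖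
      ≤ ∫ x, (pk (r k) x * (δ / (4 * Real.pi)) + C * (1 - (r k : ℝ) ^ 2)) ∂arc := by
    refine norm_integral_le_of_norm_le (integrable_arc_real (by fun_prop)) (ae_of_all _ fun x => ?_)
    rw [← mul_sub, norm_mul, Complex.norm_real, Real.norm_of_nonneg (pk_nonneg hr0 hrk x)]
    have h1 := mul_le_mul_of_nonneg_left (hC (r k, x)) (pk_nonneg hr0 hrk x)
    have h2 : pk (r k) x * ‖1 - ((r k : ℝ) : ℂ) * x‖ ^ 2 = 1 - (r k : ℝ) ^ 2 := by
      unfold pk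
      exact div_mul_cancel₀ _ (pow_ne_zero _ (norm_ne_zero_iff.2 (one_sub_mul_ne_zero hr0 hrk x)))
    calc _ ≤ _ := h1
      _ = _ := by linear_combination C * h2
  refine hle.trans_lt ?_
  rw [integral_add (integrable_arc_real (by fun_prop)) (integrable_const _), integral_mul_const,
    integral_pk hr0 hrk, integral_const, harc, smul_eq_mul]
  have := hN k hk
  have e2 : 2 * Real.pi * (δ / (4 * Real.pi)) = δ / 2 := by field_simp; norm_num
  rw [e2]
  linarith

lemma arc_singleton_one : arc {1} = 0 := by
  unfold arc
  rw [Measure.map_apply (by fun_prop) (measurableSet_singleton 1)]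
  refine Measure.restrict_le_self.absolutelyContinuous ?_
  refine Set.Countable.measure_zero ?_ _
  refine (Set.countable_range fun m : ℤ => m * (2 * Real.pi)).mono ?_
  intro θ hθ
  obtain ⟨m, hm⟩ := Circle.exp_eq_exp.1 (show Circle.exp θ = Circle.exp 0 by simpa using hθ)
  exact ⟨m, by simpa using hm.symm⟩

/-- The square root of the Poisson kernel carries no mass in the limit. -/
lemma tendsto_sqrt_pk {r : ℕ → unitInterval}
    (hr1 : ∀ k, (r k : ℝ) < 1) (hr : Tendsto r atTop (𝓝 1)) :
    Tendsto (fun k => ∫ x, √(pk (r k) x) ∂arc) atTop (𝓝 0) := by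
  have hcs : ∀ k, Continuous fun x => √(pk (r k) x) := fun k =>
    (continuous_pk (r k).2.1 (hr1 k)).sqrt
  have hcp : ∀ k, Continuous (pk (r k)) := fun k => continuous_pk (r k).2.1 (hr1 k)
  have h1 : Tendsto (fun k => (r k : ℝ)) atTop (𝓝 1) :=
    (continuous_subtype_val.tendsto (1 : unitInterval)).comp hr
  have hmin : ∀ M : ℝ, 0 < M →
      Tendsto (fun k => ∫ x, min (√(pk (r k) x)) M ∂arc) atTop (𝓝 0) := by
    intro M hM
    have := tendsto_integral_of_dominated_convergence (μ := arc)
      (F := fun k x => min (√(pk (r k) x)) M) (f := fun _ => (0 : ℝ)) (fun _ => M)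
      (fun k => ((hcs k).min continuous_const).aestronglyMeasurable) (integrable_const _)
      (fun k => ae_of_all _ fun x => by
        rw [Real.norm_of_nonneg (le_min (Real.sqrt_nonneg _) hM.le)]
        exact min_le_right _ _) ?_
    · simpa using this
    · have hae : ∀ᵐ x ∂arc, x ≠ 1 := by
        rw [ae_iff]; simpa using arc_singleton_one
      filter_upwards [hae] with x hx
      have hx' : ‖(1 : ℂ) - x‖ ^ 2 ≠ 0 := by
        have : (1 : ℂ) - x ≠ 0 := fun h => hx (Circle.ext (by simpa using (sub_eq_zero.1 h).symm))
        positivity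
      have hpk : Tendsto (fun k => pk (r k) x) atTop (𝓝 0) := by
        have h2 : Tendsto (fun k => ‖1 - ((r k : ℝ) : ℂ) * x‖ ^ 2) atTop (𝓝 (‖(1 : ℂ) - x‖ ^ 2)) := by
          have : Continuous fun s : ℝ => ‖1 - (s : ℂ) * x‖ ^ 2 := by fun_prop
          have h2 := (this.tendsto 1).comp h1
          simp only [Complex.ofReal_one, one_mul] at h2
          exact h2
        have := ((tendsto_const_nhds (x := (1 : ℝ))).sub (h1.pow 2)).div h2 hx'
        simp only [one_pow, sub_self, zero_div] at this
        exact this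
      have h3 := (hpk.sqrt).min (tendsto_const_nhds (x := M))
      simpa [hM.le] using h3
  rw [Metric.tendsto_atTop]
  intro δ hδ
  have hpi := Real.pi_pos
  have hM : 0 < 4 * Real.pi / δ := by positivity
  obtain ⟨N, hN⟩ := ((hmin _ hM).eventually (gt_mem_nhds (half_pos hδ))).exists_forall_of_atTop
  refine ⟨N, fun k hk => ?_⟩
  rw [dist_zero_right, Real.norm_of_nonneg (integral_nonneg fun x => Real.sqrt_nonneg _)]
  have hle : ∫ x, √(pk (r k) x) ∂arc ≤
      ∫ x, (pk (r k) x * (δ / (4 * Real.pi)) + min (√(pk (r k) x)) (4 * Real.pi / δ)) ∂arc := by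
    refine integral_mono (integrable_arc_real (hcs k)) (integrable_arc_real ?_) fun x => ?_
    · exact ((hcp k).mul continuous_const).add ((hcs k).min continuous_const)
    have hp := pk_nonneg (r k).2.1 (hr1 k) x
    have hs := Real.mul_self_sqrt hp
    have hs0 := Real.sqrt_nonneg (pk (r k) x)
    have e : δ / (4 * Real.pi) * (4 * Real.pi / δ) = 1 := by field_simp
    have hd : 0 < δ / (4 * Real.pi) := by positivity
    simp only
    rcases le_total (√(pk (r k) x)) (4 * Real.pi / δ) with h | h
    · rw [min_eq_left h]
      nlinarith [mul_nonneg hp hd.le]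
    · rw [min_eq_right h]
      have h4 := mul_le_mul_of_nonneg_left h hs0
      have h5 := mul_le_mul_of_nonneg_right h4 hd.le
      rw [hs] at h5
      calc √(pk (r k) x) = √(pk (r k) x) * (4 * Real.pi / δ) * (δ / (4 * Real.pi)) := by
            rw [mul_assoc, mul_comm (4 * Real.pi / δ), e, mul_one]
        _ ≤ _ := by linarith
  refine hle.trans_lt ?_
  have i1 : Integrable (fun x => pk (r k) x * (δ / (4 * Real.pi))) arc :=
    (integrable_arc_real (hcp k)).mul_const _
  rw [integral_add i1
    (integrable_arc_real ((hcs k).min continuous_const)), integral_mul_const,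
    integral_pk (r k).2.1 (hr1 k)]
  have := hN k hk
  have e2 : 2 * Real.pi * (δ / (4 * Real.pi)) = δ / 2 := by field_simp; norm_num
  rw [e2]
  linarith

end poisson

/-! ### Limits of torus integrals against singular kernels -/

section pinch

variable {n : ℕ}

/-- Fubini for the torus, with the `j`-th coordinate integrated last. -/
lemma integral_tor_succ_symm (j : Fin (n + 1)) {f : (Fin (n + 1) → Circle) → ℂ}
    (hf : Continuous f) :
    ∫ z, f z ∂(tor (n + 1)) = ∫ x, ∫ z, f (j.insertNth x z) ∂(tor n) ∂arc := by
  rw [integral_tor_succ j hf]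
  exact integral_integral_swap ((hf.comp ((continuous_insertNth j).comp
    continuous_swap)).integrable_of_hasCompactSupport (HasCompactSupport.of_compactSpace _))

/-- The Poisson kernel in one coordinate concentrates the integral on the slice `zⱼ = 1`. -/
lemma tendsto_diag (j : Fin (n + 1)) {T : unitInterval × (Fin (n + 1) → Circle) → ℂ}
    (hT : Continuous T) {r : ℕ → unitInterval}
    (hr1 : ∀ k, (r k : ℝ) < 1) (hr : Tendsto r atTop (𝓝 1)) :
    Tendsto (fun k => ∫ z, ((pk (r k) (z j) : ℝ) : ℂ) * T (r k, z) ∂(tor (n + 1))) atTop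
      (𝓝 (2 * Real.pi * ∫ z, T (1, j.insertNth 1 z) ∂(tor n))) := by
  have hc : Continuous fun p : (unitInterval × Circle) × (Fin n → Circle) =>
      T (p.1.1, (j.insertNth p.1.2 p.2 : Fin (n + 1) → Circle)) :=
    hT.comp (continuous_fst.fst.prodMk ((continuous_insertNth j).comp
      (continuous_fst.snd.prodMk continuous_snd)))
  have hG : Continuous fun p : unitInterval × Circle =>
      ∫ z, T (p.1, (j.insertNth p.2 z : Fin (n + 1) → Circle)) ∂(tor n) :=
    continuous_parametric_integral_of_continuous (μ := tor n)
      (f := fun (p : unitInterval × Circle) z =>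
        T (p.1, (j.insertNth p.2 z : Fin (n + 1) → Circle))) hc isCompact_univ |> (by
      simpa using ·)
  refine (tendsto_pk hG hr1 hr).congr fun k => ?_
  have hp := continuous_pk (r k).2.1 (hr1 k)
  rw [integral_tor_succ_symm j]
  · refine integral_congr_ae (ae_of_all _ fun x => ?_)
    simp only [Fin.insertNth_apply_same]
    rw [integral_const_mul]
  · exact (Complex.continuous_ofReal.comp (hp.comp (continuous_apply j))).mul
      (hT.comp (continuous_const.prodMk continuous_id))

/-- The kernel is bounded by the product of the square roots of the Poisson kernels at `zⱼ` and `zₗ`,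
each of which carries no mass in the limit. -/
lemma tendsto_cross {j l : Fin n} (hjl : j ≠ l) {T : unitInterval × (Fin n → Circle) → ℂ}
    (hT : Continuous T) {r : ℕ → unitInterval}
    (hr1 : ∀ k, (r k : ℝ) < 1) (hr : Tendsto r atTop (𝓝 1)) :
    Tendsto (fun k => ∫ z, ((1 - ((r k : ℝ) : ℂ) ^ 2) / ((1 - ((r k : ℝ) : ℂ) * z j) *
      (starRingEnd ℂ) (1 - ((r k : ℝ) : ℂ) * z l))) * T (r k, z) ∂(tor n)) atTop (𝓝 0) := by
  obtain ⟨B, hB⟩ := isCompact_univ.exists_bound_of_continuousOn (f := T) (by fun_prop)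
  have hφc : ∀ k i, Continuous fun x => if i = j ∨ i = l then √(pk (r k) x) else 1 := by
    intro k i
    split_ifs
    · exact (continuous_pk (r k).2.1 (hr1 k)).sqrt
    · exact continuous_const
  have hlim : Tendsto (fun k => B * ∏ i : Fin n,
      ∫ x, (if i = j ∨ i = l then √(pk (r k) x) else 1) ∂arc) atTop (𝓝 0) := by
    have h : Tendsto (fun k => ∏ i : Fin n,
        ∫ x, (if i = j ∨ i = l then √(pk (r k) x) else 1) ∂arc) atTop
        (𝓝 (∏ i : Fin n, if i = j ∨ i = l then 0 else arc.real Set.univ)) := by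
      refine tendsto_finsetProd _ fun i _ => ?_
      split_ifs
      · exact tendsto_sqrt_pk hr1 hr
      · simp
    rw [Finset.prod_eq_zero (i := j) (Finset.mem_univ _) (by simp)] at h
    simpa using h.const_mul B
  refine squeeze_zero_norm (fun k => ?_) hlim
  rw [← integral_fintype_prod_eq_prod (𝕜 := ℝ) (μ := fun _ => arc)
    (fun (i : Fin n) x => if i = j ∨ i = l then √(pk (r k) x) else 1), ← integral_const_mul]
  have hcp : Continuous fun z : Fin n → Circle =>
      B * ∏ i, (if i = j ∨ i = l then √(pk (r k) (z i)) else 1) :=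
    continuous_const.mul (continuous_finsetProd _ fun i _ => (hφc k i).comp (continuous_apply i))
  refine norm_integral_le_of_norm_le
    (hcp.integrable_of_hasCompactSupport (HasCompactSupport.of_compactSpace _))
    (ae_of_all _ fun z => ?_)
  have e : ∏ i, (if i = j ∨ i = l then √(pk (r k) (z i)) else 1)
      = √(pk (r k) (z j)) * √(pk (r k) (z l)) := by
    rw [← Finset.prod_pair (f := fun i => √(pk (r k) (z i))) hjl, Finset.prod_ite]
    simp only [Finset.prod_const_one, mul_one]
    congr 1
    ext i; simp
  rw [e, norm_mul, mul_comm]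
  refine mul_le_mul (hB _ trivial) (le_of_eq ?_) (norm_nonneg _)
    ((norm_nonneg _).trans (hB (1, fun _ => 1) trivial))
  have hr0 := (r k).2.1
  have h0 : 0 ≤ 1 - (r k : ℝ) ^ 2 := by nlinarith [hr1 k]
  have hn : ‖1 - (((r k : ℝ) : ℂ)) ^ 2‖ = 1 - (r k : ℝ) ^ 2 := by
    rw [← Complex.ofReal_one, ← Complex.ofReal_pow, ← Complex.ofReal_sub, Complex.norm_real,
      Real.norm_of_nonneg h0]
  unfold pk
  rw [Real.sqrt_div h0, Real.sqrt_div h0, Real.sqrt_sq (norm_nonneg _),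
    Real.sqrt_sq (norm_nonneg _), div_mul_div_comm, Real.mul_self_sqrt h0, norm_div, hn, norm_mul,
    RCLike.norm_conj]

end pinch

/-! ### Vandermonde expansion of the pinched integrand -/

section vandermonde

variable {q : ℝ} {n : ℕ}

lemma prod_pairs (f : Fin n → Fin n → ℂ) :
    (∏ i, ∏ j, if i = j then 1 else f i j) = ∏ i, ∏ j ∈ Finset.Ioi i, f i j * f j i := by
  have h1 : ∀ i : Fin n, (∏ j, if i = j then 1 else f i j)
      = (∏ j ∈ Finset.Ioi i, f i j) * ∏ j ∈ Finset.Iio i, f i j := by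
    intro i
    rw [← Finset.prod_filter_mul_prod_filter_not Finset.univ (fun j => i < j),
      ← Finset.prod_filter_mul_prod_filter_not (Finset.univ.filter fun j => ¬ i < j)
        (fun j => j < i)]
    have e1 : Finset.univ.filter (fun j => i < j) = Finset.Ioi i := by ext; simp
    have e2 : (Finset.univ.filter fun j => ¬ i < j).filter (fun j => j < i) = Finset.Iio i := by
      ext j; simp; exact fun h => h.le
    rw [e1, e2]
    congr 1
    · exact Finset.prod_congr rfl fun j hj => if_neg (Finset.mem_Ioi.1 hj).ne
    · rw [Finset.prod_congr rfl fun j hj => if_neg (Finset.mem_Iio.1 hj).ne',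
        Finset.prod_eq_one (s := Finset.filter _ _), mul_one]
      intro j hj
      simp only [Finset.mem_filter, Finset.mem_univ, true_and, not_lt] at hj
      exact if_pos (le_antisymm hj.2 hj.1)
  have h2 : ∏ i, ∏ j ∈ Finset.Iio i, f i j = ∏ i, ∏ j ∈ Finset.Ioi i, f j i := by
    refine Finset.prod_comm' ?_
    intro x y; simp
  simp only [h1, Finset.prod_mul_distrib, h2]

/-- The Vandermonde product `∏_{i<j} (vⱼ - vᵢ)`. -/
noncomputable def vdm (v : Fin n → ℂ) : ℂ := ∏ i, ∏ j ∈ Finset.Ioi i, (v j - v i)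

/-- Expansion of the Vandermonde determinant along its column of ones. -/
lemma vdm_expand (v : Fin (n + 1) → ℂ) :
    vdm v = ∑ j : Fin (n + 1), (-1) ^ (j : ℕ) * (vdm (fun i => v (j.succAbove i)) * ∏ i, v (j.succAbove i)) := by
  unfold vdm
  rw [← Matrix.det_vandermonde, Matrix.det_succ_column_zero]
  refine Finset.sum_congr rfl fun j _ => ?_
  have : (Matrix.vandermonde v).submatrix j.succAbove Fin.succ
      = Matrix.diagonal (fun i => v (j.succAbove i)) *
        Matrix.vandermonde (fun i => v (j.succAbove i)) := by
    ext i k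
    simp [Matrix.vandermonde_apply, Matrix.diagonal_mul, pow_succ']
  rw [this, Matrix.det_mul, Matrix.det_diagonal, Matrix.det_vandermonde]
  simp [Matrix.vandermonde_apply]
  ring

lemma vdm_div_prod {v : Fin (n + 1) → ℂ} (hv : ∀ i, v i ≠ 0) :
    vdm v / ∏ i, v i =
      ∑ j : Fin (n + 1), (-1) ^ (j : ℕ) * vdm (fun i => v (j.succAbove i)) / v j := by
  rw [vdm_expand, Finset.sum_div]
  refine Finset.sum_congr rfl fun j _ => ?_
  rw [Fin.prod_univ_succAbove _ j]
  have h1 := hv j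
  have h2 : ∏ i, v (j.succAbove i) ≠ 0 := Finset.prod_ne_zero_iff.2 fun i _ => hv _
  field_simp

/-- The part of `dl` that does not vanish on the diagonals of the torus. -/
noncomputable def core (q : ℝ) (z : Fin n → ℂ) : ℂ :=
  ∏ i, ∏ j, if i = j then 1 else qp q (q * (z i / z j))

lemma dl_eq_core (hq : q ∈ Set.Ioo (0 : ℝ) 1) (z : Fin n → ℂ) :
    dl q z = (∏ i, ∏ j ∈ Finset.Ioi i, (1 - z i / z j) * (1 - z j / z i)) * core q z := by
  rw [← prod_pairs (fun i j => 1 - z i / z j)]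
  unfold dl core
  simp only [← Finset.prod_mul_distrib]
  refine Finset.prod_congr rfl fun i _ => Finset.prod_congr rfl fun j _ => ?_
  split_ifs
  · simp
  · exact qp_step hq _

lemma conj_coe (x : Circle) : (starRingEnd ℂ) (x : ℂ) = (x : ℂ)⁻¹ := by
  rw [← Circle.coe_inv_eq_conj, Circle.coe_inv]

lemma vdm_mul_conj (r : ℝ) (z : Fin n → Circle) :
    vdm (fun i => 1 - (r : ℂ) * z i) * (starRingEnd ℂ) (vdm (fun i => 1 - (r : ℂ) * z i)) =
      (∏ i : Fin n, ∏ _j ∈ Finset.Ioi i, (r : ℂ) ^ 2) *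
      ∏ i, ∏ j ∈ Finset.Ioi i, (1 - (z i : ℂ) / z j) * (1 - (z j : ℂ) / z i) := by
  unfold vdm
  simp only [map_prod, ← Finset.prod_mul_distrib]
  refine Finset.prod_congr rfl fun i _ => Finset.prod_congr rfl fun j _ => ?_
  simp only [map_sub, map_mul, map_one, Complex.conj_ofReal, conj_coe]
  have := Circle.coe_ne_zero (z i)
  have := Circle.coe_ne_zero (z j)
  field_simp
  ring

/-- The factor of the integrand with parameters `a = b = (r, 0, …, 0)` that stays regular at
`r = 1`. -/
noncomputable def reg (q : ℝ) (u : ℂ) (r : ℝ) (z : Fin n → ℂ) : ℂ :=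
  th q (u / ∏ i, z i) * core q z * ∏ j, (qp q (q * (r / z j)) * qp q (q * (r * z j)))⁻¹

/-- The parameters `(r, 0, …, 0)`. -/
noncomputable def sing (n : ℕ) (r : ℝ) : Fin (n + 1) → ℂ := Fin.cons (r : ℂ) fun _ => 0

lemma wt_sing (hq : q ∈ Set.Ioo (0 : ℝ) 1) (r : ℝ) (x : Circle) :
    wt q (sing n r) (sing n r) x =
      ((1 - (r : ℂ) * x) * (starRingEnd ℂ) (1 - (r : ℂ) * x))⁻¹ *
        (qp q (q * (r / x)) * qp q (q * (r * x)))⁻¹ := by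
  unfold wt sing
  rw [Fin.prod_univ_succ]
  simp only [Fin.cons_zero, Fin.cons_succ, zero_div, zero_mul, qp_zero, mul_one, inv_one,
    Finset.prod_const_one, map_sub, map_mul, map_one, Complex.conj_ofReal, conj_coe]
  rw [qp_step hq (r / (x : ℂ)), qp_step hq ((r : ℂ) * x), ← mul_inv]
  congr 1
  rw [div_eq_mul_inv (r : ℂ)]
  ring

/-- The terms of the expansion of the pinched integrand. -/
noncomputable def term (q : ℝ) (u : ℂ) (j l : Fin (n + 1))
    (p : unitInterval × (Fin (n + 1) → Circle)) : ℂ :=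
  (-1) ^ (j : ℕ) * (-1) ^ (l : ℕ) * reg q u p.1 (fun i => (p.2 i : ℂ)) *
    vdm (fun i => 1 - ((p.1 : ℝ) : ℂ) * p.2 (j.succAbove i)) *
    (starRingEnd ℂ) (vdm (fun i => 1 - ((p.1 : ℝ) : ℂ) * p.2 (l.succAbove i)))

/-- On the torus the square `|vdm|²` cancels all but a `1 / (yⱼ conj yₗ)` singularity of the pinched
integrand, where `yⱼ = 1 - r zⱼ`. -/
lemma Phi_sing (hq : q ∈ Set.Ioo (0 : ℝ) 1) (u : ℂ) {r : unitInterval} (hr1 : (r : ℝ) < 1)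
    (z : Fin (n + 1) → Circle) :
    (∏ i : Fin (n + 1), ∏ _j ∈ Finset.Ioi i, ((r : ℝ) : ℂ) ^ 2) *
        Phi q u (sing n r) (sing n r) (fun i => (z i : ℂ)) =
      ∑ j, ∑ l, ((1 - ((r : ℝ) : ℂ) * z j) * (starRingEnd ℂ) (1 - ((r : ℝ) : ℂ) * z l))⁻¹ *
        term q u j l (r, z) := by
  have hy : ∀ i, (1 - ((r : ℝ) : ℂ) * z i) ≠ 0 := fun i => one_sub_mul_ne_zero r.2.1 hr1 _
  have h := vdm_div_prod hy
  have hs := vdm_mul_conj r z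
  unfold Phi
  simp only [wt_sing hq, dl_eq_core hq, Finset.prod_mul_distrib]
  calc _ = (vdm (fun i => 1 - ((r : ℝ) : ℂ) * z i) *
        (starRingEnd ℂ) (vdm (fun i => 1 - ((r : ℝ) : ℂ) * z i))) *
        (∏ i, ((1 - ((r : ℝ) : ℂ) * z i) * (starRingEnd ℂ) (1 - ((r : ℝ) : ℂ) * z i))⁻¹) *
        reg q u r (fun i => (z i : ℂ)) := by
        rw [hs]; unfold reg; simp only [Finset.prod_mul_distrib]; ring
    _ = (vdm (fun i => 1 - ((r : ℝ) : ℂ) * z i) / ∏ i, (1 - ((r : ℝ) : ℂ) * z i)) *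
        (starRingEnd ℂ) (vdm (fun i => 1 - ((r : ℝ) : ℂ) * z i) / ∏ i, (1 - ((r : ℝ) : ℂ) * z i)) *
        reg q u r (fun i => (z i : ℂ)) := by
        simp only [Finset.prod_inv_distrib, Finset.prod_mul_distrib, map_div₀, map_prod]
        ring
    _ = _ := by
        rw [h, map_sum, Finset.sum_mul_sum, Finset.sum_mul]
        refine Finset.sum_congr rfl fun j _ => ?_
        rw [Finset.sum_mul]
        refine Finset.sum_congr rfl fun l _ => ?_
        unfold term
        simp only [map_div₀, map_mul, map_pow, map_neg, map_one, mul_inv]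
        ring

lemma core_insertNth (j : Fin (n + 1)) (x : ℂ) (z : Fin n → ℂ) :
    core q (j.insertNth x z : Fin (n + 1) → ℂ) =
      (∏ k, qp q (q * (x / z k)) * qp q (q * (z k / x))) * core q z := by
  unfold core
  rw [Fin.prod_univ_succAbove _ j]
  simp only [Fin.prod_univ_succAbove _ j, Fin.insertNth_apply_same, Fin.insertNth_apply_succAbove,
    (Fin.succAbove_ne j _).symm, Fin.succAbove_ne j _, if_true, if_false, one_mul,
    Fin.succAbove_right_inj, Finset.prod_mul_distrib]
  ring

lemma qp_mul_circle_ne_zero (hq : q ∈ Set.Ioo (0 : ℝ) 1) {x : ℂ} (hx : ‖x‖ ≤ 1) :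
    qp q (q * x) ≠ 0 := by
  refine qp_ne_zero hq ?_
  rw [norm_mul, Complex.norm_real, Real.norm_of_nonneg hq.1.le]
  nlinarith [hq.1, hq.2, norm_nonneg x]

/-- At the pinch point `r = zⱼ = 1` the diagonal terms reduce to the integrand in one variable
less. -/
lemma term_diag (hq : q ∈ Set.Ioo (0 : ℝ) 1) (u : ℂ) (j : Fin (n + 1)) (z : Fin n → Circle) :
    term q u j j (1, j.insertNth 1 z) =
      (qp q q ^ 2)⁻¹ * Phi q u (fun _ : Fin 1 => 0) (fun _ => 0) (fun i => (z i : ℂ)) := by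
  have e : (fun i => ((j.insertNth (1 : Circle) z : Fin (n + 1) → Circle) i : ℂ))
      = j.insertNth (1 : ℂ) (fun i => (z i : ℂ)) := by
    ext i
    refine Fin.succAboveCases j ?_ (fun i => ?_) i <;> simp
  have hs := vdm_mul_conj 1 z
  simp only [Complex.ofReal_one, one_mul, one_pow, Finset.prod_const_one] at hs
  unfold term reg Phi
  simp only [e, core_insertNth, dl_eq_core hq, Fin.insertNth_apply_succAbove, Set.Icc.coe_one,
    Complex.ofReal_one, one_mul, ← hs]
  simp only [Fin.prod_univ_succAbove _ j, Fin.insertNth_apply_same, Fin.insertNth_apply_succAbove,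
    one_mul, div_one, mul_one, wt, zero_div, zero_mul, qp_zero, inv_one, Finset.prod_const_one, Circle.coe_one]
  have h1 : ∏ k, (qp q (q * (1 / (z k : ℂ))) * qp q (q * (z k : ℂ))) ≠ 0 :=
    Finset.prod_ne_zero_iff.2 fun k _ => mul_ne_zero
      (qp_mul_circle_ne_zero hq (by simp [Circle.norm_coe]))
      (qp_mul_circle_ne_zero hq (by simp [Circle.norm_coe]))
  have h2 : ((-1 : ℂ) ^ (j : ℕ)) * (-1) ^ (j : ℕ) = 1 := by
    rw [← mul_pow]; simp
  rw [Finset.prod_inv_distrib, h2]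
  have h3 : qp q q ≠ 0 := by simpa using qp_mul_circle_ne_zero hq (x := 1) (by simp)
  generalize ∏ k, (qp q (q * (1 / (z k : ℂ))) * qp q (q * (z k : ℂ))) = P at *
  field_simp

lemma continuous_term (hq : q ∈ Set.Ioo (0 : ℝ) 1) {u : ℂ} (hu : u ≠ 0) (j l : Fin (n + 1)) :
    Continuous (term q u j l) := by
  have hqp := continuous_qp hq
  have hz : ∀ i, Continuous fun p : unitInterval × (Fin (n + 1) → Circle) => (p.2 i : ℂ) := by
    intro i; fun_prop
  have h0 : ∀ p : unitInterval × (Fin (n + 1) → Circle), ∏ i, (p.2 i : ℂ) ≠ 0 := fun p =>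
    Finset.prod_ne_zero_iff.2 fun i _ => Circle.coe_ne_zero _
  have hv : ∀ j : Fin (n + 1), Continuous fun p : unitInterval × (Fin (n + 1) → Circle) =>
      vdm (fun i => 1 - ((p.1 : ℝ) : ℂ) * p.2 (j.succAbove i)) := by
    intro j
    unfold vdm
    fun_prop
  have hreg : Continuous fun p : unitInterval × (Fin (n + 1) → Circle) =>
      reg q u p.1 (fun i => (p.2 i : ℂ)) := by
    unfold reg core
    refine ((continuous_th hq (continuous_const.div (by fun_prop) h0)
      fun p => div_ne_zero hu (h0 p)).mul ?_).mul ?_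
    · refine continuous_finsetProd _ fun i _ => continuous_finsetProd _ fun j _ => ?_
      split_ifs
      · exact continuous_const
      · exact hqp.comp (continuous_const.mul ((hz i).div (hz j) fun p => Circle.coe_ne_zero _))
    · have hr : ∀ r : unitInterval, ‖((r : ℝ) : ℂ)‖ ≤ 1 := fun r => by
        rw [Complex.norm_real, Real.norm_of_nonneg r.2.1]; exact r.2.2
      refine continuous_finsetProd _ fun j _ => Continuous.inv₀ ?_ fun p => mul_ne_zero
        (qp_mul_circle_ne_zero hq (by simpa [Circle.norm_coe] using hr p.1))
        (qp_mul_circle_ne_zero hq (by simpa [Circle.norm_coe] using hr p.1))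
      have hr' : Continuous fun p : unitInterval × (Fin (n + 1) → Circle) =>
        ((p.1 : ℝ) : ℂ) := by fun_prop
      exact (hqp.comp (continuous_const.mul (hr'.div (hz j) fun p => Circle.coe_ne_zero _))).mul
        (hqp.comp (continuous_const.mul (hr'.mul (hz j))))
  unfold term
  exact ((continuous_const.mul hreg).mul (hv j)).mul (Complex.continuous_conj.comp (hv l))

end vandermonde

/-! ### The pinch limit -/

section constant

variable {q : ℝ} {n : ℕ}

lemma disc_sing {r : ℝ} (h0 : 0 ≤ r) (h1 : r < 1) : Disc (sing n r) := by
  intro i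
  refine Fin.cases ?_ (fun i => ?_) i
  · simpa [sing, abs_of_nonneg h0] using h1
  · simp [sing]

/-- The pinch: with parameters `a = b = (r, 0, …, 0)` the integral has a simple pole at `r² = 1`,
whose coefficient is the integral in one variable less. -/
lemma tendsto_pinch (hq : q ∈ Set.Ioo (0 : ℝ) 1) {u : ℂ} (hu : u ≠ 0) {r : ℕ → unitInterval}
    (hr0 : ∀ k, 0 < (r k : ℝ)) (hr1 : ∀ k, (r k : ℝ) < 1) (hr : Tendsto r atTop (𝓝 1)) :
    Tendsto (fun k => (1 - ((r k : ℝ) : ℂ) ^ 2) * J q (n + 1) (sing n (r k)) (sing n (r k)) u) atTop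
      (𝓝 (2 * Real.pi * (n + 1) * (qp q q ^ 2)⁻¹ *
        J q n (fun _ : Fin 1 => 0) (fun _ : Fin 1 => 0) u)) := by
  have hrC : Tendsto (fun k => ((r k : ℝ) : ℂ)) atTop (𝓝 1) := by
    have : Continuous fun s : unitInterval => ((s : ℝ) : ℂ) := by fun_prop
    have h := (this.tendsto 1).comp hr
    simp only [Set.Icc.coe_one, Complex.ofReal_one] at h
    exact h
  have hc : Tendsto (fun k => ∏ i : Fin (n + 1), ∏ _j ∈ Finset.Ioi i, ((r k : ℝ) : ℂ) ^ 2) atTop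
      (𝓝 1) := by
    have : Tendsto (fun k => ∏ i : Fin (n + 1), ∏ _j ∈ Finset.Ioi i, ((r k : ℝ) : ℂ) ^ 2) atTop
        (𝓝 (∏ i : Fin (n + 1), ∏ _j ∈ Finset.Ioi i, (1 : ℂ) ^ 2)) :=
      tendsto_finsetProd _ fun i _ => tendsto_finsetProd _ fun j _ => hrC.pow 2
    simpa using this
  have hc0 : ∀ k, ∏ i : Fin (n + 1), ∏ _j ∈ Finset.Ioi i, ((r k : ℝ) : ℂ) ^ 2 ≠ 0 := fun k =>
    Finset.prod_ne_zero_iff.2 fun i _ => Finset.prod_ne_zero_iff.2 fun j _ =>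
      pow_ne_zero _ (by exact_mod_cast (hr0 k).ne')
  set A : Fin (n + 1) → Fin (n + 1) → ℕ → (Fin (n + 1) → Circle) → ℂ := fun j l k z =>
    ((1 - ((r k : ℝ) : ℂ) ^ 2) / ((1 - ((r k : ℝ) : ℂ) * z j) *
      (starRingEnd ℂ) (1 - ((r k : ℝ) : ℂ) * z l))) * term q u j l (r k, z) with hA
  have hAc : ∀ j l k, Continuous (A j l k) := by
    intro j l k
    refine (continuous_const.div ?_ fun z => ?_).mul
      ((continuous_term hq hu j l).comp (continuous_const.prodMk continuous_id))
    · have h1 : ∀ i, Continuous fun z : Fin (n + 1) → Circle => 1 - ((r k : ℝ) : ℂ) * z i := by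
        intro i; fun_prop
      exact (h1 j).mul (Complex.continuous_conj.comp (h1 l))
    · have h2 := one_sub_mul_ne_zero (r k).2.1 (hr1 k)
      exact mul_ne_zero (h2 _) ((map_ne_zero _).2 (h2 _))
  have hsum : ∀ k, (∏ i : Fin (n + 1), ∏ _j ∈ Finset.Ioi i, ((r k : ℝ) : ℂ) ^ 2) *
      ((1 - ((r k : ℝ) : ℂ) ^ 2) * J q (n + 1) (sing n (r k)) (sing n (r k)) u) =
      ∑ j, ∑ l, ∫ z, A j l k z ∂(tor (n + 1)) := by
    intro k
    have e : ∀ j, ∑ l, ∫ z, A j l k z ∂(tor (n + 1)) = ∫ z, ∑ l, A j l k z ∂(tor (n + 1)) :=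
      fun j => (integral_finsetSum _ fun l _ => integrable_of_continuous (hAc j l k)).symm
    simp only [e]
    rw [← integral_finsetSum _ fun j _ => integrable_finsetSum _ fun l _ =>
      integrable_of_continuous (hAc j l k), J, ← mul_assoc, ← integral_const_mul]
    refine integral_congr_ae (ae_of_all _ fun z => ?_)
    simp only [hA]
    rw [mul_right_comm, Phi_sing hq u (hr1 k), Finset.sum_mul]
    refine Finset.sum_congr rfl fun j _ => ?_
    rw [Finset.sum_mul]
    refine Finset.sum_congr rfl fun l _ => ?_
    ring
  have hlim : Tendsto (fun k => ∑ j, ∑ l, ∫ z, A j l k z ∂(tor (n + 1))) atTop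
      (𝓝 (∑ j : Fin (n + 1), ∑ l, if j = l then
        2 * Real.pi * ((qp q q ^ 2)⁻¹ * J q n (fun _ : Fin 1 => 0) (fun _ : Fin 1 => 0) u)
        else 0)) := by
    refine tendsto_finsetSum _ fun j _ => tendsto_finsetSum _ fun l _ => ?_
    split_ifs with h
    · subst h
      have h1 := tendsto_diag j (continuous_term hq hu j j) hr1 hr
      simp only [term_diag hq] at h1
      rw [integral_const_mul] at h1
      refine h1.congr fun k => integral_congr_ae (ae_of_all _ fun z => ?_)
      simp only [hA, pk]
      rw [Complex.mul_conj, Complex.normSq_eq_norm_sq]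
      push_cast
      rfl
    · exact tendsto_cross h (continuous_term hq hu j l) hr1 hr
  have h := hlim.div hc one_ne_zero
  simp only [Finset.sum_ite_eq, Finset.mem_univ, if_true, Finset.sum_const, Finset.card_univ,
    Fintype.card_fin, nsmul_eq_mul, div_one] at h
  convert h.congr fun k => ?_ using 2
  · push_cast; ring
  · rw [Pi.div_apply, ← hsum k, mul_div_cancel_left₀ _ (hc0 k)]

/-- With vanishing parameters the number of parameters is immaterial. -/
lemma J_zero_param (m m' : ℕ) (u : ℂ) :
    J q n (fun _ : Fin m => 0) (fun _ : Fin m => 0) u =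
      J q n (fun _ : Fin m' => 0) (fun _ : Fin m' => 0) u := by
  unfold J Phi
  simp [wt, qp_zero]

lemma exists_seq : ∃ r : ℕ → unitInterval, (∀ k, 0 < (r k : ℝ)) ∧ (∀ k, (r k : ℝ) < 1) ∧
    Tendsto r atTop (𝓝 1) := by
  have h : ∀ k : ℕ, 0 < ((k : ℝ) + 1) / (k + 2) ∧ ((k : ℝ) + 1) / (k + 2) < 1 := fun k =>
    ⟨by positivity, by rw [div_lt_one (by positivity)]; linarith⟩
  refine ⟨fun k => ⟨((k : ℝ) + 1) / (k + 2), (h k).1.le, (h k).2.le⟩, fun k => (h k).1,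
    fun k => (h k).2, tendsto_subtype_rng.2 ?_⟩
  have := (tendsto_const_nhds (x := (1 : ℝ))).sub
    ((tendsto_one_div_add_atTop_nhds_zero_nat (𝕜 := ℝ)).comp (tendsto_add_atTop_nat 1))
  rw [sub_zero] at this
  refine this.congr fun k => ?_
  simp only [Function.comp]
  push_cast
  field_simp
  ring

/-- Recursion for the integral without parameters, multiplied by the factor of the evaluation that
survives in one variable. -/
lemma J_zero_step (hq : q ∈ Set.Ioo (0 : ℝ) 1) {u : ℂ} (hu : u ≠ 0) :
    qp q (q * (∏ k, sing n 1 k) / u) * qp q (u * ∏ k, sing n 1 k) * qp q q *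
        J q (n + 1) (fun _ : Fin 1 => 0) (fun _ : Fin 1 => 0) u =
      2 * Real.pi * (n + 1) * J q n (fun _ : Fin 1 => 0) (fun _ : Fin 1 => 0) u := by
  obtain ⟨r, hr0, hr1, hr⟩ := exists_seq
  have hp := tendsto_pinch (n := n) hq hu hr0 hr1 hr
  have hqp := continuous_qp hq
  have hq0 : qp q q ≠ 0 := by simpa using qp_mul_circle_ne_zero hq (x := 1) (by simp)
  have hrR : Tendsto (fun k => (r k : ℝ)) atTop (𝓝 1) :=
    (continuous_subtype_val.tendsto (1 : unitInterval)).comp hr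
  have hcs : Continuous fun s : ℝ => ∏ k, sing n s k := by
    refine continuous_finsetProd _ fun i _ => ?_
    refine Fin.cases ?_ (fun i => ?_) i
    · simpa [sing] using Complex.continuous_ofReal
    · simpa [sing] using continuous_const
  have hF : Continuous fun s : ℝ => qp q (q * (∏ k, sing n s k) / u) * qp q (u * ∏ k, sing n s k) *
        J q (n + 1) (fun _ : Fin 1 => 0) (fun _ : Fin 1 => 0) u := by
    exact ((hqp.comp ((continuous_const.mul hcs).div_const _)).mul
      (hqp.comp (continuous_const.mul hcs))).mul continuous_const
  have hG : Continuous fun s : ℝ => qp q (q * (s : ℂ) ^ 2) := by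
    exact hqp.comp (by fun_prop)
  have h1 := (hF.tendsto 1).comp hrR
  have h2 := hp.mul ((hG.tendsto 1).comp hrR)
  have he : ∀ k, (1 - ((r k : ℝ) : ℂ) ^ 2) * J q (n + 1) (sing n (r k)) (sing n (r k)) u *
      qp q (q * ((r k : ℝ) : ℂ) ^ 2) = qp q (q * (∏ i, sing n (r k) i) / u) *
        qp q (u * ∏ i, sing n (r k) i) *
        J q (n + 1) (fun _ : Fin 1 => 0) (fun _ : Fin 1 => 0) u := by
    intro k
    have hd := disc_sing (n := n) (hr0 k).le (hr1 k)
    have h := J_eq hq hd hd hu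
    rw [J_zero_param (n + 1) 1] at h
    rw [← h]
    have e : ∏ i, ∏ j, qp q (sing n (r k) i * sing n (r k) j) = qp q (((r k : ℝ) : ℂ) ^ 2) := by
      simp [Fin.prod_univ_succ, sing, qp_zero, sq]
    rw [e, qp_step hq (((r k : ℝ) : ℂ) ^ 2)]
    ring
  have h3 := tendsto_nhds_unique (h2.congr fun k => he k) h1
  simp only [Complex.ofReal_one, one_pow, mul_one] at h3
  field_simp at h3
  rw [mul_comm u]
  linear_combination -h3

end constant

/-! ### The constant and the original integrand -/

section evaluation

variable {q : ℝ} {n : ℕ}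

lemma J_zero_zero (u : ℂ) : J q 0 (fun _ : Fin 1 => 0) (fun _ : Fin 1 => 0) u = th q u := by
  unfold J
  rw [integral_unique]
  simp [tor, Measure.real, Phi, dl]

/-- In one variable, `u ↦ -u` amounts to the rotation `z ↦ -z`. -/
lemma J_one_neg (hq : q ∈ Set.Ioo (0 : ℝ) 1) {u : ℂ} (hu : u ≠ 0) :
    J q 1 (fun _ : Fin 1 => 0) (fun _ : Fin 1 => 0) (-u) =
      J q 1 (fun _ : Fin 1 => 0) (fun _ : Fin 1 => 0) u := by
  have h : ∀ v : ℂ, v ≠ 0 → J q 1 (fun _ : Fin 1 => 0) (fun _ : Fin 1 => 0) v =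
      ∫ _z : Fin 0 → Circle, ∫ x : Circle, th q (v / x) ∂arc ∂(tor 0) := by
    intro v hv
    unfold J
    rw [integral_tor_succ 0 (continuous_Phi_torus hq hv disc_zero disc_zero)]
    simp [Phi, wt, dl, qp_zero]
  have hc : ContinuousOn (fun x : ℂ => th q (u / x)) {0}ᶜ := by
    rw [continuousOn_iff_continuous_domRestrict]
    exact continuous_th hq (continuous_const.div continuous_subtype_val fun x => x.2)
      fun x => div_ne_zero hu x.2
  rw [h _ (neg_ne_zero.2 hu), h _ hu, ← integral_arc_neg hc]
  simp only [neg_div, div_neg]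

lemma mul_neg_ne_one {x y : ℝ} (hx : 0 < x) (hy : 0 < y) : (x : ℂ) * (-y) ≠ 1 := by
  intro h
  have hh : x * (-y) = 1 := by exact_mod_cast h
  nlinarith [mul_pos hx hy]

/-- The zeros of the theta function are positive reals. -/
lemma th_neg_ne_zero (hq : q ∈ Set.Ioo (0 : ℝ) 1) {u : ℂ} (hu : u ≠ 0) (h : th q u = 0) :
    th q (-u) ≠ 0 := by
  have hq0 : (q : ℂ) ≠ 0 := by exact_mod_cast hq.1.ne'
  have hpos : ∃ y : ℝ, 0 < y ∧ u = y := by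
    rcases mul_eq_zero.1 h with h | h
    · by_contra hne
      refine qp_ne_zero_of_forall hq (fun i hi => hne ⟨(q ^ i)⁻¹, inv_pos.2 (pow_pos hq.1 i), ?_⟩) h
      push_cast
      exact eq_inv_of_mul_eq_one_right hi
    · by_contra hne
      refine qp_ne_zero_of_forall hq (fun i hi => hne ⟨q ^ i * q, mul_pos (pow_pos hq.1 i) hq.1, ?_⟩) h
      field_simp at hi
      push_cast
      linear_combination -hi
  obtain ⟨y, hy, rfl⟩ := hpos
  refine mul_ne_zero (qp_ne_zero_of_forall hq fun i => ?_) (qp_ne_zero_of_forall hq fun i => ?_)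
  · have := mul_neg_ne_one (pow_pos hq.1 i) hy
    simpa using this
  · have := mul_neg_ne_one (pow_pos hq.1 i) (div_pos hq.1 hy)
    simpa [div_neg] using this

/-- The integral without parameters. -/
lemma J_zero (hq : q ∈ Set.Ioo (0 : ℝ) 1) {u : ℂ} (hu : u ≠ 0) :
    qp q q ^ (n + 1) * J q (n + 1) (fun _ : Fin 1 => 0) (fun _ : Fin 1 => 0) u =
      (n + 1).factorial * (2 * Real.pi) ^ (n + 1) := by
  induction n with
  | zero =>
    have key : ∀ v : ℂ, v ≠ 0 → th q v ≠ 0 →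
        qp q q * J q 1 (fun _ : Fin 1 => 0) (fun _ : Fin 1 => 0) v = 2 * Real.pi := by
      intro v hv hth
      have h := J_zero_step (n := 0) hq hv
      rw [J_zero_zero] at h
      simp only [sing, Fin.prod_univ_succ, Fin.cons_zero, Finset.univ_eq_empty,
        Finset.prod_empty, mul_one, Complex.ofReal_one, Nat.cast_zero, zero_add] at h
      refine mul_left_cancel₀ hth ?_
      unfold th at h ⊢
      linear_combination h
    by_cases hth : th q u = 0
    · have := key (-u) (neg_ne_zero.2 hu) (th_neg_ne_zero hq hu hth)
      rw [J_one_neg hq hu] at this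
      simpa using this
    · simpa using key u hu hth
  | succ n ih =>
    have h := J_zero_step (n := n + 1) hq hu
    have e : ∏ k, sing (n + 1) 1 k = 0 := by
      simp [sing, Fin.prod_univ_succ]
    rw [e, mul_zero, zero_div, mul_zero, qp_zero, one_mul, one_mul] at h
    rw [pow_succ, mul_assoc, h, Nat.factorial_succ (n + 1)]
    push_cast at h ⊢
    linear_combination 2 * (Real.pi : ℂ) * (n + 1 + 1) * ih

/-- The integral over the box of angles is the integral over the torus. -/
lemma integral_box {f : (Fin n → Circle) → ℂ} (hf : Continuous f) :
    (∫ θ : Fin n → ℝ in Set.univ.pi fun _ : Fin n => Set.Icc (0 : ℝ) (2 * Real.pi),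
      f fun i => Circle.exp (θ i)) = ∫ z, f z ∂(tor n) := by
  have h := measurePreserving_pi
    (fun _ : Fin n => (volume : Measure ℝ).restrict (Set.Icc (0 : ℝ) (2 * Real.pi)))
    (fun _ => arc) (f := fun _ => Circle.exp) (fun _ => ⟨by fun_prop, rfl⟩)
  rw [volume_pi, Measure.restrict_pi_pi, tor, ← h.map_eq,
    integral_map h.measurable.aemeasurable hf.aestronglyMeasurable]

/-- The balancing condition turns `(s B Z)_∞` into `(q Z/u)_∞`, where `Z = z₁⋯zₙ`. -/
lemma torusKer_eq {t s : ℂ} {a b : Fin n → ℂ} (ha : ∀ i, a i ≠ 0) (ht0 : t ≠ 0)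
    (hbal : (∏ i, a i) * (∏ i, b i) * t * s = (q : ℂ)) {z : Fin n → ℂ} (hz : ∀ i, z i ≠ 0) :
    torusKer q t s a b z = Phi q (t * ∏ i, a i) a b z := by
  have hA : ∏ i, a i ≠ 0 := Finset.prod_ne_zero_iff.2 fun i _ => ha i
  have hZ : ∏ i, z i ≠ 0 := Finset.prod_ne_zero_iff.2 fun i _ => hz i
  have e1 : s * (∏ i, b i) * ∏ i, z i = q / (t * (∏ i, a i) / ∏ i, z i) := by
    rw [← hbal]; field_simp
  unfold torusKer Phi dl th wt
  rw [prod_pairs, e1, Finset.prod_comm (s := Finset.univ) (t := Finset.univ)]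
  simp only [div_eq_mul_inv, Finset.prod_inv_distrib]

end evaluation

end TorusEval

/-- Contour-integral corollary over the `n`-torus of the Macdonald-type sum. -/
theorem torus_integral_evaluation
    (q : ℝ) (hq0 : 0 < q) (hq1 : q < 1) (n : ℕ) (hn : 1 ≤ n)
    (a b : Fin n → ℂ) (ha : ∀ i, a i ≠ 0) (hb : ∀ i, b i ≠ 0)
    (ha1 : ∀ i, ‖a i‖ < 1) (hb1 : ∀ i, ‖b i‖ < 1)
    (t s : ℂ) (ht0 : t ≠ 0) (hs0 : s ≠ 0)
    (hbal : (∏ i, a i) * (∏ i, b i) * t * s = (q : ℂ)) :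
    (n.factorial : ℂ)⁻¹ * (((2 * Real.pi) ^ n : ℝ) : ℂ)⁻¹ *
        (∫ θ : Fin n → ℝ in Set.univ.pi fun _ : Fin n => Set.Icc (0 : ℝ) (2 * Real.pi),
          torusKer (q : ℂ) t s a b fun i => Complex.exp (θ i * Complex.I)) =
      qp (q : ℂ) ((q : ℂ) * t⁻¹) * qp (q : ℂ) ((q : ℂ) * s⁻¹) /
        (qp (q : ℂ) (q : ℂ) ^ n * ∏ i, ∏ j, qp (q : ℂ) (a i * b j)) := by
  obtain ⟨n, rfl⟩ : ∃ m, n = m + 1 := ⟨n - 1, by omega⟩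
  have hq : q ∈ Set.Ioo (0 : ℝ) 1 := ⟨hq0, hq1⟩
  have hA : ∏ i, a i ≠ 0 := Finset.prod_ne_zero_iff.2 fun i _ => ha i
  have hu : t * ∏ i, a i ≠ 0 := mul_ne_zero ht0 hA
  have hJ : (∫ θ : Fin (n + 1) → ℝ in
      Set.univ.pi fun _ : Fin (n + 1) => Set.Icc (0 : ℝ) (2 * Real.pi),
        torusKer (q : ℂ) t s a b fun i => Complex.exp (θ i * Complex.I)) =
      TorusEval.J q (n + 1) a b (t * ∏ i, a i) := by
    unfold TorusEval.J
    rw [← TorusEval.integral_box (TorusEval.continuous_Phi_torus hq hu ha1 hb1)]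
    congr 1
    ext θ
    rw [TorusEval.torusKer_eq ha ht0 hbal fun i => Complex.exp_ne_zero _]
    simp only [Circle.coe_exp]
  have h1 := TorusEval.J_eq hq ha1 hb1 hu
  have h2 := TorusEval.J_zero (n := n) hq hu
  rw [TorusEval.J_zero_param (n + 1) 1] at h1
  have e1 : (q : ℂ) * (∏ k, a k) / (t * ∏ k, a k) = q * t⁻¹ := by
    field_simp
  have e2 : t * (∏ k, a k) * ∏ k, b k = q * s⁻¹ := by
    rw [← hbal]; field_simp
  rw [e1, e2] at h1
  have hP : ∏ i, ∏ j, qp (q : ℂ) (a i * b j) ≠ 0 :=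
    Finset.prod_ne_zero_iff.2 fun i _ => Finset.prod_ne_zero_iff.2 fun j _ =>
      TorusEval.qp_ne_zero hq (by
        rw [norm_mul]
        exact mul_lt_one_of_nonneg_of_lt_one_left (norm_nonneg _) (ha1 i) (hb1 j).le)
  have hQ : qp (q : ℂ) (q : ℂ) ≠ 0 :=
    TorusEval.qp_ne_zero hq (by simpa [abs_of_pos hq0] using hq1)
  have hf : ((n + 1).factorial : ℂ) ≠ 0 := by exact_mod_cast Nat.factorial_ne_zero _
  have hpi : ((2 : ℂ) * Real.pi) ^ (n + 1) ≠ 0 := by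
    have := Real.pi_ne_zero
    simp [this]
  rw [hJ, eq_div_iff (mul_ne_zero (pow_ne_zero _ hQ) hP), ← mul_inv, mul_assoc,
    inv_mul_eq_iff_eq_mul₀ (mul_ne_zero hf (by exact_mod_cast hpi))]
  push_cast
  linear_combination (qp (q : ℂ) q ^ (n + 1)) * h1 +
    qp (q : ℂ) (q * t⁻¹) * qp (q : ℂ) (q * s⁻¹) * h2
end
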